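/- Suppose 𝔼[z(0)] = ∞. Then ℙ-almost surely, as t → ∞, log P^ω₀(X_t = 0)/log t → −(3α+1)/(4α) if d = 1, and log P^ω₀(X_t = 0)/log t → −1/(2α) − d/2 if d ≥ 2; that is, P^ω₀(X_t = 0) = t^{−(3α+1)/(4α)+o(1)} for d = 1 and P^ω₀(X_t = 0) = t^{−1/(2α)−d/2+o(1)} for d ≥ 2. -/

import Mathlib

open MeasureTheory ProbabilityTheory Filter Set

noncomputable section

/-- `n`-step transition probabilities of the discrete-time simple random walk on `ℤ^m`. -/
def srwKernel (m : ℕ) : ℕ → (Fin m → ℤ) → (Fin m → ℤ) → ℝ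
  | 0, x, y => if x = y then 1 else 0
  | n + 1, x, y =>
      (∑ i : Fin m, (srwKernel m n (Function.update x i (x i + 1)) y
        + srwKernel m n (Function.update x i (x i - 1)) y)) / (2 * m)

/-- Transition kernel of the continuous-time simple random walk on `ℤ^m` which jumps to
each of its `2m` nearest neighbours at rate `1` (total jump rate `2m`). -/
def heatKernel (m : ℕ) (t : ℝ) (x y : Fin m → ℤ) : ℝ :=
  ∑' n : ℕ, Real.exp (-(2 * m) * t) * ((2 * m) * t) ^ n / n.factorial * srwKernel m n x y

/-- `(P, S)` is (a realization of) the continuous-time simple random walk on `ℤ^m`: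
under `P x` the process `S` starts at `x`, has right-continuous (piecewise constant)
paths, and its finite-dimensional distributions are given by the heat kernel. -/
structure IsCTSRW (m : ℕ) {Ω : Type*} [MeasurableSpace Ω]
    (P : (Fin m → ℤ) → Measure Ω) (S : ℝ → Ω → (Fin m → ℤ)) : Prop where
  prob : ∀ x, IsProbabilityMeasure (P x)
  meas : Measurable fun p : ℝ × Ω => S p.1 p.2
  start : ∀ x, ∀ᵐ ω ∂ P x, S 0 ω = x
  rightCont : ∀ x, ∀ᵐ ω ∂ P x, ∀ t : ℝ, 0 ≤ t →
    ∃ ε > (0 : ℝ), ∀ u, t ≤ u → u < t + ε → S u ω = S t ω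
  fdd : ∀ x (n : ℕ) (t : Fin (n + 1) → ℝ), 0 ≤ t 0 →
    (∀ i : Fin n, t i.castSucc ≤ t i.succ) →
    ∀ y : Fin (n + 1) → (Fin m → ℤ),
      (P x {ω | ∀ i, S (t i) ω = y i}).toReal
        = heatKernel m (t 0) x (y 0)
          * ∏ i : Fin n, heatKernel m (t i.succ - t i.castSucc) (y i.castSucc) (y i.succ)

/-- `z` is an i.i.d. nonnegative random scenery on `ℤ^d` whose common upper tail decays
like `r^{-α+o(1)}`. -/
structure IsScenery (d : ℕ) (α : ℝ) {Ω : Type*} [MeasurableSpace Ω]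
    (μ : Measure Ω) (z : (Fin d → ℤ) → Ω → ℝ) : Prop where
  prob : IsProbabilityMeasure μ
  meas : ∀ x, Measurable (z x)
  nonneg : ∀ x ω, 0 ≤ z x ω
  indep : iIndepFun z μ
  ident : ∀ x, IdentDistrib (z x) (z 0) μ μ
  tail : Tendsto (fun r : ℝ => Real.log (μ {ω | r < z 0 ω}).toReal / Real.log r)
    atTop (nhds (-α))

/-- The random walk in random scenery `A(t) = ∫₀ᵗ z(S_u) du`. -/
def rwrs {Ωz Ωw : Type*} (d : ℕ) (z : (Fin d → ℤ) → Ωz → ℝ)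
    (S : ℝ → Ωw → (Fin d → ℤ)) (t : ℝ) (ζ : Ωz) (ω : Ωw) : ℝ :=
  ∫ u in Set.Ioc (0 : ℝ) t, z (S u ω) ζ

end
open MeasureTheory ProbabilityTheory Filter Set

noncomputable section

/-- The clock process `A²(t) = ∫₀ᵗ z(S²_u) du`, where `S²` is the second (ℤ^d-valued)
component of the walk on `ℤ^{1+d}`. -/
def clock (d : ℕ) {Ωz Ωw : Type*} (z : (Fin d → ℤ) → Ωz → ℝ)
    (S : ℝ → Ωw → (Fin (d + 1) → ℤ)) (t : ℝ) (ζ : Ωz) (ω : Ωw) : ℝ :=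
  ∫ u in Set.Ioc (0 : ℝ) t, z (fun i => S u ω i.succ) ζ

/-- The variable-speed random walk `X_t = (S¹_{A²(t)}, S²_t)` in the layered conductance
field `ω(x, x±e₁) = z(x₂)`, `ω(x, x±e_i) = 1` for `i ≥ 2` (coordinate `0` of the walk on
`ℤ^{1+d}` is the ℤ-coordinate, coordinates `1,…,d` form the ℤ^d-coordinate). -/
def layeredWalk (d : ℕ) {Ωz Ωw : Type*} (z : (Fin d → ℤ) → Ωz → ℝ)
    (S : ℝ → Ωw → (Fin (d + 1) → ℤ)) (t : ℝ) (ζ : Ωz) (ω : Ωw) : ℤ × (Fin d → ℤ) :=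
  (S (clock d z S t ζ ω) ω 0, fun i => S t ω i.succ)

/-- Euclidean norm of a point of `ℤ^{1+d} = ℤ × ℤ^d`. -/
def euclNormProd (d : ℕ) (x : ℤ × (Fin d → ℤ)) : ℝ :=
  Real.sqrt ((x.1 : ℝ) ^ 2 + ∑ i, (x.2 i : ℝ) ^ 2)

end

/-!
The heat kernel on `ℤ^m` is a product of one-dimensional kernels, and `q_t(0) ≍ t ^ (-1/2)` in
dimension one. Since the two components of the walk are independent,
`P₀^ω(X_t = 0) = E[q_{A²(t)}(0); S²_t = 0]`, so everything reduces to showing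
`A²(t) = t ^ (ρ + o(1))`, where `ρ = (1 - κ) / α + κ` and `κ = 1/2` if `d = 1`, `κ = 0` if `d ≥ 2`:
this gives `P₀^ω(X_t = 0) = t ^ (-ρ/2 - d/2 + o(1))`. An infinite mean forces `α ≤ 1`.

For the lower bound on the return probability, the clock must not be too fast on the bridge
`{S²_t = 0}`. For `β < α ≤ 1` the scenery has a finite `β`-th moment, so the annealed `β`-th moment
of the clock is controlled by the `β`-th moments of the local times. Subadditivity of `x ↦ x ^ β`
over time blocks and Jensen's inequality within a block (the whole time interval if `d = 1`, unit
blocks if `d ≥ 2`) bound it by `t ^ (1 - κ (1 - β) + o(1))`.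

For the upper bound, the clock must be too slow only with probability smaller than any power of
`t`. All moments of the visit counts of the skeleton walk are of order `n ^ (κ + o(1))`, so outside
such an event no site is visited more than `n ^ (κ + o(1))` times, at least `n ^ (1 - κ - o(1))`
sites are visited, and the annealed Laplace transform of the clock, a product over these sites, is
superpolynomially small by the tail of `z`.

In both cases Borel–Cantelli along `t = 2 ^ k` passes from the annealed to the quenched estimate.
-/

open scoped ENNReal NNReal

/-! ### The heat kernel and its Fourier representation -/

/-- The normalised Lebesgue measure on the circle, represented by the interval `(-π, π]`. -/
noncomputable def circleMeasure : Measure ℝ :=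
  (ENNReal.ofReal (2 * Real.pi))⁻¹ • volume.restrict (Ioc (-Real.pi) Real.pi)

instance : IsProbabilityMeasure circleMeasure := by
  constructor
  rw [circleMeasure, Measure.smul_apply, Measure.restrict_apply_univ, Real.volume_Ioc,
    smul_eq_mul, sub_neg_eq_add, ← two_mul]
  exact ENNReal.inv_mul_cancel (by simp [Real.pi_pos]) ENNReal.ofReal_ne_top

theorem integral_circleMeasure {E : Type*} [NormedAddCommGroup E] [NormedSpace ℝ E] (f : ℝ → E) :
    ∫ θ, f θ ∂circleMeasure = (2 * Real.pi)⁻¹ • ∫ θ in (-Real.pi)..Real.pi, f θ := by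
  rw [circleMeasure, integral_smul_measure,
    intervalIntegral.integral_of_le (by linarith [Real.pi_pos]), ENNReal.toReal_inv,
    ENNReal.toReal_ofReal Real.two_pi_pos.le]

theorem integrable_circleMeasure_of_continuous {E : Type*} [NormedAddCommGroup E] {f : ℝ → E}
    (hf : Continuous f) : Integrable f circleMeasure :=
  (hf.integrableOn_Icc.mono_set Ioc_subset_Icc_self).smul_measure (by simp [Real.pi_pos])

theorem integral_exp_int_mul_circleMeasure (k : ℤ) :
    ∫ θ : ℝ, Complex.exp ((k * θ : ℝ) * Complex.I) ∂circleMeasure = if k = 0 then 1 else 0 := by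
  split_ifs with hk
  · simp [hk]
  have hIk : Complex.I * (k : ℂ) ≠ 0 := by simp [hk]
  have periodic : Complex.exp (Complex.I * k * (Real.pi : ℝ))
      = Complex.exp (Complex.I * k * ((-Real.pi : ℝ) : ℂ)) :=
    Complex.exp_eq_exp_iff_exists_int.2 ⟨k, by push_cast; ring⟩
  have rearrange (θ : ℝ) : ((k * θ : ℝ) : ℂ) * Complex.I = Complex.I * k * θ := by push_cast; ring
  simp only [integral_circleMeasure, rearrange, integral_exp_mul_complex hIk, periodic, sub_self,
    zero_div, smul_zero]

/-- The transition kernel `q_t(k)` of the continuous-time walk on `ℤ` jumping to each neighbour at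
rate `1`, in Fourier form. -/
noncomputable def lineKernel (t : ℝ) (k : ℤ) : ℝ :=
  ∫ θ, Real.cos (k * θ) * Real.exp (-(2 * t * (1 - Real.cos θ))) ∂circleMeasure

theorem ofReal_lineKernel (t : ℝ) (k : ℤ) :
    (lineKernel t k : ℂ) = ∫ θ, Complex.exp ((k * θ : ℝ) * Complex.I)
      * (Real.exp (-(2 * t * (1 - Real.cos θ))) : ℝ) ∂circleMeasure := by
  set g : ℝ → ℝ := fun θ => Real.exp (-(2 * t * (1 - Real.cos θ))) with hg
  have hint : Integrable (fun θ => Complex.exp ((k * θ : ℝ) * Complex.I) * (g θ : ℂ))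
      circleMeasure := integrable_circleMeasure_of_continuous (by fun_prop)
  have odd : ∫ θ in (-Real.pi)..Real.pi, Real.sin (k * θ) * g θ = 0 := by
    have := intervalIntegral.integral_comp_neg (a := -Real.pi) (b := Real.pi)
      (fun θ => Real.sin (k * θ) * g θ)
    simp only [hg, mul_neg, Real.sin_neg, Real.cos_neg, neg_neg, neg_mul,
      intervalIntegral.integral_neg] at this
    linarith
  refine Complex.ext ?_ ?_
  · rw [Complex.ofReal_re, ← RCLike.re_eq_complex_re, ← integral_re hint, lineKernel]
    simp_rw [RCLike.re_eq_complex_re, Complex.re_mul_ofReal, Complex.exp_ofReal_mul_I_re, hg]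
  · rw [Complex.ofReal_im, ← RCLike.im_eq_complex_im, ← integral_im hint]
    simp_rw [RCLike.im_eq_complex_im, Complex.im_mul_ofReal, Complex.exp_ofReal_mul_I_im,
      integral_circleMeasure, odd, smul_zero]

/-- The characters `θ ↦ exp(i k·θ)` of the `m`-dimensional torus. -/
noncomputable def torusChar {m : ℕ} (k : Fin m → ℤ) (θ : Fin m → ℝ) : ℂ :=
  Complex.exp ((∑ i, k i * θ i : ℝ) * Complex.I)

/-- The characteristic function `θ ↦ (cos θ₁ + ⋯ + cos θ_m) / m` of one step of the simple random
walk on `ℤ^m`. -/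
noncomputable def walkSymbol {m : ℕ} (θ : Fin m → ℝ) : ℝ := (∑ i, Real.cos (θ i)) / m

theorem norm_torusChar {m : ℕ} (k : Fin m → ℤ) (θ : Fin m → ℝ) : ‖torusChar k θ‖ = 1 :=
  Complex.norm_exp_ofReal_mul_I _

theorem torusChar_eq_prod {m : ℕ} (k : Fin m → ℤ) (θ : Fin m → ℝ) :
    torusChar k θ = ∏ i, Complex.exp ((k i * θ i : ℝ) * Complex.I) := by
  rw [torusChar, Complex.ofReal_sum, Finset.sum_mul, Complex.exp_sum]

theorem torusChar_update_sub {m : ℕ} (x y : Fin m → ℤ) (i : Fin m) (s : ℤ) (θ : Fin m → ℝ) :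
    torusChar (Function.update x i (x i + s) - y) θ
      = torusChar (x - y) θ * Complex.exp ((s * θ i : ℝ) * Complex.I) := by
  have shift : Function.update x i (x i + s) - y = x - y + Pi.single i s := by
    ext j
    obtain rfl | hj := eq_or_ne j i
    · simp; ring
    · simp [hj]
  have sum_shift : ∑ j, ((x - y + Pi.single i s : Fin m → ℤ) j : ℝ) * θ j
      = ∑ j, ((x - y) j : ℝ) * θ j + s * θ i := by
    simp [Pi.single_apply, add_mul, Finset.sum_add_distrib]
  rw [shift, torusChar, sum_shift, Complex.ofReal_add, add_mul, Complex.exp_add, torusChar]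

theorem torusChar_add_neighbours {m : ℕ} (x y : Fin m → ℤ) (i : Fin m) (θ : Fin m → ℝ) :
    torusChar (Function.update x i (x i + 1) - y) θ
      + torusChar (Function.update x i (x i - 1) - y) θ
      = torusChar (x - y) θ * (2 * Real.cos (θ i) : ℝ) := by
  rw [sub_eq_add_neg (x i) 1, torusChar_update_sub, torusChar_update_sub, ← mul_add]
  push_cast
  rw [Complex.cos]
  ring_nf

theorem abs_walkSymbol_le_one {m : ℕ} (θ : Fin m → ℝ) : |walkSymbol θ| ≤ 1 := by
  rw [walkSymbol, abs_div, Nat.abs_cast]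
  refine div_le_one_of_le₀ ?_ (Nat.cast_nonneg m)
  calc |∑ i, Real.cos (θ i)| ≤ ∑ i, |Real.cos (θ i)| := Finset.abs_sum_le_sum_abs _ _
    _ ≤ ∑ _i : Fin m, 1 := Finset.sum_le_sum fun i _ => Real.abs_cos_le_one _
    _ = m := by simp

theorem continuous_torusChar_mul_walkSymbol_pow {m : ℕ} (k : Fin m → ℤ) (n : ℕ) :
    Continuous fun θ : Fin m → ℝ => torusChar k θ * (walkSymbol θ : ℂ) ^ n := by
  unfold torusChar walkSymbol
  fun_prop

theorem norm_torusChar_mul_walkSymbol_pow_le {m : ℕ} (k : Fin m → ℤ) (n : ℕ) (θ : Fin m → ℝ) :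
    ‖torusChar k θ * (walkSymbol θ : ℂ) ^ n‖ ≤ 1 := by
  rw [norm_mul, norm_torusChar, one_mul, norm_pow, Complex.norm_real]
  exact pow_le_one₀ (norm_nonneg _) (abs_walkSymbol_le_one θ)

theorem srwKernel_eq_integral (m n : ℕ) (x y : Fin m → ℤ) :
    (srwKernel m n x y : ℂ)
      = ∫ θ, torusChar (x - y) θ * (walkSymbol θ : ℂ) ^ n ∂Measure.pi fun _ => circleMeasure := by
  induction n generalizing x with
  | zero =>
    simp_rw [pow_zero, mul_one, torusChar_eq_prod]
    rw [integral_fintype_prod_eq_prod fun i θ =>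
      Complex.exp (((x - y) i * θ : ℝ) * Complex.I)]
    simp_rw [integral_exp_int_mul_circleMeasure]
    rw [srwKernel, Finset.prod_ite_zero]
    by_cases h : ∀ i, x i = y i <;> simp [sub_eq_zero, funext_iff, h]
  | succ n ih =>
    have integrable (k : Fin m → ℤ) : Integrable
        (fun θ => torusChar k θ * (walkSymbol θ : ℂ) ^ n) (Measure.pi fun _ => circleMeasure) :=
      .of_bound (continuous_torusChar_mul_walkSymbol_pow k n).aestronglyMeasurable 1
        (ae_of_all _ (norm_torusChar_mul_walkSymbol_pow_le k n))
    rw [srwKernel]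
    push_cast
    simp_rw [ih, ← integral_add (integrable _) (integrable _), ← add_mul,
      torusChar_add_neighbours]
    rw [← integral_finsetSum, ← integral_div]
    · congr 1 with θ
      obtain rfl | hm := eq_or_ne m 0
      · simp [walkSymbol]
      · have : (m : ℂ) ≠ 0 := by exact_mod_cast hm
        rw [← Finset.sum_mul, ← Finset.mul_sum, ← Complex.ofReal_sum, ← Finset.mul_sum, pow_succ,
          walkSymbol]
        push_cast
        field_simp
    · intro i _
      simp_rw [← torusChar_add_neighbours, add_mul]
      exact (integrable _).add (integrable _)

theorem hasSum_poisson_pow (c s : ℝ) :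
    HasSum (fun n : ℕ => Real.exp (-c) * c ^ n / n.factorial * s ^ n) (Real.exp (c * (s - 1))) := by
  have h : HasSum (fun n : ℕ => Real.exp (-c) * ((c * s) ^ n / n.factorial))
      (Real.exp (-c) * Real.exp (c * s)) := by
    rw [Real.exp_eq_exp_ℝ]
    exact (NormedSpace.expSeries_div_hasSum_exp (c * s)).mul_left _
  rw [← Real.exp_add] at h
  convert h using 2
  · rw [mul_pow]; ring
  · ring

theorem tsum_poisson_mul_torusChar (m : ℕ) (t : ℝ) (k : Fin m → ℤ) (θ : Fin m → ℝ) :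
    ∑' n : ℕ, ((Real.exp (-(2 * m * t)) * (2 * m * t) ^ n / n.factorial : ℝ) : ℂ)
        * (torusChar k θ * (walkSymbol θ : ℂ) ^ n)
      = ∏ i, Complex.exp ((k i * θ i : ℝ) * Complex.I)
        * (Real.exp (-(2 * t * (1 - Real.cos (θ i)))) : ℝ) := by
  have exponent : 2 * m * t * (walkSymbol θ - 1) = ∑ i, -(2 * t * (1 - Real.cos (θ i))) := by
    obtain rfl | hm := eq_or_ne m 0
    · simp
    · have : (m : ℝ) ≠ 0 := by exact_mod_cast hm
      simp only [walkSymbol, Finset.sum_neg_distrib, ← Finset.mul_sum, Finset.sum_sub_distrib,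
        Finset.sum_const, Finset.card_univ, Fintype.card_fin, nsmul_eq_mul]
      field_simp
      ring
  have hsum := (Complex.hasSum_ofReal.2 (hasSum_poisson_pow (2 * m * t) (walkSymbol θ))).mul_left
    (torusChar k θ)
  rw [Finset.prod_mul_distrib, ← torusChar_eq_prod, ← Complex.ofReal_prod, ← Real.exp_sum,
    ← exponent, ← hsum.tsum_eq]
  exact tsum_congr fun n => by push_cast; ring

theorem heatKernel_eq_prod (m : ℕ) (t : ℝ) (x y : Fin m → ℤ) :
    heatKernel m t x y = ∏ i, lineKernel t (x i - y i) := by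
  set c : ℝ := 2 * m * t with hc
  set p : ℕ → ℝ := fun n => Real.exp (-c) * c ^ n / n.factorial with hp
  set ν : Measure (Fin m → ℝ) := Measure.pi fun _ => circleMeasure
  have heat_eq : heatKernel m t x y = ∑' n, p n * srwKernel m n x y := by
    simp only [heatKernel, hp, hc, neg_mul]
  have p_summable : Summable fun n => ‖p n‖ := by
    simpa only [one_pow, mul_one] using (hasSum_poisson_pow c 1).summable.norm
  set F : ℕ → (Fin m → ℝ) → ℂ :=
    fun n θ => p n * (torusChar (x - y) θ * (walkSymbol θ : ℂ) ^ n) with hF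
  have F_le (n : ℕ) (θ : Fin m → ℝ) : ‖F n θ‖ ≤ ‖p n‖ := by
    rw [hF, norm_mul, Complex.norm_real]
    exact mul_le_of_le_one_right (norm_nonneg _) (norm_torusChar_mul_walkSymbol_pow_le _ n θ)
  have F_int (n : ℕ) : Integrable (F n) ν :=
    .of_bound ((continuous_torusChar_mul_walkSymbol_pow _ n).const_mul _).aestronglyMeasurable _
      (ae_of_all _ (F_le n))
  have interchange := hasSum_integral_of_summable_integral_norm F_int
    (p_summable.of_nonneg_of_le (fun n => integral_nonneg fun _ => norm_nonneg _) fun n => by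
      simpa using integral_mono (F_int n).norm (integrable_const _) (F_le n))
  have F_integral (n : ℕ) : ∫ θ, F n θ ∂ν = ((p n * srwKernel m n x y : ℝ) : ℂ) := by
    rw [integral_const_mul, ← srwKernel_eq_integral, Complex.ofReal_mul]
  simp_rw [F_integral, hF, hp, hc, tsum_poisson_mul_torusChar] at interchange
  rw [integral_fintype_prod_eq_prod fun i θ => Complex.exp (((x - y) i * θ : ℝ) * Complex.I)
    * (Real.exp (-(2 * t * (1 - Real.cos θ))) : ℝ)] at interchange
  simp_rw [← ofReal_lineKernel, ← Complex.ofReal_prod] at interchange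
  rw [heat_eq]
  exact (Complex.hasSum_ofReal.1 interchange).tsum_eq

theorem lineKernel_eq_heatKernel (t : ℝ) (k : ℤ) :
    lineKernel t k = heatKernel 1 t (fun _ => k) 0 := by
  simp [heatKernel_eq_prod]

theorem srwKernel_nonneg (m n : ℕ) (x y : Fin m → ℤ) : 0 ≤ srwKernel m n x y := by
  induction n generalizing x with
  | zero => rw [srwKernel]; split_ifs <;> norm_num
  | succ n ih =>
    rw [srwKernel]
    exact div_nonneg (Finset.sum_nonneg fun i _ => add_nonneg (ih _) (ih _)) (by positivity)

theorem heatKernel_nonneg (m : ℕ) {t : ℝ} (ht : 0 ≤ t) (x y : Fin m → ℤ) :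
    0 ≤ heatKernel m t x y :=
  tsum_nonneg fun n => mul_nonneg (by positivity) (srwKernel_nonneg m n x y)

theorem lineKernel_nonneg {t : ℝ} (ht : 0 ≤ t) (k : ℤ) : 0 ≤ lineKernel t k :=
  lineKernel_eq_heatKernel t k ▸ heatKernel_nonneg 1 ht _ _

theorem lineKernel_neg (t : ℝ) (k : ℤ) : lineKernel t (-k) = lineKernel t k := by
  simp [lineKernel]

theorem lineKernel_zero_right (t : ℝ) :
    lineKernel t 0 = ∫ θ, Real.exp (-(2 * t * (1 - Real.cos θ))) ∂circleMeasure := by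
  simp [lineKernel]

theorem lineKernel_zero_zero : lineKernel 0 0 = 1 := by
  simp [lineKernel_zero_right]

theorem lineKernel_le_lineKernel_zero (t : ℝ) (k : ℤ) : lineKernel t k ≤ lineKernel t 0 := by
  rw [lineKernel_zero_right, lineKernel]
  exact integral_mono (integrable_circleMeasure_of_continuous (by fun_prop))
    (integrable_circleMeasure_of_continuous (by fun_prop))
    fun θ => mul_le_of_le_one_left (Real.exp_pos _).le (Real.cos_le_one _)

theorem antitone_lineKernel_zero : Antitone fun t => lineKernel t 0 := by
  intro s t hst
  simp_rw [lineKernel_zero_right]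
  refine integral_mono (integrable_circleMeasure_of_continuous (by fun_prop))
    (integrable_circleMeasure_of_continuous (by fun_prop)) fun θ => Real.exp_le_exp.2 ?_
  nlinarith [Real.cos_le_one θ]

theorem lineKernel_le_one {t : ℝ} (ht : 0 ≤ t) (k : ℤ) : lineKernel t k ≤ 1 :=
  calc lineKernel t k ≤ lineKernel t 0 := lineKernel_le_lineKernel_zero t k
    _ ≤ lineKernel 0 0 := antitone_lineKernel_zero ht
    _ = 1 := lineKernel_zero_zero

theorem measurable_lineKernel (k : ℤ) : Measurable fun t => lineKernel t k := by
  have : StronglyMeasurable fun p : ℝ × ℝ =>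
      Real.cos (k * p.2) * Real.exp (-(2 * p.1 * (1 - Real.cos p.2))) :=
    Continuous.stronglyMeasurable (by fun_prop)
  exact this.integral_prod_right.measurable

theorem heatKernel_comm (m : ℕ) (t : ℝ) (x y : Fin m → ℤ) :
    heatKernel m t x y = heatKernel m t y x := by
  simp_rw [heatKernel_eq_prod, ← lineKernel_neg t (x _ - y _), neg_sub]

theorem heatKernel_self (m : ℕ) (t : ℝ) (x : Fin m → ℤ) :
    heatKernel m t x x = lineKernel t 0 ^ m := by
  simp [heatKernel_eq_prod]

theorem heatKernel_le (m : ℕ) {t : ℝ} (ht : 0 ≤ t) (x y : Fin m → ℤ) :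
    heatKernel m t x y ≤ lineKernel t 0 ^ m := by
  rw [heatKernel_eq_prod]
  simpa using Finset.prod_le_prod (s := Finset.univ) (fun i _ => lineKernel_nonneg ht (x i - y i))
    fun i _ => lineKernel_le_lineKernel_zero t (x i - y i)

theorem measurable_heatKernel (m : ℕ) (x y : Fin m → ℤ) :
    Measurable fun t => heatKernel m t x y := by
  simp_rw [heatKernel_eq_prod]
  exact Finset.measurable_fun_prod _ fun i _ => measurable_lineKernel _

theorem one_sub_cos_ge {θ : ℝ} (hθ : |θ| ≤ Real.pi) :
    2 / Real.pi ^ 2 * θ ^ 2 ≤ 1 - Real.cos θ := by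
  linarith [Real.cos_le_one_sub_mul_cos_sq hθ]

theorem lineKernel_zero_le {t : ℝ} (ht : 0 < t) : lineKernel t 0 ≤ (√t)⁻¹ := by
  set b : ℝ := 4 * t / Real.pi ^ 2 with hb
  have hb0 : 0 < b := by positivity
  have gaussian_integrable := integrable_exp_neg_mul_sq hb0
  have le_gaussian : ∫ θ in Ioc (-Real.pi) Real.pi, Real.exp (-(2 * t * (1 - Real.cos θ)))
      ≤ ∫ θ in Ioc (-Real.pi) Real.pi, Real.exp (-b * θ ^ 2) := by
    refine setIntegral_mono_on ((Continuous.integrableOn_Icc (by fun_prop)).mono_set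
      Ioc_subset_Icc_self) gaussian_integrable.integrableOn measurableSet_Ioc fun θ hθ => ?_
    have h := mul_le_mul_of_nonneg_left (one_sub_cos_ge (abs_le.2 ⟨hθ.1.le, hθ.2⟩))
      (by positivity : 0 ≤ 2 * t)
    have h' : 2 * t * (2 / Real.pi ^ 2 * θ ^ 2) = b * θ ^ 2 := by rw [hb]; ring
    exact Real.exp_le_exp.2 (by linarith)
  have gaussian_le : ∫ θ in Ioc (-Real.pi) Real.pi, Real.exp (-b * θ ^ 2) ≤ √(Real.pi / b) := by
    rw [← integral_gaussian]
    exact setIntegral_le_integral gaussian_integrable (ae_of_all _ fun _ => (Real.exp_pos _).le)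
  have sqrt_le : √(Real.pi / b) ≤ 2 * Real.pi * (√t)⁻¹ := by
    rw [Real.sqrt_le_left (by positivity), mul_pow, inv_pow, Real.sq_sqrt ht.le,
      show Real.pi / b = Real.pi / 4 * Real.pi ^ 2 * t⁻¹ by rw [hb]; field_simp]
    gcongr
    nlinarith [Real.pi_le_four, sq_nonneg Real.pi]
  rw [lineKernel_zero_right, integral_circleMeasure,
    intervalIntegral.integral_of_le (by linarith [Real.pi_pos]), smul_eq_mul,
    inv_mul_le_iff₀ (by positivity)]
  linarith

theorem le_lineKernel_zero {t : ℝ} (ht : 1 ≤ t) : (10 * √t)⁻¹ ≤ lineKernel t 0 := by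
  set r : ℝ := (√t)⁻¹ with hr
  have r_pos : 0 < r := by positivity
  have r_le_pi : r ≤ Real.pi :=
    (inv_le_one_of_one_le₀ (Real.one_le_sqrt.2 ht)).trans (by linarith [Real.pi_gt_three])
  have hsub : Ioc (-r) r ⊆ Ioc (-Real.pi) Real.pi := Ioc_subset_Ioc (by linarith) r_le_pi
  have integrable : IntegrableOn (fun θ => Real.exp (-(2 * t * (1 - Real.cos θ))))
      (Ioc (-Real.pi) Real.pi) :=
    (Continuous.integrableOn_Icc (by fun_prop)).mono_set Ioc_subset_Icc_self
  have exponent_le (θ : ℝ) (hθ : θ ∈ Ioc (-r) r) : 2 * t * (1 - Real.cos θ) ≤ 1 := by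
    have htr : t * r ^ 2 = 1 := by
      rw [hr, inv_pow, Real.sq_sqrt (by linarith), mul_inv_cancel₀ (by linarith)]
    have : t * θ ^ 2 ≤ 1 := htr ▸ mul_le_mul_of_nonneg_left (sq_le_sq' hθ.1.le hθ.2) (by linarith)
    nlinarith [Real.one_sub_sq_div_two_le_cos (x := θ)]
  have lower : 2 * r * Real.exp (-1)
      ≤ ∫ θ in Ioc (-Real.pi) Real.pi, Real.exp (-(2 * t * (1 - Real.cos θ))) :=
    calc 2 * r * Real.exp (-1) = ∫ θ in Ioc (-r) r, Real.exp (-1) := by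
          rw [setIntegral_const, Real.volume_real_Ioc_of_le (by linarith), smul_eq_mul]; ring
      _ ≤ ∫ θ in Ioc (-r) r, Real.exp (-(2 * t * (1 - Real.cos θ))) :=
          setIntegral_mono_on (by simp) (integrable.mono_set hsub) measurableSet_Ioc
            fun θ hθ => Real.exp_le_exp.2 (neg_le_neg (exponent_le θ hθ))
      _ ≤ _ := setIntegral_mono_set integrable (ae_of_all _ fun _ => (Real.exp_pos _).le)
          hsub.eventuallyLE
  have pi_mul_exp_le : Real.pi * Real.exp 1 ≤ 10 := by
    nlinarith [Real.exp_one_lt_d9, Real.pi_lt_d2, Real.exp_pos 1]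
  rw [lineKernel_zero_right, integral_circleMeasure,
    intervalIntegral.integral_of_le (by linarith [Real.pi_pos]), smul_eq_mul]
  calc (10 * √t)⁻¹ = 10⁻¹ * r := by rw [mul_inv]
    _ ≤ (Real.pi * Real.exp 1)⁻¹ * r := by gcongr
    _ = (2 * Real.pi)⁻¹ * (2 * r * Real.exp (-1)) := by rw [Real.exp_neg]; field_simp
    _ ≤ _ := by gcongr

theorem srwKernel_one_le (n : ℕ) (θ : ℝ) (x y : Fin 1 → ℤ) :
    srwKernel 1 n x y ≤ Real.exp (θ * (x 0 - y 0)) * Real.cosh θ ^ n := by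
  induction n generalizing x with
  | zero =>
    rw [srwKernel]
    split_ifs with h
    · simp [h]
    · positivity
  | succ n ih =>
    have up := ih (Function.update x 0 (x 0 + 1))
    have down := ih (Function.update x 0 (x 0 - 1))
    simp only [Function.update_self, Int.cast_add, Int.cast_sub, Int.cast_one] at up down
    rw [show θ * ((x 0 : ℝ) + 1 - y 0) = θ * (x 0 - y 0) + θ by ring, Real.exp_add] at up
    rw [show θ * ((x 0 : ℝ) - 1 - y 0) = θ * (x 0 - y 0) + -θ by ring, Real.exp_add] at down
    simp only [srwKernel, Finset.univ_unique, Fin.default_eq_zero, Finset.sum_singleton,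
      Nat.cast_one, mul_one]
    rw [div_le_iff₀ two_pos]
    refine (add_le_add up down).trans_eq ?_
    rw [pow_succ, ← Real.cosh_add_sinh θ, ← Real.cosh_sub_sinh θ]
    ring

theorem lineKernel_le_exp {t : ℝ} (ht : 0 ≤ t) (θ : ℝ) (k : ℤ) :
    lineKernel t k ≤ Real.exp (θ * k) * Real.exp (2 * t * (Real.cosh θ - 1)) := by
  have hsum := (hasSum_poisson_pow (2 * t) (Real.cosh θ)).mul_left (Real.exp (θ * k))
  have term_nonneg (n : ℕ) : 0 ≤ Real.exp (-(2 * t)) * (2 * t) ^ n / n.factorial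
      * srwKernel 1 n (fun _ => k) 0 := mul_nonneg (by positivity) (srwKernel_nonneg _ _ _ _)
  have term_le (n : ℕ) : Real.exp (-(2 * t)) * (2 * t) ^ n / n.factorial
        * srwKernel 1 n (fun _ => k) 0
      ≤ Real.exp (θ * k) * (Real.exp (-(2 * t)) * (2 * t) ^ n / n.factorial
        * Real.cosh θ ^ n) := by
    rw [mul_left_comm]
    refine mul_le_mul_of_nonneg_left ?_ (by positivity)
    simpa using srwKernel_one_le n θ (fun _ => k) 0
  rw [lineKernel_eq_heatKernel, heatKernel, ← hsum.tsum_eq]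
  simp only [Nat.cast_one, mul_one, neg_mul]
  exact (hsum.summable.of_nonneg_of_le term_nonneg term_le).tsum_le_tsum term_le hsum.summable

theorem cosh_sub_one_le_sq {θ : ℝ} (hθ : |θ| ≤ 1) : Real.cosh θ - 1 ≤ θ ^ 2 := by
  have sq_le : |θ ^ 2 / 2| ≤ 1 := by
    rw [abs_of_nonneg (by positivity)]
    nlinarith [sq_le_one_iff_abs_le_one θ |>.2 hθ]
  have := (abs_le.1 (Real.abs_exp_sub_one_le sq_le)).2
  rw [abs_of_nonneg (by positivity : 0 ≤ θ ^ 2 / 2)] at this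
  linarith [Real.cosh_le_exp_half_sq θ]

theorem lineKernel_le_exp_neg_abs_div_sqrt {t T : ℝ} (ht : 0 ≤ t) (htT : t ≤ T) (hT : 1 ≤ T)
    (k : ℤ) : lineKernel t k ≤ Real.exp 2 * Real.exp (-(|(k : ℝ)| / √T)) := by
  have inv_sqrt_le : |(√T)⁻¹| ≤ 1 := by
    rw [abs_of_nonneg (by positivity)]
    exact inv_le_one_of_one_le₀ (Real.one_le_sqrt.2 hT)
  have exponent_le : 2 * t * (Real.cosh (√T)⁻¹ - 1) ≤ 2 :=
    calc 2 * t * (Real.cosh (√T)⁻¹ - 1) ≤ 2 * t * T⁻¹ := by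
          have := cosh_sub_one_le_sq inv_sqrt_le
          rw [inv_pow, Real.sq_sqrt (by linarith)] at this
          gcongr
      _ ≤ 2 := by
          rw [mul_assoc, ← div_eq_mul_inv]
          linarith [div_le_one_of_le₀ htT (by linarith : (0 : ℝ) ≤ T)]
  have one_sided (j : ℤ) : lineKernel t j ≤ Real.exp 2 * Real.exp (-((j : ℝ) / √T)) :=
    calc lineKernel t j = lineKernel t (-j) := (lineKernel_neg t j).symm
      _ ≤ Real.exp ((√T)⁻¹ * (-j : ℤ)) * Real.exp (2 * t * (Real.cosh (√T)⁻¹ - 1)) :=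
          lineKernel_le_exp ht _ _
      _ = Real.exp (2 * t * (Real.cosh (√T)⁻¹ - 1)) * Real.exp (-((j : ℝ) / √T)) := by
          rw [mul_comm]; congr 2; push_cast; ring
      _ ≤ _ := by gcongr
  rcases abs_choice (k : ℝ) with hk | hk <;> rw [hk]
  · exact one_sided k
  · simpa [lineKernel_neg] using one_sided (-k)

theorem srwKernel_le_one (m n : ℕ) (x y : Fin m → ℤ) : srwKernel m n x y ≤ 1 := by
  induction n generalizing x with
  | zero => rw [srwKernel]; split_ifs <;> norm_num
  | succ n ih =>
    rw [srwKernel]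
    refine div_le_one_of_le₀ ?_ (by positivity)
    calc _ ≤ ∑ _i : Fin m, ((1 : ℝ) + 1) := Finset.sum_le_sum fun _ _ => add_le_add (ih _) (ih _)
      _ = 2 * m := by simp; ring

theorem tsum_srwKernel {m : ℕ} (hm : m ≠ 0) (n : ℕ) (x : Fin m → ℤ) :
    ∑' y, ENNReal.ofReal (srwKernel m n x y) = 1 := by
  induction n generalizing x with
  | zero => simp [srwKernel, apply_ite ENNReal.ofReal, tsum_ite_eq']
  | succ n ih =>
    have hm2 : (0 : ℝ) < 2 * m := by positivity
    have nonneg := srwKernel_nonneg m n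
    simp_rw [srwKernel, ENNReal.ofReal_div_of_pos hm2, div_eq_mul_inv,
      ENNReal.ofReal_sum_of_nonneg fun _ _ => add_nonneg (nonneg _ _) (nonneg _ _),
      ENNReal.ofReal_add (nonneg _ _) (nonneg _ _)]
    rw [ENNReal.tsum_mul_right, Summable.tsum_finsetSum fun _ _ => ENNReal.summable]
    simp_rw [ENNReal.tsum_add, ih, one_add_one_eq_two]
    have card : ∑ _i : Fin m, (2 : ℝ≥0∞) = ENNReal.ofReal (2 * m) := by
      simp [ENNReal.ofReal_mul, mul_comm]
    rw [card, ENNReal.mul_inv_cancel (ENNReal.ofReal_pos.2 hm2).ne' ENNReal.ofReal_ne_top]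

theorem tsum_heatKernel (m : ℕ) {t : ℝ} (ht : 0 ≤ t) (x : Fin m → ℤ) :
    ∑' y, ENNReal.ofReal (heatKernel m t x y) = 1 := by
  obtain rfl | hm := eq_or_ne m 0
  · simp [heatKernel_eq_prod]
  set p : ℕ → ℝ := fun n => Real.exp (-(2 * m) * t) * (2 * m * t) ^ n / n.factorial with hp
  have p_nonneg (n : ℕ) : 0 ≤ p n := by positivity
  have p_hasSum : HasSum p 1 := by
    simpa [hp] using hasSum_poisson_pow (2 * m * t) 1
  have term_nonneg (y : Fin m → ℤ) (n : ℕ) : 0 ≤ p n * srwKernel m n x y :=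
    mul_nonneg (p_nonneg n) (srwKernel_nonneg m n x y)
  have expand (y : Fin m → ℤ) : ENNReal.ofReal (heatKernel m t x y)
      = ∑' n, ENNReal.ofReal (p n) * ENNReal.ofReal (srwKernel m n x y) := by
    simp_rw [← ENNReal.ofReal_mul (p_nonneg _)]
    exact ENNReal.ofReal_tsum_of_nonneg (term_nonneg y) (p_hasSum.summable.of_nonneg_of_le
      (term_nonneg y) fun n => mul_le_of_le_one_right (p_nonneg n) (srwKernel_le_one m n x y))
  simp_rw [expand]
  rw [ENNReal.tsum_comm]
  simp_rw [ENNReal.tsum_mul_left, tsum_srwKernel hm, mul_one]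
  rw [← ENNReal.ofReal_tsum_of_nonneg p_nonneg p_hasSum.summable, p_hasSum.tsum_eq,
    ENNReal.ofReal_one]

/-! ### Walks on the lattice and their coordinates -/

/-- The probability that the continuous-time walk on `ℤ^m` started at the origin visits
`y 0, …, y n` at the times `t 0 ≤ ⋯ ≤ t n`. -/
noncomputable def pathWeight {m n : ℕ} (t : Fin (n + 1) → ℝ) (y : Fin (n + 1) → Fin m → ℤ) :
    ℝ≥0∞ :=
  ENNReal.ofReal (heatKernel m (t 0) 0 (y 0)) * ∏ i : Fin n,
    ENNReal.ofReal (heatKernel m (t i.succ - t i.castSucc) (y i.castSucc) (y i.succ))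

theorem pathWeight_snoc {m n : ℕ} (t : Fin (n + 1) → ℝ) (y : Fin (n + 1) → Fin m → ℤ) (s : ℝ)
    (w : Fin m → ℤ) :
    pathWeight (Fin.snoc t s : Fin (n + 2) → ℝ) (Fin.snoc y w : Fin (n + 2) → Fin m → ℤ)
      = pathWeight t y
        * ENNReal.ofReal (heatKernel m (s - t (Fin.last n)) (y (Fin.last n)) w) := by
  have snoc_zero {β : Type} (a : Fin (n + 1) → β) (b : β) :
      (Fin.snoc a b : Fin (n + 2) → β) 0 = a 0 :=
    Fin.snoc_castSucc (α := fun _ => β) b a 0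
  simp [pathWeight, snoc_zero, Fin.prod_univ_castSucc, Fin.succ_castSucc,
    Fin.snoc_castSucc (α := fun _ => ℝ), Fin.snoc_castSucc (α := fun _ => Fin m → ℤ),
    Fin.snoc_last (α := fun _ => ℝ), Fin.snoc_last (α := fun _ => Fin m → ℤ), mul_assoc,
    -Fin.castSucc_succ]

theorem tsum_pathWeight {m n : ℕ} {t : Fin (n + 1) → ℝ} (h0 : 0 ≤ t 0) (ht : Monotone t) :
    ∑' y : Fin (n + 1) → Fin m → ℤ, pathWeight t y = 1 := by
  induction n with
  | zero =>
    rw [← (Equiv.funUnique (Fin 1) (Fin m → ℤ)).symm.tsum_eq]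
    simpa [pathWeight] using tsum_heatKernel m h0 0
  | succ n ih =>
    have split : t = Fin.snoc (Fin.init t) (t (Fin.last (n + 1))) := (Fin.snoc_init_self t).symm
    have step : 0 ≤ t (Fin.last (n + 1)) - Fin.init t (Fin.last n) :=
      sub_nonneg.2 (ht (Fin.castSucc_lt_last _).le)
    rw [← (Fin.snocEquiv fun _ : Fin (n + 2) => Fin m → ℤ).tsum_eq, ENNReal.tsum_prod',
      ENNReal.tsum_comm]
    calc _ = ∑' (y : Fin (n + 1) → Fin m → ℤ) (w : Fin m → ℤ), pathWeight
            (Fin.snoc (Fin.init t) (t (Fin.last (n + 1))) : Fin (n + 2) → ℝ)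
            (Fin.snoc y w : Fin (n + 2) → Fin m → ℤ) := by rw [← split]; rfl
      _ = 1 := by
        simp_rw [pathWeight_snoc, ENNReal.tsum_mul_left, tsum_heatKernel m step, mul_one]
        exact ih h0 (ht.comp Fin.strictMono_castSucc.monotone)

theorem ofReal_heatKernel_succ {m : ℕ} {t : ℝ} (ht : 0 ≤ t) (x y : Fin (m + 1) → ℤ) :
    ENNReal.ofReal (heatKernel (m + 1) t x y)
      = ENNReal.ofReal (heatKernel 1 t (fun _ => x 0) fun _ => y 0)
        * ENNReal.ofReal (heatKernel m t (fun j => x j.succ) fun j => y j.succ) := by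
  rw [← ENNReal.ofReal_mul (heatKernel_nonneg 1 ht _ _)]
  simp [heatKernel_eq_prod, Fin.prod_univ_succ]

theorem pathWeight_succ {m n : ℕ} {t : Fin (n + 1) → ℝ} (h0 : 0 ≤ t 0) (ht : Monotone t)
    (y : Fin (n + 1) → Fin (m + 1) → ℤ) :
    pathWeight t y
      = pathWeight t (fun i (_ : Fin 1) => y i 0) * pathWeight t fun i j => y i (Fin.succ j) := by
  simp_rw [pathWeight, ofReal_heatKernel_succ (m := m) h0,
    fun i : Fin n => ofReal_heatKernel_succ (m := m) (sub_nonneg.2 (ht i.castSucc_lt_succ.le)),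
    Finset.prod_mul_distrib]
  exact mul_mul_mul_comm _ _ _ _

/-- `Y` is the continuous-time simple random walk on `ℤ^d` started at the origin, described by its
law on finitely many times only; no regularity of the paths is required. -/
structure IsLatticeWalk (d : ℕ) {Ω : Type*} [MeasurableSpace Ω] (ν : Measure Ω)
    (Y : ℝ → Ω → Fin d → ℤ) : Prop where
  isProbabilityMeasure : IsProbabilityMeasure ν
  measurable : Measurable fun p : ℝ × Ω => Y p.1 p.2
  fdd : ∀ {n : ℕ} {t : Fin (n + 1) → ℝ}, 0 ≤ t 0 → Monotone t → ∀ y : Fin (n + 1) → Fin d → ℤ,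
    ν {ω | ∀ i, Y (t i) ω = y i} = pathWeight t y

/-- The first coordinate `S¹` of a walk on `ℤ^{1+d}`, as a walk on `ℤ¹`. -/
def headWalk {Ω : Type*} {d : ℕ} (S : ℝ → Ω → Fin (d + 1) → ℤ) (t : ℝ) (ω : Ω) : Fin 1 → ℤ :=
  fun _ => S t ω 0

/-- The remaining coordinates `S²` of a walk on `ℤ^{1+d}`. -/
def tailWalk {Ω : Type*} {d : ℕ} (S : ℝ → Ω → Fin (d + 1) → ℤ) (t : ℝ) (ω : Ω) : Fin d → ℤ :=
  fun j => S t ω j.succ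

/-- The path of a process over the nonnegative times. -/
def nonnegPath {Ω κ : Type*} (Y : ℝ → Ω → κ) (ω : Ω) : ℝ≥0 → κ := fun s => Y s ω

theorem measurable_nonnegPath {Ω κ : Type*} [MeasurableSpace Ω] [MeasurableSpace κ]
    {Y : ℝ → Ω → κ} (hY : Measurable fun p : ℝ × Ω => Y p.1 p.2) : Measurable (nonnegPath Y) :=
  measurable_pi_lambda _ fun _ => hY.comp measurable_prodMk_left

section Independence

variable {Ω κ κ' : Type*} [MeasurableSpace Ω] [MeasurableSpace κ] [MeasurableSpace κ']

theorem measure_eq_tsum_fibers [Countable κ] [MeasurableSingletonClass κ] (ν : Measure Ω)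
    {V : Ω → κ} (hV : Measurable V) {E : Set Ω} (hE : MeasurableSet E) :
    ν E = ∑' b, ν (V ⁻¹' {b} ∩ E) := by
  rw [← measure_iUnion (fun a b hab => ?_) fun b => (hV (measurableSet_singleton b)).inter hE]
  · congr 1
    ext ω
    simp
  · exact Disjoint.mono inf_le_left inf_le_left
      ((disjoint_singleton.2 hab).preimage V)

theorem measure_fiber_eq_of_measure_fiber_inter_eq_mul [Countable κ] [MeasurableSingletonClass κ]
    [MeasurableSingletonClass κ'] {ν : Measure Ω} {U : Ω → κ} {V : Ω → κ'} (hU : Measurable U)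
    (hV : Measurable V) {F : κ → ℝ≥0∞} {G : κ' → ℝ≥0∞} (hF : ∑' a, F a = 1)
    (h : ∀ a b, ν (U ⁻¹' {a} ∩ V ⁻¹' {b}) = F a * G b) (b : κ') : ν (V ⁻¹' {b}) = G b := by
  rw [measure_eq_tsum_fibers ν hU (hV (measurableSet_singleton b))]
  simp_rw [h, ENNReal.tsum_mul_right, hF, one_mul]

theorem indepFun_of_measure_fiber_inter_eq_mul [Countable κ] [MeasurableSingletonClass κ]
    [Countable κ'] [MeasurableSingletonClass κ'] {ν : Measure Ω} [IsFiniteMeasure ν]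
    {U : Ω → κ} {V : Ω → κ'} (hU : Measurable U)
    (hV : Measurable V) {F : κ → ℝ≥0∞} {G : κ' → ℝ≥0∞} (hF : ∑' a, F a = 1) (hG : ∑' b, G b = 1)
    (h : ∀ a b, ν (U ⁻¹' {a} ∩ V ⁻¹' {b}) = F a * G b) : IndepFun U V ν := by
  rw [indepFun_iff_map_prod_eq_prod_map_map hU.aemeasurable hV.aemeasurable]
  refine Measure.ext_of_singleton fun ⟨a, b⟩ => ?_
  have marginal_U := measure_fiber_eq_of_measure_fiber_inter_eq_mul hV hU hG
    (fun b a => by rw [inter_comm, h, mul_comm]) a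
  have marginal_V := measure_fiber_eq_of_measure_fiber_inter_eq_mul hU hV hF h b
  rw [Measure.map_apply (hU.prodMk hV) (measurableSet_singleton _), ← singleton_prod_singleton,
    Measure.prod_prod, Measure.map_apply hU (measurableSet_singleton a),
    Measure.map_apply hV (measurableSet_singleton b), mk_preimage_prod, h, marginal_U, marginal_V]

theorem indepFun_nonnegPath {ν : Measure Ω} [IsProbabilityMeasure ν] {U : ℝ → Ω → κ}
    {V : ℝ → Ω → κ'} (hU : Measurable fun p : ℝ × Ω => U p.1 p.2)
    (hV : Measurable fun p : ℝ × Ω => V p.1 p.2)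
    (h : ∀ (n : ℕ) (t : Fin (n + 1) → ℝ), 0 ≤ t 0 → Monotone t →
      IndepFun (fun ω i => U (t i) ω) (fun ω i => V (t i) ω) ν) :
    IndepFun (nonnegPath U) (nonnegPath V) ν := by
  refine IndepFun.process_indepFun_process (X := fun (s : ℝ≥0) ω => U s ω)
    (Y := fun (s : ℝ≥0) ω => V s ω) (fun _ => hU.comp measurable_prodMk_left)
    (fun _ => hV.comp measurable_prodMk_left) fun I J => ?_
  -- Both families are functions of the two processes along an enumeration of `I ∪ J ∪ {0}`.
  set K : Finset ℝ≥0 := insert 0 (I ∪ J) with hK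
  have card_K : K.card = (K.card - 1) + 1 :=
    (Nat.succ_pred_eq_of_pos (Finset.card_pos.2 ⟨0, Finset.mem_insert_self _ _⟩)).symm
  set e := K.orderEmbOfFin card_K
  have surj (s : ℝ≥0) (hs : s ∈ K) : ∃ i, e i = s := by
    have : s ∈ Set.range e := by rwa [Finset.range_orderEmbOfFin]
    exact this
  choose! φ hφ using surj
  have hI (i : I) : e (φ i) = i := hφ _ (by simp [hK])
  have hJ (i : J) : e (φ i) = i := hφ _ (by simp [hK])
  have indep := (h (K.card - 1) (fun i => e i) (NNReal.coe_nonneg _)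
    fun i j hij => NNReal.coe_le_coe.2 (e.monotone hij)).comp
    (φ := fun a (i : I) => a (φ i)) (ψ := fun a (i : J) => a (φ i)) (by fun_prop) (by fun_prop)
  convert indep using 1
  · ext ω i; simp [hI]
  · ext ω i; simp [hJ]

end Independence

section Coordinates

variable {d : ℕ} {Ω : Type*} [MeasurableSpace Ω] {P : (Fin (d + 1) → ℤ) → Measure Ω}
  {S : ℝ → Ω → Fin (d + 1) → ℤ}

theorem IsCTSRW.isLatticeWalk {m : ℕ} {P : (Fin m → ℤ) → Measure Ω} {S : ℝ → Ω → Fin m → ℤ}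
    (hS : IsCTSRW m P S) : IsLatticeWalk m (P 0) S where
  isProbabilityMeasure := hS.prob 0
  measurable := hS.meas
  fdd {n t} h0 ht y := by
    have := hS.prob 0
    have step (i : Fin n) : 0 ≤ t i.succ - t i.castSucc := sub_nonneg.2 (ht i.castSucc_lt_succ.le)
    rw [← ENNReal.ofReal_toReal (measure_ne_top (P 0) _),
      hS.fdd 0 n t h0 (fun i => ht i.castSucc_lt_succ.le) y,
      ENNReal.ofReal_mul (heatKernel_nonneg m h0 _ _),
      ENNReal.ofReal_prod_of_nonneg fun i _ => heatKernel_nonneg m (step i) _ _, pathWeight]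

theorem measurable_headWalk (hS : Measurable fun p : ℝ × Ω => S p.1 p.2) :
    Measurable fun p : ℝ × Ω => headWalk S p.1 p.2 :=
  measurable_pi_lambda _ fun _ => (measurable_pi_apply 0).comp hS

theorem measurable_tailWalk (hS : Measurable fun p : ℝ × Ω => S p.1 p.2) :
    Measurable fun p : ℝ × Ω => tailWalk S p.1 p.2 :=
  measurable_pi_lambda _ fun j => (measurable_pi_apply j.succ).comp hS

theorem IsLatticeWalk.measure_headWalk_inter_tailWalk {ν : Measure Ω}
    (hS : IsLatticeWalk (d + 1) ν S) {n : ℕ} {t : Fin (n + 1) → ℝ} (h0 : 0 ≤ t 0)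
    (ht : Monotone t) (a : Fin (n + 1) → Fin 1 → ℤ) (b : Fin (n + 1) → Fin d → ℤ) :
    ν ((fun ω i => headWalk S (t i) ω) ⁻¹' {a} ∩ (fun ω i => tailWalk S (t i) ω) ⁻¹' {b})
      = pathWeight t a * pathWeight t b := by
  have a_eq : a = fun i _ => a i 0 := funext₂ fun i k => by rw [Subsingleton.elim k 0]
  have coordinates (i : Fin (n + 1)) (ω : Ω) : S (t i) ω = Fin.cons (a i 0) (b i)
      ↔ headWalk S (t i) ω = a i ∧ tailWalk S (t i) ω = b i := by
    simp [funext_iff, Fin.forall_fin_succ, headWalk, tailWalk]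
  have joint := hS.fdd h0 ht fun i => Fin.cons (a i 0) (b i)
  rw [pathWeight_succ h0 ht] at joint
  simp only [Fin.cons_zero, Fin.cons_succ, ← a_eq, coordinates, forall_and, ← funext_iff] at joint
  exact joint

theorem IsLatticeWalk.headWalk {ν : Measure Ω} (hS : IsLatticeWalk (d + 1) ν S) :
    IsLatticeWalk 1 ν (headWalk S) where
  isProbabilityMeasure := hS.isProbabilityMeasure
  measurable := measurable_headWalk hS.measurable
  fdd {n t} h0 ht y := by
    have head (i : Fin (n + 1)) : Measurable (_root_.headWalk S (t i)) :=
      (measurable_headWalk hS.measurable).comp measurable_prodMk_left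
    have tail (i : Fin (n + 1)) : Measurable (_root_.tailWalk S (t i)) :=
      (measurable_tailWalk hS.measurable).comp measurable_prodMk_left
    rw [← measure_fiber_eq_of_measure_fiber_inter_eq_mul (measurable_pi_lambda _ tail)
      (measurable_pi_lambda _ head) (G := pathWeight t) (tsum_pathWeight h0 ht) (fun b a => by
        rw [inter_comm, mul_comm]; exact hS.measure_headWalk_inter_tailWalk h0 ht a b) y]
    simp [preimage, funext_iff]

theorem IsLatticeWalk.tailWalk {ν : Measure Ω} (hS : IsLatticeWalk (d + 1) ν S) :
    IsLatticeWalk d ν (tailWalk S) where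
  isProbabilityMeasure := hS.isProbabilityMeasure
  measurable := measurable_tailWalk hS.measurable
  fdd {n t} h0 ht y := by
    have head (i : Fin (n + 1)) : Measurable (_root_.headWalk S (t i)) :=
      (measurable_headWalk hS.measurable).comp measurable_prodMk_left
    have tail (i : Fin (n + 1)) : Measurable (_root_.tailWalk S (t i)) :=
      (measurable_tailWalk hS.measurable).comp measurable_prodMk_left
    rw [← measure_fiber_eq_of_measure_fiber_inter_eq_mul (measurable_pi_lambda _ head)
      (measurable_pi_lambda _ tail) (G := pathWeight t) (tsum_pathWeight h0 ht)
      (hS.measure_headWalk_inter_tailWalk h0 ht) y]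
    simp [preimage, funext_iff]

theorem IsLatticeWalk.indepFun_headWalk_tailWalk {ν : Measure Ω}
    (hS : IsLatticeWalk (d + 1) ν S) :
    IndepFun (nonnegPath (_root_.headWalk S)) (nonnegPath (_root_.tailWalk S)) ν := by
  have := hS.isProbabilityMeasure
  refine indepFun_nonnegPath hS.headWalk.measurable hS.tailWalk.measurable fun n t h0 ht => ?_
  exact indepFun_of_measure_fiber_inter_eq_mul
    (measurable_pi_lambda _ fun i => hS.headWalk.measurable.comp measurable_prodMk_left)
    (measurable_pi_lambda _ fun i => hS.tailWalk.measurable.comp measurable_prodMk_left)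
    (tsum_pathWeight h0 ht) (tsum_pathWeight h0 ht) (hS.measure_headWalk_inter_tailWalk h0 ht)

end Coordinates

/-! ### The quenched return probability -/

section RandomTime

variable {κ : Type*}

/-- A path on `[0, ∞)` is right locally constant if it does not move for a positive amount of time
after any given time. -/
def IsRightLocallyConstant (w : ℝ → κ) : Prop :=
  ∀ t, 0 ≤ t → ∃ ε > (0 : ℝ), ∀ u, t ≤ u → u < t + ε → w u = w t

theorem IsRightLocallyConstant.comp {κ' : Type*} {w : ℝ → κ} (hw : IsRightLocallyConstant w)
    (f : κ → κ') : IsRightLocallyConstant fun t => f (w t) := fun t ht =>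
  (hw t ht).imp fun _ h => ⟨h.1, fun u h₁ h₂ => congrArg f (h.2 u h₁ h₂)⟩

/-- The pairs `(w, t)` such that `w` is eventually equal to `y` along the approximations
`⌈t (n + 1)⌉ / (n + 1)` of `t` from the right. For a right locally constant path this means
`w t = y`; in contrast to evaluation, it is a jointly measurable condition on `(w, t)`. -/
def rightLimitSet (y : κ) : Set ((ℝ≥0 → κ) × ℝ) :=
  {p | ∀ᶠ n : ℕ in atTop, p.1 (⌈p.2 * (n + 1)⌉₊ / (n + 1)) = y}

theorem measurableSet_rightLimitSet [MeasurableSpace κ] [MeasurableSingletonClass κ] (y : κ) :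
    MeasurableSet (rightLimitSet y) := by
  have eval (n : ℕ) :
      Measurable fun p : (ℝ≥0 → κ) × ℝ => p.1 (⌈p.2 * (n + 1)⌉₊ / (n + 1)) := by
    have grid : Measurable fun p : (ℝ≥0 → κ) × ℕ => p.1 (p.2 / (n + 1)) :=
      measurable_from_prod_countable_left fun k => measurable_pi_apply (k / (n + 1) : ℝ≥0)
    exact grid.comp
      (measurable_fst.prodMk (Nat.measurable_ceil.comp (measurable_snd.mul_const _)))
  simp only [rightLimitSet, eventually_atTop, ofPred_exists, ofPred_forall]
  exact .iUnion fun N => .iInter fun n => .iInter fun _ => eval n (measurableSet_singleton y)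

theorem eventually_ceil_div_mem_Ico {t ε : ℝ} (ht : 0 ≤ t) (hε : 0 < ε) :
    ∀ᶠ n : ℕ in atTop, (⌈t * (n + 1)⌉₊ / (n + 1) : ℝ) ∈ Ico t (t + ε) := by
  filter_upwards [(tendsto_one_div_add_atTop_nhds_zero_nat (𝕜 := ℝ)).eventually (gt_mem_nhds hε)]
    with n hn
  have pos : (0 : ℝ) < n + 1 := by positivity
  constructor
  · rw [le_div_iff₀ pos]
    exact Nat.le_ceil _
  · rw [div_lt_iff₀ pos]
    rw [div_lt_iff₀ pos] at hn
    have := Nat.ceil_lt_add_one (mul_nonneg ht pos.le)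
    linarith

theorem IsRightLocallyConstant.mem_rightLimitSet_iff {w : ℝ → κ} (hw : IsRightLocallyConstant w)
    {t : ℝ} (ht : 0 ≤ t) (y : κ) : (fun s : ℝ≥0 => w s, t) ∈ rightLimitSet y ↔ w t = y := by
  obtain ⟨ε, hε, const⟩ := hw t ht
  have : ∀ᶠ n : ℕ in atTop,
      (w ((⌈t * (n + 1)⌉₊ / (n + 1) : ℝ≥0) : ℝ) = y ↔ w t = y) := by
    filter_upwards [eventually_ceil_div_mem_Ico ht hε] with n hn
    push_cast
    rw [const _ hn.1 hn.2]
  exact (eventually_congr this).trans eventually_const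

/-- The integral `∫₀ᵗ c(w_u) du` as a functional of the path that is measurable for the product
σ-algebra; it has this meaning for right locally constant paths. -/
noncomputable def pathIntegral (c : κ → ℝ≥0∞) (t : ℝ) (w : ℝ≥0 → κ) : ℝ≥0∞ :=
  ∫⁻ u in Ioc 0 t, ∑' y, c y * (rightLimitSet y).indicator 1 (w, u)

theorem measurable_pathIntegral [Countable κ] [MeasurableSpace κ] [MeasurableSingletonClass κ]
    (c : κ → ℝ≥0∞) (t : ℝ) : Measurable (pathIntegral c t) :=
  Measurable.lintegral_prod_right' (ν := volume.restrict (Ioc 0 t))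
    (f := fun p => ∑' y, c y * (rightLimitSet y).indicator 1 p) <| .tsum fun y =>
      (measurable_one.indicator (measurableSet_rightLimitSet y)).const_mul (c y)

theorem IsRightLocallyConstant.pathIntegral_eq {w : ℝ → κ} (hw : IsRightLocallyConstant w)
    (c : κ → ℝ≥0∞) (t : ℝ) :
    pathIntegral c t (fun s => w s) = ∫⁻ u in Ioc 0 t, c (w u) := by
  refine setLIntegral_congr_fun measurableSet_Ioc fun u hu => ?_
  refine (tsum_eq_single (w u) ?_).trans ?_
  · intro y hy
    rw [indicator_of_notMem fun h => hy ((hw.mem_rightLimitSet_iff hu.1.le y).1 h).symm, mul_zero]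
  · rw [indicator_of_mem ((hw.mem_rightLimitSet_iff hu.1.le _).2 rfl), Pi.one_apply, mul_one]

theorem measure_eval_indep_time {Ω β : Type*} [MeasurableSpace Ω] [MeasurableSpace κ]
    [MeasurableSingletonClass κ] [MeasurableSpace β] {ν : Measure Ω} [IsProbabilityMeasure ν]
    {W : ℝ → Ω → κ} (hW : Measurable fun p : ℝ × Ω => W p.1 p.2)
    (hconst : ∀ᵐ ω ∂ν, IsRightLocallyConstant fun t => W t ω) {V : Ω → β} (hV : Measurable V)
    (indep : IndepFun (nonnegPath W) V ν) {G : β → ℝ} (hG : Measurable G) (hG0 : ∀ b, 0 ≤ G b)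
    {E : Set β} (hE : MeasurableSet E) (y : κ) :
    ν {ω | W (G (V ω)) ω = y ∧ V ω ∈ E} = ∫⁻ ω in V ⁻¹' E, ν {ω' | W (G (V ω)) ω' = y} ∂ν := by
  have hpath := measurable_nonnegPath hW
  have := Measure.isProbabilityMeasure_map (μ := ν) hpath.aemeasurable
  have := Measure.isProbabilityMeasure_map (μ := ν) hV.aemeasurable
  have eval (s : ℝ) (hs : 0 ≤ s) :
      ∀ᵐ ω ∂ν, (nonnegPath W ω, s) ∈ rightLimitSet y ↔ W s ω = y := by
    filter_upwards [hconst] with ω hω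
    exact hω.mem_rightLimitSet_iff hs y
  set R : Set ((ℝ≥0 → κ) × β) := {p | (p.1, G p.2) ∈ rightLimitSet y ∧ p.2 ∈ E}
  have hR : MeasurableSet R :=
    ((measurable_fst.prodMk (hG.comp measurable_snd)) (measurableSet_rightLimitSet y)).inter
      (measurable_snd hE)
  calc ν {ω | W (G (V ω)) ω = y ∧ V ω ∈ E}
      = ν ((fun ω => (nonnegPath W ω, V ω)) ⁻¹' R) := by
        refine measure_congr ?_
        filter_upwards [hconst] with ω hω
        exact propext (and_congr_left' (hω.mem_rightLimitSet_iff (hG0 _) y).symm)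
    _ = ∫⁻ b, ν (nonnegPath W ⁻¹' ((fun w => (w, b)) ⁻¹' R)) ∂ν.map V := by
        rw [← Measure.map_apply (hpath.prodMk hV) hR,
          (indepFun_iff_map_prod_eq_prod_map_map hpath.aemeasurable hV.aemeasurable).1 indep,
          Measure.prod_apply_symm hR]
        exact lintegral_congr fun b => Measure.map_apply hpath (measurable_prodMk_right hR)
    _ = ∫⁻ ω, (V ⁻¹' E).indicator (fun ω => ν {ω' | W (G (V ω)) ω' = y}) ω ∂ν := by
        rw [lintegral_map _ hV]
        · refine lintegral_congr fun ω => ?_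
          by_cases hω : V ω ∈ E
          · rw [indicator_of_mem (mem_preimage.2 hω)]
            refine measure_congr ?_
            filter_upwards [eval _ (hG0 (V ω))] with ω' h
            exact propext ((and_iff_left hω).trans h)
          · rw [indicator_of_notMem (mt mem_preimage.1 hω)]
            exact measure_mono_null (fun ω' h => hω h.2) measure_empty
        · simpa only [Measure.map_apply hpath (measurable_prodMk_right hR)] using
            measurable_measure_prodMk_right (μ := ν.map (nonnegPath W)) hR
    _ = _ := lintegral_indicator (hV hE) _

end RandomTime

/-- The additive functional `∫₀ᵗ c(Y_u) du` of a process `Y`. -/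
noncomputable def additiveFunctional {Ω κ : Type*} (c : κ → ℝ≥0∞) (Y : ℝ → Ω → κ) (t : ℝ) (ω : Ω) :
    ℝ≥0∞ :=
  ∫⁻ u in Ioc 0 t, c (Y u ω)

theorem measurable_additiveFunctional {Ω κ : Type*} [MeasurableSpace Ω] [MeasurableSpace κ]
    {c : κ → ℝ≥0∞} (hc : Measurable c) {Y : ℝ → Ω → κ} (hY : Measurable fun p : ℝ × Ω => Y p.1 p.2)
    (t : ℝ) : Measurable (additiveFunctional c Y t) :=
  Measurable.lintegral_prod_right' (f := fun p : Ω × ℝ => c (Y p.2 p.1))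
    (hc.comp (hY.comp measurable_swap))

section ReturnProbability

variable {d : ℕ} {Ωz Ωw : Type*} [MeasurableSpace Ωw] {P : (Fin (d + 1) → ℤ) → Measure Ωw}
  {S : ℝ → Ωw → Fin (d + 1) → ℤ} {z : (Fin d → ℤ) → Ωz → ℝ}

theorem clock_eq_toReal_additiveFunctional (hS : Measurable fun p : ℝ × Ωw => S p.1 p.2)
    (hz : ∀ y ζ, 0 ≤ z y ζ) (t : ℝ) (ζ : Ωz) (ω : Ωw) :
    clock d z S t ζ ω
      = (additiveFunctional (fun y => ENNReal.ofReal (z y ζ)) (tailWalk S) t ω).toReal := by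
  have meas : Measurable fun u => z (tailWalk S u ω) ζ :=
    (measurable_of_countable fun y => z y ζ).comp
      ((measurable_tailWalk hS).comp measurable_prodMk_right)
  exact integral_eq_lintegral_of_nonneg_ae (.of_forall fun u => hz _ ζ) meas.aestronglyMeasurable

theorem IsCTSRW.measure_layeredWalk_eq_zero (hS : IsCTSRW (d + 1) P S) (hz : ∀ y ζ, 0 ≤ z y ζ)
    (ζ : Ωz) {t : ℝ} (ht : 0 ≤ t) :
    P 0 {ω | layeredWalk d z S t ζ ω = 0}
      = ∫⁻ ω in tailWalk S t ⁻¹' {0}, ENNReal.ofReal (lineKernel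
          (additiveFunctional (fun y => ENNReal.ofReal (z y ζ)) (tailWalk S) t ω).toReal 0)
          ∂P 0 := by
  have := hS.prob 0
  have head := hS.isLatticeWalk.headWalk
  have tail := hS.isLatticeWalk.tailWalk
  set c : (Fin d → ℤ) → ℝ≥0∞ := fun y => ENNReal.ofReal (z y ζ)
  set A := additiveFunctional c (tailWalk S) t
  set G : (ℝ≥0 → Fin d → ℤ) → ℝ := fun w => (pathIntegral c t w).toReal
  have hG (ω : Ωw) (hω : IsRightLocallyConstant fun u => S u ω) :
      G (nonnegPath (tailWalk S) ω) = (A ω).toReal :=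
    congrArg ENNReal.toReal ((hω.comp fun y j => y (Fin.succ j)).pathIntegral_eq c t)
  have headConst : ∀ᵐ ω ∂P 0, IsRightLocallyConstant fun u => headWalk S u ω := by
    filter_upwards [hS.rightCont 0] with ω hω
    exact IsRightLocallyConstant.comp hω fun y _ => y 0
  have law (s : ℝ) (hs : 0 ≤ s) : P 0 {ω | headWalk S s ω = 0} = ENNReal.ofReal (lineKernel s 0) :=
    by simpa [pathWeight, heatKernel_self] using
      head.fdd (n := 0) (t := fun _ => s) hs (fun _ _ _ => le_rfl) 0
  calc P 0 {ω | layeredWalk d z S t ζ ω = 0}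
      = P 0 {ω | headWalk S (G (nonnegPath (tailWalk S) ω)) ω = 0
          ∧ nonnegPath (tailWalk S) ω ∈ {w | w ⟨t, ht⟩ = 0}} := by
        refine measure_congr ?_
        filter_upwards [hS.rightCont 0] with ω hω
        refine propext (Prod.ext_iff.trans (and_congr_left' ?_))
        rw [hG ω hω, ← clock_eq_toReal_additiveFunctional hS.meas hz]
        exact ⟨fun h => funext fun _ => h, fun h => congrFun h 0⟩
    _ = ∫⁻ ω in tailWalk S t ⁻¹' {0},
          P 0 {ω' | headWalk S (G (nonnegPath (tailWalk S) ω)) ω' = 0} ∂P 0 :=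
        measure_eval_indep_time head.measurable headConst (measurable_nonnegPath tail.measurable)
          hS.isLatticeWalk.indepFun_headWalk_tailWalk (measurable_pathIntegral c t).ennreal_toReal
          (fun _ => ENNReal.toReal_nonneg)
          ((measurable_pi_apply (⟨t, ht⟩ : ℝ≥0)) (measurableSet_singleton 0)) 0
    _ = _ := by
        refine lintegral_congr_ae (ae_restrict_of_ae ?_)
        filter_upwards [hS.rightCont 0] with ω hω
        rw [law _ ENNReal.toReal_nonneg]
        exact congrArg (fun a => ENNReal.ofReal (lineKernel a 0)) (hG ω hω)

end ReturnProbability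

/-! ### Moments of the scenery -/

section Scenery

variable {d : ℕ} {α : ℝ} {Ωz : Type*} [MeasurableSpace Ωz] {μ : Measure Ωz}
  {z : (Fin d → ℤ) → Ωz → ℝ}

theorem IsScenery.eventually_tail_pos (hz : IsScenery d α μ z) (hα : 0 < α) :
    ∀ᶠ r : ℝ in atTop, 0 < (μ {ζ | r < z 0 ζ}).toReal := by
  filter_upwards [hz.tail.eventually_ne (neg_ne_zero.2 hα.ne')] with r hr
  refine ENNReal.toReal_nonneg.lt_of_ne fun h => hr ?_
  rw [← h, Real.log_zero, zero_div]

theorem IsScenery.eventually_rpow_neg_le_tail (hz : IsScenery d α μ z) (hα : 0 < α) {γ : ℝ}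
    (hγ : α < γ) : ∀ᶠ r : ℝ in atTop, r ^ (-γ) ≤ (μ {ζ | r < z 0 ζ}).toReal := by
  filter_upwards [hz.tail.eventually_const_lt (neg_lt_neg hγ), hz.eventually_tail_pos hα,
    eventually_gt_atTop 1] with r h pos hr
  rw [lt_div_iff₀ (Real.log_pos hr)] at h
  rw [Real.rpow_def_of_pos (by linarith), ← Real.le_log_iff_exp_le pos]
  linarith

theorem IsScenery.eventually_tail_le_rpow_neg (hz : IsScenery d α μ z) (hα : 0 < α) {γ : ℝ}
    (hγ : γ < α) : ∀ᶠ r : ℝ in atTop, (μ {ζ | r < z 0 ζ}).toReal ≤ r ^ (-γ) := by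
  filter_upwards [hz.tail.eventually_lt_const (neg_lt_neg hγ), hz.eventually_tail_pos hα,
    eventually_gt_atTop 1] with r h pos hr
  rw [div_lt_iff₀ (Real.log_pos hr)] at h
  rw [Real.rpow_def_of_pos (by linarith), ← Real.log_le_iff_le_exp pos]
  linarith

theorem lintegral_rpow_lt_top_of_tail_le {Ω : Type*} [MeasurableSpace Ω] {ν : Measure Ω}
    [IsProbabilityMeasure ν] {f : Ω → ℝ} (hf : Measurable f) (hf0 : ∀ ω, 0 ≤ f ω) {β γ : ℝ}
    (hβ : 0 < β) (hβγ : β < γ) (h : ∀ᶠ r : ℝ in atTop, (ν {ω | r < f ω}).toReal ≤ r ^ (-γ)) :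
    ∫⁻ ω, ENNReal.ofReal (f ω) ^ β ∂ν < ∞ := by
  obtain ⟨R, hR⟩ := eventually_atTop.1 (h.and (eventually_gt_atTop 0))
  have hR0 : 0 < R := (hR R le_rfl).2
  simp_rw [ENNReal.ofReal_rpow_of_nonneg (hf0 _) hβ.le]
  rw [lintegral_rpow_eq_lintegral_meas_lt_mul ν (.of_forall hf0) hf.aemeasurable hβ,
    ← Ioc_union_Ioi_eq_Ioi hR0.le]
  refine ENNReal.mul_lt_top ENNReal.ofReal_lt_top
    ((lintegral_union_le _ _ _).trans_lt (ENNReal.add_lt_top.2 ⟨?_, ?_⟩))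
  · have integrable : IntegrableOn (fun r : ℝ => r ^ (β - 1)) (Ioc 0 R) :=
      (intervalIntegrable_iff_integrableOn_Ioc_of_le hR0.le).1
        (intervalIntegral.intervalIntegrable_rpow' (by linarith))
    exact (lintegral_mono fun r => mul_le_of_le_one_left' prob_le_one).trans_lt
      integrable.lintegral_lt_top
  · have integrable : IntegrableOn (fun r : ℝ => r ^ (-γ + (β - 1))) (Ioi R) :=
      integrableOn_Ioi_rpow_of_lt (by linarith) hR0
    refine (setLIntegral_mono' measurableSet_Ioi fun r (hr : R < r) => ?_).trans_lt
      integrable.lintegral_lt_top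
    rw [Real.rpow_add (hR0.trans hr), ENNReal.ofReal_mul (Real.rpow_nonneg (hR0.trans hr).le _)]
    gcongr
    exact ENNReal.le_ofReal_iff_toReal_le (measure_ne_top ν _)
      (Real.rpow_nonneg (hR0.trans hr).le _) |>.2 (hR r hr.le).1

theorem IsScenery.lintegral_rpow_lt_top (hz : IsScenery d α μ z) (hα : 0 < α) {β : ℝ}
    (hβ : 0 < β) (hβα : β < α) : ∫⁻ ζ, ENNReal.ofReal (z 0 ζ) ^ β ∂μ < ∞ := by
  have := hz.prob
  obtain ⟨γ, hβγ, hγα⟩ := exists_between hβα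
  exact lintegral_rpow_lt_top_of_tail_le (hz.meas 0) (hz.nonneg 0) hβ hβγ
    (hz.eventually_tail_le_rpow_neg hα hγα)

theorem IsScenery.le_one_of_not_integrable (hz : IsScenery d α μ z) (hα : 0 < α)
    (hinf : ¬ Integrable (z 0) μ) : α ≤ 1 := by
  by_contra! h
  refine hinf ⟨(hz.meas 0).aestronglyMeasurable, ?_⟩
  rw [hasFiniteIntegral_iff_ofReal (.of_forall (hz.nonneg 0))]
  simpa using hz.lintegral_rpow_lt_top hα one_pos h

end Scenery

/-! ### Fractional moments of additive functionals -/

section FractionalPower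

variable {ι : Type*} {β : ℝ}

theorem rpow_finsetSum_le_finsetSum_rpow (s : Finset ι) (f : ι → ℝ≥0∞) (h0 : 0 < β) (h1 : β ≤ 1) :
    (∑ i ∈ s, f i) ^ β ≤ ∑ i ∈ s, f i ^ β :=
  Finset.le_sum_of_subadditive (fun a : ℝ≥0∞ => a ^ β) (ENNReal.zero_rpow_of_pos h0).le
    (fun a b => ENNReal.rpow_add_le_add_rpow a b h0.le h1) s f

theorem rpow_tsum_le_tsum_rpow (f : ι → ℝ≥0∞) (h0 : 0 < β) (h1 : β ≤ 1) :
    (∑' i, f i) ^ β ≤ ∑' i, f i ^ β := by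
  have map_iSup := (ENNReal.orderIsoRpow β h0).map_iSup fun s : Finset ι => ∑ i ∈ s, f i
  simp only [ENNReal.orderIsoRpow_apply] at map_iSup
  rw [ENNReal.tsum_eq_iSup_sum, map_iSup]
  exact iSup_le fun s => (rpow_finsetSum_le_finsetSum_rpow s f h0 h1).trans (ENNReal.sum_le_tsum s)

theorem lintegral_rpow_le_rpow_lintegral_mul {Ω : Type*} [MeasurableSpace Ω] {ν : Measure Ω}
    {f : Ω → ℝ≥0∞} (hf : Measurable f) (h0 : 0 < β) (h1 : β ≤ 1) :
    ∫⁻ ω, f ω ^ β ∂ν ≤ (∫⁻ ω, f ω ∂ν) ^ β * ν univ ^ (1 - β) := by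
  simpa using ENNReal.lintegral_mul_norm_pow_le (μ := ν) (g := fun _ => 1) hf.aemeasurable
    aemeasurable_const h0.le (sub_nonneg.2 h1) (add_sub_cancel _ _)

end FractionalPower

section Occupation

variable {Ω κ : Type*} [MeasurableSpace Ω]

/-- The time which the process `Y` spends at the site `y` during the time set `B`. -/
noncomputable def occupationTime (Y : ℝ → Ω → κ) (B : Set ℝ) (y : κ) (ω : Ω) : ℝ≥0∞ :=
  volume.restrict B {u | Y u ω = y}

variable [MeasurableSpace κ] [MeasurableSingletonClass κ] {Y : ℝ → Ω → κ}

theorem measurableSet_visit (hY : Measurable fun p : ℝ × Ω => Y p.1 p.2) (y : κ) :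
    MeasurableSet {p : Ω × ℝ | Y p.2 p.1 = y} :=
  (hY.comp measurable_swap) (measurableSet_singleton y)

theorem measurable_occupationTime (hY : Measurable fun p : ℝ × Ω => Y p.1 p.2) (B : Set ℝ) (y : κ) :
    Measurable (occupationTime Y B y) :=
  measurable_measure_prodMk_left (measurableSet_visit hY y)

theorem lintegral_occupationTime (ν : Measure Ω) [SFinite ν]
    (hY : Measurable fun p : ℝ × Ω => Y p.1 p.2) (B : Set ℝ) (y : κ) :
    ∫⁻ ω, occupationTime Y B y ω ∂ν = ∫⁻ u in B, ν {ω | Y u ω = y} := by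
  have swap := measurableSet_visit hY y
  exact (Measure.prod_apply (μ := ν) (ν := volume.restrict B) swap).symm.trans
    (Measure.prod_apply_symm swap)

theorem setLIntegral_occupationTime_rpow_le (ν : Measure Ω) [SFinite ν]
    (hY : Measurable fun p : ℝ × Ω => Y p.1 p.2) {β : ℝ} (h0 : 0 < β) (h1 : β ≤ 1) (B : Set ℝ)
    (y : κ) {E : Set Ω} {a g : ℝ≥0∞} (hE : ν E ≤ a)
    (hB : ∫⁻ u in B, ν ({ω | Y u ω = y} ∩ E) ≤ a * g) :
    ∫⁻ ω in E, occupationTime Y B y ω ^ β ∂ν ≤ a * g ^ β := by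
  have mean : ∫⁻ ω in E, occupationTime Y B y ω ∂ν ≤ a * g := by
    rw [lintegral_occupationTime _ hY]
    refine le_of_eq_of_le (lintegral_congr fun u => Measure.restrict_apply ?_) hB
    exact (hY.comp measurable_prodMk_left) (measurableSet_singleton y)
  have hβ : 0 ≤ 1 - β := sub_nonneg.2 h1
  calc ∫⁻ ω in E, occupationTime Y B y ω ^ β ∂ν
      ≤ (a * g) ^ β * a ^ (1 - β) := by
        refine (lintegral_rpow_le_rpow_lintegral_mul
          (measurable_occupationTime hY B y) h0 h1).trans ?_
        rw [Measure.restrict_apply_univ]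
        gcongr
    _ = a ^ (β + (1 - β)) * g ^ β := by
        rw [ENNReal.mul_rpow_of_nonneg _ _ h0.le, ENNReal.rpow_add_of_nonneg _ _ h0.le hβ]
        ring
    _ = a * g ^ β := by rw [add_sub_cancel, ENNReal.rpow_one]

variable [Countable κ]

theorem lintegral_comp_eq_tsum {β : Type*} [MeasurableSpace β] (ν : Measure β) {V : β → κ}
    (hV : Measurable V) (f : κ → ℝ≥0∞) : ∫⁻ b, f (V b) ∂ν = ∑' v, f v * ν (V ⁻¹' {v}) := by
  rw [← lintegral_map (measurable_of_countable f) hV, lintegral_countable']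
  exact tsum_congr fun v => congrArg _ (Measure.map_apply hV (measurableSet_singleton v))

theorem lintegral_eq_tsum_mul_occupationTime (hY : Measurable fun p : ℝ × Ω => Y p.1 p.2)
    (c : κ → ℝ≥0∞) (B : Set ℝ) (ω : Ω) :
    ∫⁻ u in B, c (Y u ω) = ∑' y, c y * occupationTime Y B y ω :=
  lintegral_comp_eq_tsum _ (hY.comp measurable_prodMk_right) c

theorem lintegral_eq_tsum_setLIntegral_fiber (ν : Measure Ω) {V : Ω → κ} (hV : Measurable V)
    (f : Ω → ℝ≥0∞) : ∫⁻ ω, f ω ∂ν = ∑' x, ∫⁻ ω in {ω | V ω = x}, f ω ∂ν := by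
  rw [← lintegral_iUnion (s := fun x => {ω | V ω = x}) fun x => hV (measurableSet_singleton x)]
  · rw [iUnion_eq_univ_iff.2 fun ω => ⟨V ω, rfl⟩, Measure.restrict_univ]
  · exact fun a b hab => Disjoint.preimage V (disjoint_singleton.2 hab)

theorem lintegral_rpow_lintegral_le (ν : Measure Ω) [SFinite ν]
    (hY : Measurable fun p : ℝ × Ω => Y p.1 p.2) (c : κ → ℝ≥0∞) {β : ℝ} (h0 : 0 < β) (h1 : β ≤ 1)
    (B : Set ℝ) (r : ℝ) {q : κ → ℝ≥0∞} {g : κ → κ → ℝ≥0∞} (hq : ∀ x, ν {ω | Y r ω = x} ≤ q x)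
    (hg : ∀ x y, ∫⁻ u in B, ν ({ω | Y u ω = y} ∩ {ω | Y r ω = x}) ≤ q x * g x y) :
    ∫⁻ ω, (∫⁻ u in B, c (Y u ω)) ^ β ∂ν ≤ ∑' x, ∑' y, c y ^ β * (q x * g x y ^ β) := by
  have meas (y : κ) := (measurable_occupationTime hY B y).pow_const β
  calc ∫⁻ ω, (∫⁻ u in B, c (Y u ω)) ^ β ∂ν
      ≤ ∫⁻ ω, ∑' y, c y ^ β * occupationTime Y B y ω ^ β ∂ν := by
        refine lintegral_mono fun ω => ?_
        simp_rw [lintegral_eq_tsum_mul_occupationTime hY, ← ENNReal.mul_rpow_of_nonneg _ _ h0.le]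
        exact rpow_tsum_le_tsum_rpow _ h0 h1
    _ = ∑' y, c y ^ β * ∑' x, ∫⁻ ω in {ω | Y r ω = x}, occupationTime Y B y ω ^ β ∂ν := by
        rw [lintegral_tsum fun y => ((meas y).const_mul _).aemeasurable]
        refine tsum_congr fun y => ?_
        rw [lintegral_const_mul _ (meas y), lintegral_eq_tsum_setLIntegral_fiber ν
          (hY.comp (measurable_prodMk_left (x := r)))]
        rfl
    _ ≤ ∑' y, c y ^ β * ∑' x, q x * g x y ^ β := by
        gcongr with y x
        exact setLIntegral_occupationTime_rpow_le ν hY h0 h1 B y (hq x) (hg x y)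
    _ = ∑' x, ∑' y, c y ^ β * (q x * g x y ^ β) := by
        simp_rw [← ENNReal.tsum_mul_left]
        exact ENNReal.tsum_comm

end Occupation

theorem Ioc_zero_subset_iUnion_Ioc {T b : ℝ} (hb : 0 < b) {n : ℕ} (hT : T ≤ n * b) :
    Ioc 0 T ⊆ ⋃ k : Fin n, Ioc (k * b) (k * b + b) := by
  intro u hu
  obtain ⟨k, hk⟩ := Nat.exists_eq_add_one.2 (Nat.ceil_pos.2 (div_pos hu.1 hb))
  obtain ⟨lower, upper⟩ := (Nat.ceil_eq_iff k.succ_ne_zero).1 hk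
  have hkn : k < n := by
    rw [Nat.lt_iff_add_one_le, ← hk, Nat.ceil_le, div_le_iff₀ hb]
    exact hu.2.trans hT
  rw [Nat.succ_sub_one, lt_div_iff₀ hb] at lower
  rw [div_le_iff₀ hb, Nat.cast_succ, add_one_mul] at upper
  exact mem_iUnion.2 ⟨⟨k, hkn⟩, lower, upper⟩

theorem setLIntegral_Ioc_comp_sub (f : ℝ → ℝ≥0∞) (r b : ℝ) :
    ∫⁻ u in Ioc r (r + b), f (u - r) = ∫⁻ u in Ioc 0 b, f u := by
  rw [← (measurePreserving_sub_right volume r).setLIntegral_comp_preimage_emb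
    (MeasurableEquiv.subRight r).measurableEmbedding f, preimage_sub_const_Ioc, zero_add,
    add_comm b]

theorem setLIntegral_Ioc_comp_const_sub (f : ℝ → ℝ≥0∞) (t b : ℝ) :
    ∫⁻ u in Ioc 0 b, f (t - u) = ∫⁻ u in Ioc (t - b) t, f u := by
  rw [← (Measure.measurePreserving_sub_left volume t).setLIntegral_comp_preimage_emb
    (MeasurableEquiv.subLeft t).measurableEmbedding f, preimage_const_sub_Ioc, sub_self,
    sub_sub_cancel]
  exact setLIntegral_congr Ico_ae_eq_Ioc.symm

/-- The Green function `∫₀ᵇ p_u(x, y) du` of the walk on `ℤ^d` up to time `b`. -/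
noncomputable def truncatedGreen (d : ℕ) (b : ℝ) (x y : Fin d → ℤ) : ℝ≥0∞ :=
  ∫⁻ u in Ioc 0 b, ENNReal.ofReal (heatKernel d u x y)

/-- The bound on the `β`-moment of the additive functional `∫ c(Y_u) du` over `n` consecutive
blocks of length `b`: each block contributes according to the position `x` of the walk at its
beginning. -/
noncomputable def blockSum (d : ℕ) (c : (Fin d → ℤ) → ℝ≥0∞) (β b : ℝ) (n : ℕ) : ℝ≥0∞ :=
  ∑ k : Fin n, ∑' x, ∑' y,
    c y ^ β * (ENNReal.ofReal (heatKernel d (k * b) 0 x) * truncatedGreen d b x y ^ β)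

section Blocks

variable {Ω : Type*} [MeasurableSpace Ω] {d : ℕ} {ν : Measure Ω} {Y : ℝ → Ω → Fin d → ℤ}
  {c : (Fin d → ℤ) → ℝ≥0∞} {β b T : ℝ} {K : ℝ≥0∞}

theorem lintegral_block_rpow_le [SFinite ν] (hY : Measurable fun p : ℝ × Ω => Y p.1 p.2)
    (h0 : 0 < β) (h1 : β ≤ 1)
    (h : ∀ ⦃r u : ℝ⦄, 0 ≤ r → r ≤ u → u ≤ T → ∀ x y, ν ({ω | Y u ω = y} ∩ {ω | Y r ω = x})
      ≤ K * ENNReal.ofReal (heatKernel d r 0 x) * ENNReal.ofReal (heatKernel d (u - r) x y))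
    {r : ℝ} (hr : 0 ≤ r) :
    ∫⁻ ω, (∫⁻ u in Ioc r (r + b) ∩ Ioc 0 T, c (Y u ω)) ^ β ∂ν ≤ K * ∑' x, ∑' y,
      c y ^ β * (ENNReal.ofReal (heatKernel d r 0 x) * truncatedGreen d b x y ^ β) := by
  obtain hT | hT := lt_or_ge T r
  · have empty : Ioc r (r + b) ∩ Ioc 0 T = ∅ :=
      (Ioc_disjoint_Ioc_of_le hT.le).symm.mono_right (Ioc_subset_Ioc_left le_rfl) |>.inter_eq
    simp [empty, h0]
  have atStart (x : Fin d → ℤ) :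
      ν {ω | Y r ω = x} ≤ K * ENNReal.ofReal (heatKernel d r 0 x) := by
    simpa [heatKernel_self, lineKernel_zero_zero] using h hr le_rfl hT x x
  have inBlock (x y : Fin d → ℤ) :
      ∫⁻ u in Ioc r (r + b) ∩ Ioc 0 T, ν ({ω | Y u ω = y} ∩ {ω | Y r ω = x})
        ≤ K * ENNReal.ofReal (heatKernel d r 0 x) * truncatedGreen d b x y := by
    rw [truncatedGreen, ← lintegral_const_mul _ (measurable_heatKernel d x y).ennreal_ofReal,
      ← setLIntegral_Ioc_comp_sub _ r b]
    exact (setLIntegral_mono' (measurableSet_Ioc.inter measurableSet_Ioc) fun u hu =>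
      h hr hu.1.1.le hu.2.2 x y).trans (lintegral_mono_set inter_subset_left)
  refine (lintegral_rpow_lintegral_le ν hY c h0 h1 _ r atStart inBlock).trans_eq ?_
  simp_rw [← ENNReal.tsum_mul_left]
  exact tsum_congr fun x => tsum_congr fun y => by ring

theorem lintegral_additiveFunctional_rpow_le [SFinite ν]
    (hY : Measurable fun p : ℝ × Ω => Y p.1 p.2) (h0 : 0 < β) (h1 : β ≤ 1)
    (h : ∀ ⦃r u : ℝ⦄, 0 ≤ r → r ≤ u → u ≤ T → ∀ x y, ν ({ω | Y u ω = y} ∩ {ω | Y r ω = x})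
      ≤ K * ENNReal.ofReal (heatKernel d r 0 x) * ENNReal.ofReal (heatKernel d (u - r) x y))
    (hb : 0 < b) {n : ℕ} (hT : T ≤ n * b) :
    ∫⁻ ω, additiveFunctional c Y T ω ^ β ∂ν ≤ K * blockSum d c β b n := by
  let B (k : Fin n) : Set ℝ := Ioc (k * b) (k * b + b) ∩ Ioc 0 T
  have cover : Ioc 0 T ⊆ ⋃ k, B k := fun u hu => by
    obtain ⟨k, hk⟩ := mem_iUnion.1 (Ioc_zero_subset_iUnion_Ioc hb hT hu)
    exact mem_iUnion.2 ⟨k, hk, hu⟩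
  have meas (k : Fin n) : Measurable fun ω => ∫⁻ u in B k, c (Y u ω) :=
    Measurable.lintegral_prod_right' (f := fun p : Ω × ℝ => c (Y p.2 p.1))
      ((measurable_of_countable c).comp (hY.comp measurable_swap))
  calc ∫⁻ ω, additiveFunctional c Y T ω ^ β ∂ν
      ≤ ∫⁻ ω, ∑ k, (∫⁻ u in B k, c (Y u ω)) ^ β ∂ν := by
        refine lintegral_mono fun ω => ?_
        refine le_trans ?_ (rpow_finsetSum_le_finsetSum_rpow Finset.univ _ h0 h1)
        gcongr
        exact ((lintegral_mono_set cover).trans (lintegral_iUnion_le _ _)).trans_eq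
          (tsum_fintype _)
    _ = ∑ k, ∫⁻ ω, (∫⁻ u in B k, c (Y u ω)) ^ β ∂ν :=
        lintegral_finsetSum _ fun k _ => (meas k).pow_const β
    _ ≤ K * blockSum d c β b n := by
        rw [blockSum, Finset.mul_sum]
        exact Finset.sum_le_sum fun k _ => lintegral_block_rpow_le hY h0 h1 h (by positivity)

end Blocks

section Bridge

variable {Ω : Type*} [MeasurableSpace Ω] {d : ℕ} {ν : Measure Ω} {Y : ℝ → Ω → Fin d → ℤ}

theorem IsLatticeWalk.measure_eq (hY : IsLatticeWalk d ν Y) {t : ℝ} (ht : 0 ≤ t)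
    (x : Fin d → ℤ) : ν {ω | Y t ω = x} = ENNReal.ofReal (heatKernel d t 0 x) := by
  simpa [pathWeight] using hY.fdd (n := 0) (t := fun _ => t) ht (fun _ _ _ => le_rfl) fun _ => x

theorem IsLatticeWalk.measurableSet_eq (hY : IsLatticeWalk d ν Y) (t : ℝ) (x : Fin d → ℤ) :
    MeasurableSet {ω | Y t ω = x} :=
  (hY.measurable.comp measurable_prodMk_left) (measurableSet_singleton x)

theorem IsLatticeWalk.measure_inter_inter (hY : IsLatticeWalk d ν Y) {r u t : ℝ} (hr : 0 ≤ r)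
    (hru : r ≤ u) (hut : u ≤ t) (x y w : Fin d → ℤ) :
    ν ({ω | Y r ω = x} ∩ {ω | Y u ω = y} ∩ {ω | Y t ω = w})
      = ENNReal.ofReal (heatKernel d r 0 x) * ENNReal.ofReal (heatKernel d (u - r) x y)
        * ENNReal.ofReal (heatKernel d (t - u) y w) := by
  have mono : Monotone ![r, u, t] := Fin.monotone_iff_le_succ.2 fun i => by
    fin_cases i <;> simp [hru, hut]
  have joint := hY.fdd (t := ![r, u, t]) hr mono ![x, y, w]
  simp only [Fin.forall_fin_succ, pathWeight, Fin.prod_univ_succ] at joint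
  simpa [mul_assoc, ofPred_and, inter_assoc] using joint

theorem heatKernel_le_of_le {s t : ℝ} (hs : 0 ≤ s) (hst : s ≤ t) (x y : Fin d → ℤ) :
    heatKernel d t x y ≤ lineKernel s 0 ^ d :=
  (heatKernel_le d (hs.trans hst) x y).trans
    (pow_le_pow_left₀ (lineKernel_nonneg (hs.trans hst) 0) (antitone_lineKernel_zero hst) d)

theorem IsLatticeWalk.measure_inter_le (hY : IsLatticeWalk d ν Y) {r u t : ℝ} (ht : 0 ≤ t)
    (hr : 0 ≤ r) (hru : r ≤ u) (hu : u ≤ t / 2) (x y : Fin d → ℤ) :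
    ν.restrict {ω | Y t ω = 0} ({ω | Y u ω = y} ∩ {ω | Y r ω = x})
      ≤ ENNReal.ofReal (lineKernel (t / 2) 0 ^ d) * ENNReal.ofReal (heatKernel d r 0 x)
        * ENNReal.ofReal (heatKernel d (u - r) x y) := by
  rw [Measure.restrict_apply' (hY.measurableSet_eq t 0), inter_comm {ω | Y u ω = y},
    hY.measure_inter_inter hr hru (by linarith), mul_comm, ← mul_assoc]
  gcongr
  exact heatKernel_le_of_le (by linarith) (by linarith) y 0

theorem IsLatticeWalk.measure_reverse_inter_le (hY : IsLatticeWalk d ν Y) {r u t : ℝ} (ht : 0 ≤ t)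
    (hr : 0 ≤ r) (hru : r ≤ u) (hu : u ≤ t / 2) (x y : Fin d → ℤ) :
    ν.restrict {ω | Y t ω = 0} ({ω | Y (t - u) ω = y} ∩ {ω | Y (t - r) ω = x})
      ≤ ENNReal.ofReal (lineKernel (t / 2) 0 ^ d) * ENNReal.ofReal (heatKernel d r 0 x)
        * ENNReal.ofReal (heatKernel d (u - r) x y) := by
  rw [Measure.restrict_apply' (hY.measurableSet_eq t 0),
    hY.measure_inter_inter (by linarith) (by linarith) (by linarith),
    sub_sub_sub_cancel_left, sub_sub_cancel, heatKernel_comm d (u - r), heatKernel_comm d r,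
    mul_right_comm]
  gcongr
  exact heatKernel_le_of_le (by linarith) (by linarith) 0 y

/-- On the bridge, the first half of the path and the reversal of the second half are dominated
by the free walk. -/
theorem IsLatticeWalk.setLIntegral_additiveFunctional_rpow_le (hY : IsLatticeWalk d ν Y)
    (c : (Fin d → ℤ) → ℝ≥0∞) {β : ℝ} (h0 : 0 < β) (h1 : β ≤ 1) {t b : ℝ} (ht : 0 ≤ t) (hb : 0 < b)
    {n : ℕ} (hn : t / 2 ≤ n * b) :
    ∫⁻ ω in {ω | Y t ω = 0}, additiveFunctional c Y t ω ^ β ∂ν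
      ≤ 2 * (ENNReal.ofReal (lineKernel (t / 2) 0 ^ d) * blockSum d c β b n) := by
  have := hY.isProbabilityMeasure
  let Z (u : ℝ) : Ω → Fin d → ℤ := Y (t - u)
  have hZ : Measurable fun p : ℝ × Ω => Z p.1 p.2 :=
    hY.measurable.comp ((measurable_const.sub measurable_fst).prodMk measurable_snd)
  have halves (ω : Ω) : additiveFunctional c Y t ω
      = additiveFunctional c Y (t / 2) ω + additiveFunctional c Z (t / 2) ω := by
    have reverse : additiveFunctional c Z (t / 2) ω = ∫⁻ u in Ioc (t / 2) t, c (Y u ω) := by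
      simpa only [sub_half, additiveFunctional] using
        setLIntegral_Ioc_comp_const_sub (fun u => c (Y u ω)) t (t / 2)
    rw [reverse, additiveFunctional, additiveFunctional,
      ← lintegral_union measurableSet_Ioc (Ioc_disjoint_Ioc_of_le le_rfl),
      Ioc_union_Ioc_eq_Ioc (by linarith) (by linarith)]
  have firstHalf := lintegral_additiveFunctional_rpow_le (c := c) hY.measurable h0 h1
    (fun _ _ hr hru hu => hY.measure_inter_le ht hr hru hu) hb hn
  have secondHalf := lintegral_additiveFunctional_rpow_le (c := c) hZ h0 h1
    (fun _ _ hr hru hu => hY.measure_reverse_inter_le ht hr hru hu) hb hn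
  rw [two_mul]
  refine le_trans ?_ (add_le_add firstHalf secondHalf)
  rw [← lintegral_add_left ((measurable_additiveFunctional (measurable_of_countable c)
    hY.measurable _).pow_const β)]
  refine lintegral_mono fun ω => ?_
  rw [halves]
  exact ENNReal.rpow_add_le_add_rpow _ _ h0.le h1

end Bridge

/-! ### Green's function of a block -/

section Green

variable {d : ℕ}

theorem one_sub_exp_neg_inv_le {s : ℝ} (hs : 0 < s) : (1 - Real.exp (-s))⁻¹ ≤ 1 + 1 / s := by
  have exp_le : Real.exp (-s) ≤ (1 + s)⁻¹ := by
    rw [Real.exp_neg]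
    gcongr
    linarith [Real.add_one_le_exp s]
  calc (1 - Real.exp (-s))⁻¹ ≤ (1 - (1 + s)⁻¹)⁻¹ := by
        have : (1 + s)⁻¹ < 1 := inv_lt_one_of_one_lt₀ (by linarith)
        gcongr
    _ = (s / (1 + s))⁻¹ := by
        congr 1
        field_simp
        ring
    _ = 1 + 1 / s := by
        field_simp
        ring

theorem tsum_ofReal_exp_neg_mul_abs_le {s : ℝ} (hs : 0 < s) :
    ∑' k : ℤ, ENNReal.ofReal (Real.exp (-(s * |(k : ℝ)|)))
      ≤ ENNReal.ofReal (2 * (1 + 1 / s)) := by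
  let g (n : ℕ) : ℝ≥0∞ := ENNReal.ofReal (Real.exp (-(s * n)))
  have geometric : ∑' n, g n ≤ ENNReal.ofReal (1 + 1 / s) := by
    have hg (n : ℕ) : g n = ENNReal.ofReal (Real.exp (-s)) ^ n := by
      rw [← ENNReal.ofReal_pow (Real.exp_pos _).le, ← Real.exp_nat_mul]
      simp only [g, mul_neg, mul_comm]
    have exp_lt : Real.exp (-s) < 1 := Real.exp_lt_one_iff.2 (by linarith)
    simp_rw [hg]
    rw [ENNReal.tsum_geometric, ← ENNReal.ofReal_one, ← ENNReal.ofReal_sub _ (Real.exp_pos _).le,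
      ← ENNReal.ofReal_inv_of_pos (by linarith)]
    exact ENNReal.ofReal_le_ofReal (one_sub_exp_neg_inv_le hs)
  have halves := HasSum.of_nat_of_neg_add_one
    (f := fun k : ℤ => ENNReal.ofReal (Real.exp (-(s * |(k : ℝ)|))))
    ENNReal.summable.hasSum ENNReal.summable.hasSum
  rw [halves.tsum_eq, two_mul, ENNReal.ofReal_add (by positivity) (by positivity)]
  refine add_le_add (le_trans (ENNReal.tsum_le_tsum fun n => ?_) geometric)
    (le_trans (ENNReal.tsum_le_tsum fun n => ?_) geometric)
  · simp [g]
  · refine ENNReal.ofReal_le_ofReal (Real.exp_le_exp.2 ?_)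
    push_cast
    rw [abs_neg, abs_of_nonneg (by positivity)]
    nlinarith

theorem tsum_prod_comp_eq_pow {κ : Type*} (f : κ → ℝ≥0∞) (n : ℕ) :
    ∑' a : Fin n → κ, ∏ i, f (a i) = (∑' k, f k) ^ n := by
  induction n with
  | zero => simp
  | succ n ih =>
    rw [← (Fin.consEquiv fun _ : Fin (n + 1) => κ).tsum_eq, ENNReal.tsum_prod']
    simp only [Fin.consEquiv_apply, Fin.prod_univ_succ, Fin.cons_zero, Fin.cons_succ,
      ENNReal.tsum_mul_left]
    rw [ih, ENNReal.tsum_mul_right, pow_succ']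

theorem tsum_prod_comp_sub_eq_pow (f : ℤ → ℝ≥0∞) (x : Fin d → ℤ) :
    ∑' y : Fin d → ℤ, ∏ i, f (x i - y i) = (∑' k, f k) ^ d := by
  rw [← tsum_prod_comp_eq_pow,
    ← (Equiv.subLeft x).tsum_eq (fun y : Fin d → ℤ => ∏ i, f (y i))]
  rfl

theorem truncatedGreen_one_le (x y : Fin d → ℤ) :
    truncatedGreen d 1 x y
      ≤ ∏ i, ENNReal.ofReal (Real.exp 2 * Real.exp (-|((x i - y i : ℤ) : ℝ)|)) := by
  calc truncatedGreen d 1 x y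
      ≤ ∫⁻ _ in Ioc (0 : ℝ) 1,
          ∏ i, ENNReal.ofReal (Real.exp 2 * Real.exp (-|((x i - y i : ℤ) : ℝ)|)) := by
        refine setLIntegral_mono' measurableSet_Ioc fun u hu => ?_
        rw [heatKernel_eq_prod,
          ENNReal.ofReal_prod_of_nonneg fun i _ => lineKernel_nonneg hu.1.le _]
        refine Finset.prod_le_prod' fun i _ => ENNReal.ofReal_le_ofReal ?_
        simpa using lineKernel_le_exp_neg_abs_div_sqrt hu.1.le hu.2 le_rfl (x i - y i)
    _ = _ := by simp

theorem exists_tsum_truncatedGreen_one_rpow_le (d : ℕ) {β : ℝ} (hβ : 0 < β) :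
    ∃ C : ℝ≥0∞, C ≠ ∞ ∧ ∀ x : Fin d → ℤ, ∑' y, truncatedGreen d 1 x y ^ β ≤ C := by
  let f (k : ℤ) : ℝ≥0∞ := ENNReal.ofReal (Real.exp 2) ^ β
    * ENNReal.ofReal (Real.exp (-(β * |(k : ℝ)|)))
  have sum_f : ∑' k, f k ≤ ENNReal.ofReal (Real.exp 2) ^ β * ENNReal.ofReal (2 * (1 + 1 / β)) := by
    rw [ENNReal.tsum_mul_left]
    gcongr
    exact tsum_ofReal_exp_neg_mul_abs_le hβ
  have pointwise (x y : Fin d → ℤ) : truncatedGreen d 1 x y ^ β ≤ ∏ i, f (x i - y i) := by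
    refine (ENNReal.rpow_le_rpow (truncatedGreen_one_le x y) hβ.le).trans_eq ?_
    rw [← ENNReal.prod_rpow_of_nonneg hβ.le]
    refine Finset.prod_congr rfl fun i _ => ?_
    rw [ENNReal.ofReal_mul (Real.exp_pos _).le, ENNReal.mul_rpow_of_nonneg _ _ hβ.le,
      ENNReal.ofReal_rpow_of_nonneg (Real.exp_pos (-_)).le hβ.le, ← Real.exp_mul, neg_mul,
      mul_comm _ β]
  refine ⟨(ENNReal.ofReal (Real.exp 2) ^ β * ENNReal.ofReal (2 * (1 + 1 / β))) ^ d,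
    by finiteness, fun x => ?_⟩
  calc ∑' y, truncatedGreen d 1 x y ^ β
      ≤ ∑' y : Fin d → ℤ, ∏ i, f (x i - y i) := ENNReal.tsum_le_tsum fun y => pointwise x y
    _ = (∑' k, f k) ^ d := tsum_prod_comp_sub_eq_pow f x
    _ ≤ _ := by gcongr

theorem setLIntegral_Ioc_rpow_neg_le {b s : ℝ} (hb : 0 < b) (hs : s ≤ 1 / 2) :
    ∫⁻ u in Ioc 0 b, ENNReal.ofReal (u ^ (-s)) ≤ ENNReal.ofReal (2 * b ^ (1 - s)) := by
  have integrable : IntegrableOn (fun u : ℝ => u ^ (-s)) (Ioc 0 b) :=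
    (intervalIntegrable_iff_integrableOn_Ioc_of_le hb.le).1
      (intervalIntegral.intervalIntegrable_rpow' (by linarith))
  rw [← ofReal_integral_eq_lintegral_ofReal integrable
    ((ae_restrict_mem measurableSet_Ioc).mono fun u hu => Real.rpow_nonneg hu.1.le _)]
  refine ENNReal.ofReal_le_ofReal ?_
  rw [← intervalIntegral.integral_of_le hb.le, integral_rpow (Or.inl (by linarith)),
    Real.zero_rpow (by linarith), sub_zero, div_le_iff₀ (by linarith), neg_add_eq_sub]
  nlinarith [Real.rpow_nonneg hb.le (1 - s)]

/-- The exponential tail is used only to the power `η`, which is enough to sum over `k`; the rest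
is the on-diagonal bound `u ^ (-1/2)`. -/
theorem lineKernel_le_exp_mul_rpow {u T η : ℝ} (hu : 0 < u) (huT : u ≤ T) (hT : 1 ≤ T)
    (h0 : 0 ≤ η) (h1 : η ≤ 1) (k : ℤ) :
    lineKernel u k ≤ (Real.exp 2 * Real.exp (-(|(k : ℝ)| / √T))) ^ η * u ^ (-((1 - η) / 2)) := by
  have hq := lineKernel_nonneg hu.le k
  calc lineKernel u k = lineKernel u k ^ η * lineKernel u k ^ (1 - η) := by
        rw [← Real.rpow_add_of_nonneg hq h0 (by linarith), add_sub_cancel, Real.rpow_one]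
    _ ≤ (Real.exp 2 * Real.exp (-(|(k : ℝ)| / √T))) ^ η * ((√u)⁻¹) ^ (1 - η) := by
        have : 0 ≤ 1 - η := by linarith
        gcongr
        · exact lineKernel_le_exp_neg_abs_div_sqrt hu.le huT hT k
        · exact (lineKernel_le_lineKernel_zero u k).trans (lineKernel_zero_le hu)
    _ = _ := by
        rw [Real.sqrt_eq_rpow u, ← Real.rpow_neg hu.le, ← Real.rpow_mul hu.le]
        ring_nf

theorem setLIntegral_lineKernel_le {b η : ℝ} (hb : 1 ≤ b) (h0 : 0 ≤ η) (h1 : η ≤ 1) (k : ℤ) :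
    ∫⁻ u in Ioc 0 b, ENNReal.ofReal (lineKernel u k)
      ≤ ENNReal.ofReal (2 * Real.exp 2 ^ η * b ^ ((1 + η) / 2)
        * Real.exp (-(η / √b * |(k : ℝ)|))) := by
  let a : ℝ := (Real.exp 2 * Real.exp (-(|(k : ℝ)| / √b))) ^ η
  have ha : 0 ≤ a := by positivity
  calc ∫⁻ u in Ioc 0 b, ENNReal.ofReal (lineKernel u k)
      ≤ ∫⁻ u in Ioc 0 b, ENNReal.ofReal a * ENNReal.ofReal (u ^ (-((1 - η) / 2))) :=
        setLIntegral_mono' measurableSet_Ioc fun _ hu => by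
          rw [← ENNReal.ofReal_mul ha]
          exact ENNReal.ofReal_le_ofReal (lineKernel_le_exp_mul_rpow hu.1 hu.2 hb h0 h1 k)
    _ = ENNReal.ofReal a * ∫⁻ u in Ioc 0 b, ENNReal.ofReal (u ^ (-((1 - η) / 2))) :=
        lintegral_const_mul _ (by fun_prop)
    _ ≤ ENNReal.ofReal a * ENNReal.ofReal (2 * b ^ (1 - (1 - η) / 2)) := by
        gcongr
        exact setLIntegral_Ioc_rpow_neg_le (by linarith) (by linarith)
    _ = _ := by
        rw [← ENNReal.ofReal_mul ha, show 1 - (1 - η) / 2 = (1 + η) / 2 by ring]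
        simp only [a]
        rw [Real.mul_rpow (by positivity) (by positivity), ← Real.exp_mul (-_)]
        ring_nf

theorem truncatedGreen_dim_one (b : ℝ) (x y : Fin 1 → ℤ) :
    truncatedGreen 1 b x y = ∫⁻ u in Ioc 0 b, ENNReal.ofReal (lineKernel u (x 0 - y 0)) := by
  simp [truncatedGreen, heatKernel_eq_prod]

theorem exists_tsum_truncatedGreen_dim_one_rpow_le {β η : ℝ} (h0 : 0 < β) (h1 : β ≤ 1)
    (hη0 : 0 < η) (hη1 : η ≤ 1) : ∃ C : ℝ≥0∞, C ≠ ∞ ∧ ∀ b : ℝ, 1 ≤ b → ∀ x : Fin 1 → ℤ,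
      ∑' y, truncatedGreen 1 b x y ^ β ≤ C * ENNReal.ofReal (b ^ ((1 + β) / 2 + η)) := by
  refine ⟨ENNReal.ofReal ((2 * Real.exp 2 ^ η) ^ β * (2 * (1 + 1 / (η * β)))), by finiteness,
    fun b hb x => ?_⟩
  have hb0 : 0 < b := by linarith
  have hsqrt : 1 ≤ √b := Real.one_le_sqrt.2 hb
  let A : ℝ := 2 * Real.exp 2 ^ η * b ^ ((1 + η) / 2)
  let f (k : ℤ) : ℝ≥0∞ := ENNReal.ofReal (A ^ β)
    * ENNReal.ofReal (Real.exp (-(η * β / √b * |(k : ℝ)|)))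
  have pointwise (y : Fin 1 → ℤ) : truncatedGreen 1 b x y ^ β ≤ ∏ i, f (x i - y i) := by
    rw [Fin.prod_univ_one, truncatedGreen_dim_one]
    refine (ENNReal.rpow_le_rpow (setLIntegral_lineKernel_le hb hη0.le hη1 _) h0.le).trans_eq ?_
    rw [ENNReal.ofReal_rpow_of_nonneg (by positivity) h0.le,
      Real.mul_rpow (by positivity) (by positivity), ENNReal.ofReal_mul (by positivity),
      ← Real.exp_mul (-_), show -(η / √b * |((x 0 - y 0 : ℤ) : ℝ)|) * β
        = -(η * β / √b * |((x 0 - y 0 : ℤ) : ℝ)|) by ring]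
  have tail : 2 * (1 + 1 / (η * β / √b)) ≤ 2 * (1 + 1 / (η * β)) * b ^ (1 / 2 : ℝ) := by
    rw [← Real.sqrt_eq_rpow, one_div_div, show √b / (η * β) = 1 / (η * β) * √b by ring]
    nlinarith
  have prefactor : A ^ β = (2 * Real.exp 2 ^ η) ^ β * b ^ ((1 + η) / 2 * β) := by
    rw [Real.mul_rpow (by positivity) (by positivity), ← Real.rpow_mul hb0.le]
  have exponent : (1 + η) / 2 * β + 1 / 2 ≤ (1 + β) / 2 + η := by
    nlinarith [mul_nonneg hη0.le (sub_nonneg.2 h1)]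
  calc ∑' y, truncatedGreen 1 b x y ^ β
      ≤ ∑' y : Fin 1 → ℤ, ∏ i, f (x i - y i) := ENNReal.tsum_le_tsum pointwise
    _ = ∑' k, f k := by rw [tsum_prod_comp_sub_eq_pow, pow_one]
    _ ≤ ENNReal.ofReal (A ^ β) * ENNReal.ofReal (2 * (1 + 1 / (η * β / √b))) := by
        rw [ENNReal.tsum_mul_left]
        gcongr
        exact tsum_ofReal_exp_neg_mul_abs_le (by positivity)
    _ ≤ ENNReal.ofReal (A ^ β) * ENNReal.ofReal (2 * (1 + 1 / (η * β)) * b ^ (1 / 2 : ℝ)) := by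
        gcongr
    _ = ENNReal.ofReal ((2 * Real.exp 2 ^ η) ^ β * (2 * (1 + 1 / (η * β))))
          * ENNReal.ofReal (b ^ ((1 + η) / 2 * β + 1 / 2)) := by
        rw [← ENNReal.ofReal_mul (by positivity), ← ENNReal.ofReal_mul (by positivity), prefactor,
          Real.rpow_add hb0]
        ring_nf
    _ ≤ _ := by gcongr

end Green

section BlockMean

variable {Ω : Type*} [MeasurableSpace Ω] {μ : Measure Ω} {d : ℕ} {α β : ℝ}
  {z : (Fin d → ℤ) → Ω → ℝ}

theorem measurable_blockSum (hz : ∀ y, Measurable (z y)) (β b : ℝ) (n : ℕ) :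
    Measurable fun ζ => blockSum d (fun y => ENNReal.ofReal (z y ζ)) β b n :=
  Finset.measurable_sum _ fun _ _ => Measurable.tsum fun _ => Measurable.tsum fun y =>
    ((hz y).ennreal_ofReal.pow_const β).mul_const _

theorem IsScenery.lintegral_rpow_eq (hz : IsScenery d α μ z) (β : ℝ) (y : Fin d → ℤ) :
    ∫⁻ ζ, ENNReal.ofReal (z y ζ) ^ β ∂μ = ∫⁻ ζ, ENNReal.ofReal (z 0 ζ) ^ β ∂μ :=
  ((hz.ident y).comp (u := fun r : ℝ => ENNReal.ofReal r ^ β) (by fun_prop)).lintegral_eq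

theorem IsScenery.lintegral_blockSum_le (hz : IsScenery d α μ z) {b : ℝ} (hb : 0 ≤ b) (n : ℕ)
    {G : ℝ≥0∞} (hG : ∀ x, ∑' y, truncatedGreen d b x y ^ β ≤ G) :
    ∫⁻ ζ, blockSum d (fun y => ENNReal.ofReal (z y ζ)) β b n ∂μ
      ≤ (∫⁻ ζ, ENNReal.ofReal (z 0 ζ) ^ β ∂μ) * (n * G) := by
  set M := ∫⁻ ζ, ENNReal.ofReal (z 0 ζ) ^ β ∂μ
  have meas (y : Fin d → ℤ) : Measurable fun ζ => ENNReal.ofReal (z y ζ) ^ β :=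
    (hz.meas y).ennreal_ofReal.pow_const β
  simp only [blockSum]
  rw [lintegral_finsetSum _ fun k _ =>
    Measurable.tsum fun x => Measurable.tsum fun y => (meas y).mul_const _]
  have block (k : Fin n) : ∫⁻ ζ, ∑' x, ∑' y, ENNReal.ofReal (z y ζ) ^ β
      * (ENNReal.ofReal (heatKernel d (k * b) 0 x) * truncatedGreen d b x y ^ β) ∂μ ≤ M * G := by
    calc _ = ∑' x, ∑' y,
            M * (ENNReal.ofReal (heatKernel d (k * b) 0 x) * truncatedGreen d b x y ^ β) := by
          rw [lintegral_tsum fun x => (Measurable.tsum fun y => (meas y).mul_const _).aemeasurable]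
          refine tsum_congr fun x => ?_
          rw [lintegral_tsum fun y => ((meas y).mul_const _).aemeasurable]
          exact tsum_congr fun y => by rw [lintegral_mul_const _ (meas y), hz.lintegral_rpow_eq]
      _ ≤ M * ∑' x, ENNReal.ofReal (heatKernel d (k * b) 0 x) * G := by
          simp only [ENNReal.tsum_mul_left]
          gcongr with x
          exact hG x
      _ = M * G := by rw [ENNReal.tsum_mul_right, tsum_heatKernel d (by positivity), one_mul]
  calc _ ≤ ∑ _k : Fin n, M * G := Finset.sum_le_sum fun k _ => block k
    _ = M * (n * G) := by
        rw [Finset.sum_const, Finset.card_univ, Fintype.card_fin, nsmul_eq_mul, mul_left_comm]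

theorem IsScenery.exists_blockSum_two_pow_le {z : (Fin 1 → ℤ) → Ω → ℝ} (hz : IsScenery 1 α μ z)
    (hα : 0 < α) {η : ℝ} (h0 : 0 < β) (h1 : β ≤ 1) (hβα : β < α) (hη0 : 0 < η) (hη1 : η ≤ 1) :
    ∃ C : ℝ≥0∞, C ≠ ∞ ∧ ∀ k : ℕ,
      ∫⁻ ζ, blockSum 1 (fun y => ENNReal.ofReal (z y ζ)) β (2 ^ k) 1 ∂μ
        ≤ C * ENNReal.ofReal (((2 : ℝ) ^ k) ^ ((1 + β) / 2 + η)) := by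
  obtain ⟨C, hC, green⟩ := exists_tsum_truncatedGreen_dim_one_rpow_le h0 h1 hη0 hη1
  refine ⟨_, ENNReal.mul_ne_top (hz.lintegral_rpow_lt_top hα h0 hβα).ne hC, fun k => ?_⟩
  refine (hz.lintegral_blockSum_le (by positivity) 1
    (green (2 ^ k) (one_le_pow₀ one_le_two))).trans_eq ?_
  rw [Nat.cast_one, one_mul, mul_assoc]

theorem IsScenery.exists_blockSum_one_le (hz : IsScenery d α μ z) (hα : 0 < α) (h0 : 0 < β)
    (hβα : β < α) : ∃ C : ℝ≥0∞, C ≠ ∞ ∧ ∀ n : ℕ,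
      ∫⁻ ζ, blockSum d (fun y => ENNReal.ofReal (z y ζ)) β 1 n ∂μ ≤ C * n := by
  obtain ⟨C, hC, green⟩ := exists_tsum_truncatedGreen_one_rpow_le d h0
  refine ⟨_, ENNReal.mul_ne_top (hz.lintegral_rpow_lt_top hα h0 hβα).ne hC, fun n => ?_⟩
  refine (hz.lintegral_blockSum_le zero_le_one n green).trans_eq ?_
  ring

/-- The exponent `κ` such that the walk on `ℤ^d` spends time `t ^ (κ + o(1))` at its most visited
site up to time `t`: local times matter only in dimension one. -/
noncomputable def localTimeExponent (d : ℕ) : ℝ := if d = 1 then 1 / 2 else 0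

theorem localTimeExponent_nonneg (d : ℕ) : 0 ≤ localTimeExponent d := by
  unfold localTimeExponent
  split_ifs <;> norm_num

theorem localTimeExponent_le_half (d : ℕ) : localTimeExponent d ≤ 1 / 2 := by
  unfold localTimeExponent
  split_ifs <;> norm_num

/-- One block of length `2 ^ k` is optimal in dimension one, where sites are revisited throughout
the block; otherwise blocks of unit length lose nothing. -/
theorem IsScenery.exists_blocks (hz : IsScenery d α μ z) (hα : 0 < α) {η : ℝ} (h0 : 0 < β)
    (h1 : β ≤ 1) (hβα : β < α) (hη0 : 0 < η) (hη1 : η ≤ 1) :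
    ∃ (b : ℕ → ℝ) (n : ℕ → ℕ) (C : ℝ≥0∞), C ≠ ∞ ∧ ∀ k, 0 < b k ∧ n k * b k = 2 ^ k ∧
      ∫⁻ ζ, blockSum d (fun y => ENNReal.ofReal (z y ζ)) β (b k) (n k) ∂μ
        ≤ C * ENNReal.ofReal (((2 : ℝ) ^ k) ^ (1 - localTimeExponent d * (1 - β) + η)) := by
  unfold localTimeExponent
  split_ifs with hd
  · subst hd
    obtain ⟨C, hC, mean⟩ := hz.exists_blockSum_two_pow_le hα h0 h1 hβα hη0 hη1
    refine ⟨fun k => 2 ^ k, fun _ => 1, C, hC, fun k => ⟨by positivity, by simp, ?_⟩⟩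
    rw [show 1 - 1 / 2 * (1 - β) + η = (1 + β) / 2 + η by ring]
    exact mean k
  · obtain ⟨C, hC, mean⟩ := hz.exists_blockSum_one_le hα h0 hβα
    refine ⟨fun _ => 1, fun k => 2 ^ k, C, hC, fun k => ⟨one_pos, by simp, (mean _).trans ?_⟩⟩
    gcongr
    rw [← ENNReal.ofReal_natCast, Nat.cast_pow, Nat.cast_ofNat]
    exact ENNReal.ofReal_le_ofReal
      (Real.self_le_rpow_of_one_le (one_le_pow₀ one_le_two) (by linarith))

end BlockMean

section BorelCantelli

variable {Ω : Type*} [MeasurableSpace Ω] {μ : Measure Ω} {W : ℕ → Ω → ℝ≥0∞}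

theorem ae_eventually_le_one_of_lintegral_le (hW : ∀ k, Measurable (W k)) {b : ℕ → ℝ≥0∞}
    (hb : ∑' k, b k ≠ ∞) (h : ∀ᶠ k in atTop, ∫⁻ ω, W k ω ∂μ ≤ b k) :
    ∀ᵐ ω ∂μ, ∀ᶠ k in atTop, W k ω ≤ 1 := by
  classical
  let V (k : ℕ) : Ω → ℝ≥0∞ := if ∫⁻ ω, W k ω ∂μ ≤ b k then W k else 0
  have measV (k : ℕ) : Measurable (V k) := by
    simp only [V]
    split_ifs
    exacts [hW k, measurable_zero]
  have meanV (k : ℕ) : ∫⁻ ω, V k ω ∂μ ≤ b k := by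
    simp only [V]
    split_ifs with hk
    · exact hk
    · simp
  have summable : ∫⁻ ω, ∑' k, V k ω ∂μ ≠ ∞ := by
    rw [lintegral_tsum fun k => (measV k).aemeasurable]
    exact ne_top_of_le_ne_top hb (ENNReal.tsum_le_tsum meanV)
  filter_upwards [ae_lt_top (Measurable.tsum measV) summable] with ω hω
  have small := (ENNReal.tendsto_atTop_zero_of_tsum_ne_top hω.ne).eventually_lt_const zero_lt_one
  filter_upwards [small, h] with k hk bound
  simpa only [V, if_pos bound] using hk.le

theorem tsum_ofReal_two_pow_rpow_ne_top {s : ℝ} (hs : s < 0) :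
    ∑' k : ℕ, ENNReal.ofReal (((2 : ℝ) ^ k) ^ s) ≠ ∞ := by
  have ratio : (2 : ℝ) ^ s < 1 := Real.rpow_lt_one_of_one_lt_of_neg one_lt_two hs
  have term (k : ℕ) : ((2 : ℝ) ^ k) ^ s = ((2 : ℝ) ^ s) ^ k := by
    rw [← Real.rpow_natCast, ← Real.rpow_natCast, ← Real.rpow_mul zero_le_two,
      ← Real.rpow_mul zero_le_two, mul_comm]
  simp_rw [term]
  exact (summable_geometric_of_lt_one (by positivity) ratio).tsum_ofReal_ne_top

theorem ae_eventually_le_two_pow_rpow (hW : ∀ k, Measurable (W k)) {C : ℝ≥0∞} (hC : C ≠ ∞)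
    {χ χ' : ℝ} (hχ : χ < χ')
    (h : ∀ᶠ k : ℕ in atTop, ∫⁻ ω, W k ω ∂μ ≤ C * ENNReal.ofReal (((2 : ℝ) ^ k) ^ χ)) :
    ∀ᵐ ω ∂μ, ∀ᶠ k in atTop, W k ω ≤ ENNReal.ofReal (((2 : ℝ) ^ k) ^ χ') := by
  have split (k : ℕ) (r s : ℝ) : ENNReal.ofReal (((2 : ℝ) ^ k) ^ (r + s))
      = ENNReal.ofReal (((2 : ℝ) ^ k) ^ r) * ENNReal.ofReal (((2 : ℝ) ^ k) ^ s) := by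
    rw [← ENNReal.ofReal_mul (by positivity), ← Real.rpow_add (by positivity)]
  have normalized : ∀ᵐ ω ∂μ, ∀ᶠ k in atTop,
      W k ω * ENNReal.ofReal (((2 : ℝ) ^ k) ^ (-χ')) ≤ 1 := by
    refine ae_eventually_le_one_of_lintegral_le (fun k => (hW k).mul_const _)
      (b := fun k => C * ENNReal.ofReal (((2 : ℝ) ^ k) ^ (χ - χ'))) ?_ ?_
    · rw [ENNReal.tsum_mul_left]
      exact ENNReal.mul_ne_top hC (tsum_ofReal_two_pow_rpow_ne_top (by linarith))
    · filter_upwards [h] with k hk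
      rw [lintegral_mul_const _ (hW k), sub_eq_add_neg, split, ← mul_assoc]
      gcongr
  filter_upwards [normalized] with ω hω
  filter_upwards [hω] with k hk
  have cancel := split k (-χ') χ'
  rw [neg_add_cancel, Real.rpow_zero, ENNReal.ofReal_one] at cancel
  calc W k ω = W k ω * ENNReal.ofReal (((2 : ℝ) ^ k) ^ (-χ'))
        * ENNReal.ofReal (((2 : ℝ) ^ k) ^ χ') := by rw [mul_assoc, ← cancel, mul_one]
    _ ≤ 1 * ENNReal.ofReal (((2 : ℝ) ^ k) ^ χ') := by gcongr
    _ = _ := one_mul _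

end BorelCantelli

/-! ### The clock on the bridge is not too fast -/

section ClockExponent

variable {d : ℕ} {α σ : ℝ}

/-- The exponent `σ` such that the clock `A²(t)` is of order `t ^ (σ + o(1))`: the walk visits
`t ^ (1 - κ)` sites, the largest conductance among them is `t ^ ((1 - κ) / α)`, and the walk spends
time `t ^ κ` there. -/
noncomputable def clockExponent (d : ℕ) (α : ℝ) : ℝ :=
  (1 - localTimeExponent d) / α + localTimeExponent d

theorem localTimeExponent_lt_clockExponent (hα : 0 < α) :
    localTimeExponent d < clockExponent d α :=
  lt_add_of_pos_left _ (div_pos (by linarith [localTimeExponent_le_half d]) hα)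

theorem exists_moment_of_clockExponent_lt (hα : 0 < α) (hσ : clockExponent d α < σ) :
    ∃ β η : ℝ, 0 < β ∧ β < α ∧ 0 < η ∧ η ≤ 1 ∧
      1 - localTimeExponent d * (1 - β) + 4 * η ≤ σ * β := by
  have hκ := localTimeExponent_le_half d
  have hκσ := (localTimeExponent_lt_clockExponent hα).trans hσ
  rw [clockExponent] at hσ
  generalize localTimeExponent d = κ at *
  have hpos : 0 < σ - κ := by linarith
  have hlt : (1 - κ) / (σ - κ) < α := by
    rw [div_lt_iff₀ hpos, mul_comm, ← div_lt_iff₀ hα]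
    linarith
  obtain ⟨β, hβ, hβα⟩ := exists_between hlt
  have hβ0 : 0 < β := (div_pos (by linarith) hpos).trans hβ
  rw [div_lt_iff₀ hpos] at hβ
  have gap : 0 < (β * (σ - κ) - (1 - κ)) / 4 := by linarith
  refine ⟨β, min 1 ((β * (σ - κ) - (1 - κ)) / 4), hβ0, hβα, lt_min one_pos gap, min_le_left _ _, ?_⟩
  linarith [min_le_right 1 ((β * (σ - κ) - (1 - κ)) / 4)]

end ClockExponent

theorem eventually_exists_two_pow_le {p : ℕ → Prop} (h : ∀ᶠ k in atTop, p k) :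
    ∀ᶠ t : ℝ in atTop, ∃ k, p k ∧ (2 : ℝ) ^ k ≤ t ∧ t < 2 ^ (k + 1) := by
  obtain ⟨k₀, hk₀⟩ := eventually_atTop.1 h
  filter_upwards [eventually_ge_atTop ((2 : ℝ) ^ k₀)] with t ht
  obtain ⟨k, hk, hk'⟩ := exists_nat_pow_near ((one_le_pow₀ one_le_two).trans ht)
    (one_lt_two (α := ℝ))
  have := (pow_lt_pow_iff_right₀ (one_lt_two (α := ℝ))).1 (ht.trans_lt hk')
  exact ⟨k, hk₀ k (by omega), hk, hk'⟩

theorem lineKernel_half_zero_le {t : ℝ} (ht : 1 ≤ t) :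
    lineKernel (t / 2) 0 ≤ 20 * lineKernel t 0 := by
  have sqrt_le : √t ≤ 2 * √(t / 2) := by
    rw [← Real.sqrt_sq zero_le_two, ← Real.sqrt_mul (by norm_num)]
    exact Real.sqrt_le_sqrt (by linarith)
  calc lineKernel (t / 2) 0 ≤ (√(t / 2))⁻¹ := lineKernel_zero_le (by linarith)
    _ ≤ (√t / 2)⁻¹ := by gcongr; linarith
    _ = 20 * (10 * √t)⁻¹ := by field_simp; norm_num
    _ ≤ 20 * lineKernel t 0 := by gcongr; exact le_lineKernel_zero ht

section BridgeClock

variable {Ω Ωw : Type*} [MeasurableSpace Ω] [MeasurableSpace Ωw] {μ : Measure Ω} {d : ℕ}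
  {α β σ : ℝ} {z : (Fin d → ℤ) → Ω → ℝ} {ν : Measure Ωw} {Y : ℝ → Ωw → Fin d → ℤ}
  {c : (Fin d → ℤ) → ℝ≥0∞}

theorem IsLatticeWalk.measurable_additiveFunctional (hY : IsLatticeWalk d ν Y)
    (c : (Fin d → ℤ) → ℝ≥0∞) (t : ℝ) : Measurable (additiveFunctional c Y t) :=
  _root_.measurable_additiveFunctional (measurable_of_countable c) hY.measurable t

theorem measure_inter_eq_top_eq_zero_of_setLIntegral_rpow_ne_top {f : Ωw → ℝ≥0∞}
    (hf : Measurable f) {s : Set Ωw} (hs : MeasurableSet s) (hβ : 0 < β)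
    (h : ∫⁻ ω in s, f ω ^ β ∂ν ≠ ∞) : ν (s ∩ {ω | f ω = ∞}) = 0 := by
  have finite := ae_lt_top (hf.pow_const β) h
  rw [ae_restrict_iff' hs, ae_iff] at finite
  refine measure_mono_null (fun ω hω => ?_) finite
  simp only [mem_ofPred_eq, Classical.not_imp, not_lt, top_le_iff]
  exact ⟨hω.1, by rw [hω.2, ENNReal.top_rpow_of_pos hβ]⟩

theorem measure_inter_ge_le_of_setLIntegral_rpow_le {f : Ωw → ℝ≥0∞} (hf : Measurable f)
    (s : Set Ωw) (hβ : 0 < β) {a m : ℝ} (ha : 0 < a)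
    (h : ∫⁻ ω in s, f ω ^ β ∂ν ≤ ENNReal.ofReal m) :
    ν (s ∩ {ω | ENNReal.ofReal a ≤ f ω}) ≤ ENNReal.ofReal (m / a ^ β) := by
  have meas : MeasurableSet {ω | ENNReal.ofReal a ≤ f ω} := measurableSet_le measurable_const hf
  have markov := (mul_meas_ge_le_lintegral (μ := ν.restrict s) (hf.pow_const β)
    (ENNReal.ofReal a ^ β)).trans h
  simp only [ENNReal.rpow_le_rpow_iff hβ] at markov
  rwa [Measure.restrict_apply meas, inter_comm, ENNReal.ofReal_rpow_of_pos ha, mul_comm,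
    ← ENNReal.le_div_iff_mul_le (Or.inl (by simp [Real.rpow_pos_of_pos ha]))
      (Or.inl ENNReal.ofReal_ne_top), ← ENNReal.ofReal_div_of_pos (by positivity)] at markov

theorem IsLatticeWalk.ae_eventually_setLIntegral_additiveFunctional_rpow_le
    (hY : IsLatticeWalk d ν Y) (hz : IsScenery d α μ z) (hα : 0 < α) (hα1 : α ≤ 1) {η : ℝ}
    (h0 : 0 < β) (hβα : β < α) (hη0 : 0 < η) (hη1 : η ≤ 1) :
    ∀ᵐ ζ ∂μ, ∀ᶠ t : ℝ in atTop,
      ∫⁻ ω in {ω | Y t ω = 0}, additiveFunctional (fun y => ENNReal.ofReal (z y ζ)) Y t ω ^ β ∂ν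
        ≤ ENNReal.ofReal (2 * 20 ^ d * t ^ (1 - localTimeExponent d * (1 - β) + 2 * η)
          * lineKernel t 0 ^ d) := by
  have hβ1 : β ≤ 1 := by linarith
  obtain ⟨b, n, C, hC, blocks⟩ := hz.exists_blocks hα h0 hβ1 hβα hη0 hη1
  set χ := 1 - localTimeExponent d * (1 - β)
  have hχ0 : 0 ≤ χ := by
    nlinarith [localTimeExponent_le_half d, localTimeExponent_nonneg d]
  filter_upwards [ae_eventually_le_two_pow_rpow (fun k => measurable_blockSum hz.meas β (b k) (n k))
    hC (show χ + η < χ + 2 * η by linarith) (Eventually.of_forall fun k => (blocks k).2.2)]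
    with ζ hζ
  filter_upwards [eventually_exists_two_pow_le hζ, eventually_ge_atTop 1]
    with t ⟨k, hk, hkt, htk⟩ ht
  obtain ⟨hb, hnb, -⟩ := blocks k
  have hq := lineKernel_nonneg (t := t) (by linarith) 0
  calc _ ≤ 2 * (ENNReal.ofReal (lineKernel (t / 2) 0 ^ d)
          * blockSum d (fun y => ENNReal.ofReal (z y ζ)) β (b k) (n k)) :=
        hY.setLIntegral_additiveFunctional_rpow_le _ h0 hβ1 (by linarith) hb
          (by rw [hnb]; rw [pow_succ] at htk; linarith)
    _ ≤ 2 * (ENNReal.ofReal ((20 * lineKernel t 0) ^ d) * ENNReal.ofReal (t ^ (χ + 2 * η))) := by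
        gcongr
        · exact lineKernel_nonneg (by linarith) 0
        · exact lineKernel_half_zero_le ht
        · exact hk.trans (ENNReal.ofReal_le_ofReal (by gcongr))
    _ = _ := by
        rw [← ENNReal.ofReal_mul (by positivity), ← ENNReal.ofReal_ofNat 2,
          ← ENNReal.ofReal_mul zero_le_two, mul_pow]
        ring_nf

theorem IsLatticeWalk.ae_eventually_measure_additiveFunctional_eq_top (hY : IsLatticeWalk d ν Y)
    (hz : IsScenery d α μ z) (hα : 0 < α) (hα1 : α ≤ 1) :
    ∀ᵐ ζ ∂μ, ∀ᶠ t : ℝ in atTop, ν ({ω | Y t ω = 0}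
      ∩ {ω | additiveFunctional (fun y => ENNReal.ofReal (z y ζ)) Y t ω = ∞}) = 0 := by
  filter_upwards [hY.ae_eventually_setLIntegral_additiveFunctional_rpow_le hz hα hα1
    (half_pos hα) (half_lt_self hα) one_pos le_rfl] with ζ hζ
  filter_upwards [hζ] with t ht
  exact measure_inter_eq_top_eq_zero_of_setLIntegral_rpow_ne_top
    (hY.measurable_additiveFunctional _ t) (hY.measurableSet_eq t 0) (half_pos hα)
    (ne_top_of_le_ne_top ENNReal.ofReal_ne_top ht)

theorem IsLatticeWalk.ae_eventually_measure_additiveFunctional_ge_le (hY : IsLatticeWalk d ν Y)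
    (hz : IsScenery d α μ z) (hα : 0 < α) (hα1 : α ≤ 1) (hσ : clockExponent d α < σ) :
    ∀ᵐ ζ ∂μ, ∀ᶠ t : ℝ in atTop, ν ({ω | Y t ω = 0} ∩ {ω | ENNReal.ofReal (t ^ σ)
        ≤ additiveFunctional (fun y => ENNReal.ofReal (z y ζ)) Y t ω})
      ≤ ENNReal.ofReal (lineKernel t 0 ^ d / 2) := by
  obtain ⟨β, η, hβ0, hβα, hη0, hη1, gap⟩ := exists_moment_of_clockExponent_lt hα hσ
  have small : ∀ᶠ t : ℝ in atTop, 2 * 20 ^ d * t ^ (-(2 * η)) < 1 / 2 := by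
    have := (tendsto_rpow_neg_atTop (show 0 < 2 * η by linarith)).const_mul (2 * 20 ^ d : ℝ)
    rw [mul_zero] at this
    exact this.eventually_lt_const one_half_pos
  filter_upwards [hY.ae_eventually_setLIntegral_additiveFunctional_rpow_le hz hα hα1
    hβ0 hβα hη0 hη1] with ζ hζ
  filter_upwards [hζ, small, eventually_ge_atTop 1] with t moment hsmall ht
  have ht0 : 0 < t := by linarith
  refine (measure_inter_ge_le_of_setLIntegral_rpow_le (hY.measurable_additiveFunctional _ t) _ hβ0
    (by positivity) moment).trans (ENNReal.ofReal_le_ofReal ?_)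
  have hq := pow_nonneg (lineKernel_nonneg ht0.le 0) d
  set χ := 1 - localTimeExponent d * (1 - β)
  calc 2 * 20 ^ d * t ^ (χ + 2 * η) * lineKernel t 0 ^ d / (t ^ σ) ^ β
      = 2 * 20 ^ d * t ^ (χ + 2 * η - σ * β) * lineKernel t 0 ^ d := by
        rw [Real.rpow_sub ht0, Real.rpow_mul ht0.le]
        ring
    _ ≤ 2 * 20 ^ d * t ^ (-(2 * η)) * lineKernel t 0 ^ d := by
        gcongr
        linarith
    _ ≤ 1 / 2 * lineKernel t 0 ^ d := by gcongr
    _ = lineKernel t 0 ^ d / 2 := by ring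

theorem IsLatticeWalk.measure_eq_zero (hY : IsLatticeWalk d ν Y) {t : ℝ} (ht : 0 ≤ t) :
    ν {ω | Y t ω = 0} = ENNReal.ofReal (lineKernel t 0 ^ d) := by
  rw [hY.measure_eq ht, heatKernel_self]

theorem IsLatticeWalk.le_setLIntegral_lineKernel (hY : IsLatticeWalk d ν Y) {t a : ℝ} (ht : 0 ≤ t)
    (ha : 0 ≤ a) (h : ν ({ω | Y t ω = 0} ∩ {ω | ENNReal.ofReal a ≤ additiveFunctional c Y t ω})
      ≤ ENNReal.ofReal (lineKernel t 0 ^ d / 2)) :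
    ENNReal.ofReal (lineKernel a 0 * (lineKernel t 0 ^ d / 2)) ≤
      ∫⁻ ω in {ω | Y t ω = 0}, ENNReal.ofReal (lineKernel (additiveFunctional c Y t ω).toReal 0)
        ∂ν := by
  have hE := hY.measurableSet_eq t 0
  set F := {ω | ENNReal.ofReal a ≤ additiveFunctional c Y t ω}
  have measF : MeasurableSet F :=
    measurableSet_le measurable_const (hY.measurable_additiveFunctional c t)
  have hq : 0 ≤ lineKernel t 0 ^ d := pow_nonneg (lineKernel_nonneg ht _) _
  have large : ENNReal.ofReal (lineKernel t 0 ^ d / 2) ≤ ν ({ω | Y t ω = 0} \ F) := by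
    have split := measure_inter_add_sdiff (μ := ν) {ω | Y t ω = 0} measF
    rw [hY.measure_eq_zero ht, ← add_halves (lineKernel t 0 ^ d),
      ENNReal.ofReal_add (by positivity) (by positivity)] at split
    exact (ENNReal.add_le_add_iff_left ENNReal.ofReal_ne_top).1 (split.ge.trans (by gcongr))
  calc ENNReal.ofReal (lineKernel a 0 * (lineKernel t 0 ^ d / 2))
      ≤ ENNReal.ofReal (lineKernel a 0) * ν ({ω | Y t ω = 0} \ F) := by
        rw [ENNReal.ofReal_mul (lineKernel_nonneg ha _)]
        gcongr
    _ = ∫⁻ _ in {ω | Y t ω = 0} \ F, ENNReal.ofReal (lineKernel a 0) ∂ν := by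
        rw [setLIntegral_const]
    _ ≤ ∫⁻ ω in {ω | Y t ω = 0} \ F,
          ENNReal.ofReal (lineKernel (additiveFunctional c Y t ω).toReal 0) ∂ν :=
        setLIntegral_mono' (hE.diff measF) fun ω hω => ENNReal.ofReal_le_ofReal
          (antitone_lineKernel_zero (ENNReal.toReal_le_of_le_ofReal ha (not_le.1 hω.2).le))
    _ ≤ _ := lintegral_mono_set sdiff_subset

theorem IsLatticeWalk.setLIntegral_lineKernel_le (hY : IsLatticeWalk d ν Y) {t a : ℝ} (ht : 0 ≤ t)
    (ha : 0 ≤ a) (h : ν ({ω | Y t ω = 0} ∩ {ω | additiveFunctional c Y t ω = ∞}) = 0) :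
    ∫⁻ ω in {ω | Y t ω = 0}, ENNReal.ofReal (lineKernel (additiveFunctional c Y t ω).toReal 0) ∂ν
      ≤ ENNReal.ofReal (lineKernel a 0 * lineKernel t 0 ^ d)
        + ν {ω | additiveFunctional c Y t ω ≤ ENNReal.ofReal a} := by
  set F := {ω | additiveFunctional c Y t ω ≤ ENNReal.ofReal a}
  have measF : MeasurableSet F :=
    measurableSet_le (hY.measurable_additiveFunctional c t) measurable_const
  have finite : ∀ᵐ ω ∂ν, Y t ω = 0 → additiveFunctional c Y t ω ≠ ∞ := by
    rw [ae_iff]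
    refine measure_mono_null (fun ω hω => ?_) h
    simpa using hω
  calc _ ≤ ∫⁻ ω in {ω | Y t ω = 0}, (ENNReal.ofReal (lineKernel a 0) + F.indicator 1 ω) ∂ν := by
        refine lintegral_mono_ae ?_
        rw [ae_restrict_iff' (hY.measurableSet_eq t 0)]
        filter_upwards [finite] with ω hω hω0
        by_cases slow : ω ∈ F
        · rw [indicator_of_mem slow, Pi.one_apply]
          refine le_add_left ?_
          simpa using lineKernel_le_one ENNReal.toReal_nonneg 0
        · refine le_add_right (ENNReal.ofReal_le_ofReal (antitone_lineKernel_zero ?_))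
          exact (ENNReal.ofReal_le_iff_le_toReal (hω hω0)).1 (not_le.1 slow).le
    _ = ENNReal.ofReal (lineKernel a 0 * lineKernel t 0 ^ d)
          + ν.restrict {ω | Y t ω = 0} F := by
        rw [lintegral_add_left measurable_const, lintegral_indicator_one measF, setLIntegral_const,
          hY.measure_eq_zero ht, ← ENNReal.ofReal_mul (lineKernel_nonneg ha _)]
    _ ≤ _ := by
        gcongr
        exact Measure.restrict_le_self

end BridgeClock

theorem IsCTSRW.ae_eventually_le_measure_layeredWalk {Ω Ωw : Type*} [MeasurableSpace Ω]
    [MeasurableSpace Ωw] {μ : Measure Ω} {d : ℕ} {α σ : ℝ} {z : (Fin d → ℤ) → Ω → ℝ}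
    {P : (Fin (d + 1) → ℤ) → Measure Ωw} {S : ℝ → Ωw → Fin (d + 1) → ℤ}
    (hS : IsCTSRW (d + 1) P S) (hz : IsScenery d α μ z) (hα : 0 < α) (hα1 : α ≤ 1)
    (hσ : clockExponent d α < σ) :
    ∀ᵐ ζ ∂μ, ∀ᶠ t : ℝ in atTop, ENNReal.ofReal (lineKernel (t ^ σ) 0 * (lineKernel t 0 ^ d / 2))
      ≤ P 0 {ω | layeredWalk d z S t ζ ω = 0} := by
  have hY := hS.isLatticeWalk.tailWalk
  filter_upwards [hY.ae_eventually_measure_additiveFunctional_ge_le hz hα hα1 hσ] with ζ hζ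
  filter_upwards [hζ, eventually_ge_atTop 0] with t slow ht
  rw [hS.measure_layeredWalk_eq_zero hz.nonneg ζ ht]
  exact hY.le_setLIntegral_lineKernel ht (by positivity) slow

/-! ### Moments of the number of visits -/

section VisitCount

theorem multichoose_count_succ (p : ℕ → Prop) [DecidablePred p] (m n : ℕ) :
    (Nat.count p n).multichoose (m + 1)
      = ∑ k ∈ Finset.range n, if p k then (Nat.count p (k + 1)).multichoose m else 0 := by
  induction n with
  | zero => simp
  | succ n ih =>
    rw [Finset.sum_range_succ, ← ih, Nat.count_succ]
    split_ifs
    · exact Nat.multichoose_succ_succ _ _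
    · simp

theorem pow_le_factorial_mul_multichoose (c m : ℕ) : c ^ m ≤ m.factorial * c.multichoose m := by
  rw [Nat.multichoose_eq, ← Nat.ascFactorial_eq_factorial_mul_choose']
  exact Nat.pow_succ_le_ascFactorial c m

theorem sum_sum_range_succ_sub_mul_le (a b : ℕ → ℝ≥0∞) (n : ℕ) :
    ∑ k ∈ Finset.range n, ∑ j ∈ Finset.range (k + 1), a (k - j) * b j
      ≤ (∑ i ∈ Finset.range n, a i) * ∑ j ∈ Finset.range n, b j := by
  calc _ = ∑ j ∈ Finset.range n, ∑ k ∈ Finset.Ico j n, a (k - j) * b j :=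
        Finset.sum_comm' fun k j => by simp only [Finset.mem_range, Finset.mem_Ico]; omega
    _ = ∑ j ∈ Finset.range n, (∑ i ∈ Finset.range (n - j), a i) * b j := by
        simp [Finset.sum_Ico_eq_sum_range, Finset.sum_mul]
    _ ≤ _ := by
        rw [Finset.mul_sum]
        gcongr
        omega

/-- The path of the process `Y` along the times `u, u + 1, u + 2, …`. -/
def skeleton {Ω κ : Type*} (Y : ℝ → Ω → κ) (u : ℝ) (ω : Ω) (k : ℕ) : κ := Y (u + k) ω

/-- The number of visits of the sequence `x` to `y` before time `n`. -/
def visitCount {κ : Type*} [DecidableEq κ] (x : ℕ → κ) (y : κ) (n : ℕ) : ℕ :=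
  Nat.count (fun k => x k = y) n

variable {Ω κ : Type*} [MeasurableSpace Ω] [DecidableEq κ]

/-- The expected number of ways to choose `m` visits to `y`, with repetition, up to the time `k`
of the skeleton, on the event that `y` is visited at that time. -/
noncomputable def visitMoment (ν : Measure Ω) (Y : ℝ → Ω → κ) (u : ℝ) (y : κ) (m k : ℕ) : ℝ≥0∞ :=
  ∫⁻ ω in {ω | Y (u + k) ω = y}, (visitCount (skeleton Y u ω) y (k + 1)).multichoose m ∂ν

variable [MeasurableSpace κ] [MeasurableSingletonClass κ] {Y : ℝ → Ω → κ}

theorem measurable_multichoose_visitCount (hY : ∀ t, Measurable (Y t)) (u : ℝ) (y : κ) (m n : ℕ) :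
    Measurable fun ω => ((visitCount (skeleton Y u ω) y n).multichoose m : ℝ≥0∞) := by
  have meas : Measurable fun ω => visitCount (skeleton Y u ω) y n := by
    simp_rw [visitCount, Nat.count_eq_card_filter_range, Finset.card_filter]
    exact Finset.measurable_fun_sum _ fun k _ =>
      Measurable.ite (hY _ (measurableSet_singleton y)) measurable_const measurable_const
  exact (measurable_of_countable fun c : ℕ => (c.multichoose m : ℝ≥0∞)).comp meas

theorem lintegral_multichoose_visitCount_succ (ν : Measure Ω) (hY : ∀ t, Measurable (Y t)) (u : ℝ)
    (y : κ) (m n : ℕ) :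
    ∫⁻ ω, (visitCount (skeleton Y u ω) y n).multichoose (m + 1) ∂ν
      = ∑ k ∈ Finset.range n, visitMoment ν Y u y m k := by
  have visit (k : ℕ) : MeasurableSet {ω | Y (u + k) ω = y} := hY _ (measurableSet_singleton y)
  have expand (ω : Ω) : ((visitCount (skeleton Y u ω) y n).multichoose (m + 1) : ℝ≥0∞)
      = ∑ k ∈ Finset.range n, {ω | Y (u + k) ω = y}.indicator
        (fun ω => ((visitCount (skeleton Y u ω) y (k + 1)).multichoose m : ℝ≥0∞)) ω := by
    simp only [visitCount, multichoose_count_succ, Nat.cast_sum, Nat.cast_ite, Nat.cast_zero]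
    simp only [skeleton, indicator_apply, mem_ofPred_eq]
    rfl
  simp_rw [expand]
  rw [lintegral_finsetSum _ fun k _ =>
    (measurable_multichoose_visitCount hY u y m (k + 1)).indicator (visit k)]
  exact Finset.sum_congr rfl fun k _ => lintegral_indicator (visit k) _

end VisitCount

section WalkVisits

variable {Ω : Type*} [MeasurableSpace Ω] {d : ℕ} {ν : Measure Ω} {Y : ℝ → Ω → Fin d → ℤ}

theorem IsLatticeWalk.measurable_eval (hY : IsLatticeWalk d ν Y) (t : ℝ) : Measurable (Y t) :=
  hY.measurable.comp measurable_prodMk_left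

theorem IsLatticeWalk.measure_inter_eq_pathWeight (hY : IsLatticeWalk d ν Y) {n : ℕ}
    {t : Fin (n + 1) → ℝ} (h0 : 0 ≤ t 0) (ht : Monotone t) {s : ℝ} (hs : t (Fin.last n) ≤ s)
    (y : Fin (n + 1) → Fin d → ℤ) (w : Fin d → ℤ) :
    ν ({ω | ∀ i, Y (t i) ω = y i} ∩ {ω | Y s ω = w})
      = ENNReal.ofReal (heatKernel d (s - t (Fin.last n)) (y (Fin.last n)) w) * pathWeight t y := by
  have mono : Monotone (Fin.snoc t s : Fin (n + 2) → ℝ) := Fin.monotone_iff_le_succ.2 fun i => by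
    refine Fin.lastCases ?_ (fun i => ?_) i
    · simpa using hs
    · rw [Fin.snoc_castSucc, Fin.succ_castSucc, Fin.snoc_castSucc]
      exact ht i.castSucc_lt_succ.le
  have start : (Fin.snoc t s : Fin (n + 2) → ℝ) 0 = t 0 :=
    Fin.snoc_castSucc (α := fun _ => ℝ) s t 0
  have joint := hY.fdd (start ▸ h0) mono (Fin.snoc y w)
  rw [pathWeight_snoc, mul_comm] at joint
  rw [← joint]
  congr 1 with ω
  simp [Fin.forall_fin_succ' (n := n + 1)]

theorem IsLatticeWalk.setLIntegral_eq (hY : IsLatticeWalk d ν Y) {n : ℕ} {t : Fin (n + 1) → ℝ}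
    (h0 : 0 ≤ t 0) (ht : Monotone t) {s : ℝ} (hs : t (Fin.last n) ≤ s) (w : Fin d → ℤ)
    (f : (Fin (n + 1) → Fin d → ℤ) → ℝ≥0∞) :
    ∫⁻ ω in {ω | Y s ω = w}, f (fun i => Y (t i) ω) ∂ν
      = ∫⁻ ω, f (fun i => Y (t i) ω)
        * ENNReal.ofReal (heatKernel d (s - t (Fin.last n)) (Y (t (Fin.last n)) ω) w) ∂ν := by
  have meas : Measurable fun ω i => Y (t i) ω :=
    measurable_pi_lambda _ fun i => hY.measurable_eval _
  rw [lintegral_comp_eq_tsum _ meas, lintegral_comp_eq_tsum ν meas fun v =>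
    f v * ENNReal.ofReal (heatKernel d (s - t (Fin.last n)) (v (Fin.last n)) w)]
  refine tsum_congr fun v => ?_
  have fiber : (fun ω i => Y (t i) ω) ⁻¹' {v} = {ω | ∀ i, Y (t i) ω = v i} := by
    ext ω
    simp [funext_iff]
  rw [Measure.restrict_apply (meas (measurableSet_singleton v)), fiber,
    hY.measure_inter_eq_pathWeight h0 ht hs, hY.fdd h0 ht, mul_assoc]

theorem IsLatticeWalk.visitMoment_restrict (hY : IsLatticeWalk d ν Y) {u : ℝ} (hu : 0 ≤ u)
    (y : Fin d → ℤ) (m : ℕ) {j k : ℕ} (hjk : j ≤ k) :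
    visitMoment (ν.restrict {ω | Y (u + k) ω = y}) Y u y m j
      = ENNReal.ofReal (lineKernel (k - j : ℕ) 0 ^ d) * visitMoment ν Y u y m j := by
  let f (v : Fin (j + 1) → Fin d → ℤ) : ℝ≥0∞ := if v (Fin.last j) = y then
    ((Finset.univ.filter fun i => v i = y).card.multichoose m : ℝ≥0∞) else 0
  have hf (ω : Ω) : f (fun i => Y (u + (i : ℕ)) ω) = {ω | Y (u + j) ω = y}.indicator
      (fun ω => ((visitCount (skeleton Y u ω) y (j + 1)).multichoose m : ℝ≥0∞)) ω := by
    simp only [visitCount, Nat.count_eq_card_filter_range, Finset.card_filter]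
    simp only [f, skeleton, Fin.val_last, indicator_apply, mem_ofPred_eq, Finset.card_filter,
      Fin.sum_univ_eq_sum_range (fun i => if Y (u + i) ω = y then 1 else 0)]
    rfl
  have visit := hY.measurableSet_eq (u + j) y
  have markov := hY.setLIntegral_eq (t := fun i : Fin (j + 1) => u + (i : ℕ)) (s := u + k)
    (by simpa using hu) (fun a b hab => by simpa using hab) (by simpa using hjk) y f
  have meas := (measurable_multichoose_visitCount hY.measurable_eval u y m (j + 1)).indicator visit
  simp_rw [hf, Fin.val_last] at markov
  rw [visitMoment, visitMoment, ← lintegral_indicator visit, ← lintegral_indicator visit, markov,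
    ← lintegral_const_mul _ meas]
  refine lintegral_congr fun ω => ?_
  by_cases hω : Y (u + j) ω = y
  · rw [hω, heatKernel_self, mul_comm, Nat.cast_sub hjk, add_sub_add_left_eq_sub]
  · simp [hω]

theorem IsLatticeWalk.sum_visitMoment_le (hY : IsLatticeWalk d ν Y) {u : ℝ} (hu : 0 ≤ u)
    (y : Fin d → ℤ) (m n : ℕ) :
    ∑ k ∈ Finset.range n, visitMoment ν Y u y m k
      ≤ (∑ j ∈ Finset.range n, ENNReal.ofReal (lineKernel j 0 ^ d)) ^ m
        * ∑ k ∈ Finset.range n, ν {ω | Y (u + k) ω = y} := by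
  induction m with
  | zero => simp [visitMoment]
  | succ m ih =>
    calc _ = ∑ k ∈ Finset.range n, ∑ j ∈ Finset.range (k + 1),
            ENNReal.ofReal (lineKernel (k - j : ℕ) 0 ^ d) * visitMoment ν Y u y m j := by
          refine Finset.sum_congr rfl fun k _ => ?_
          rw [visitMoment, lintegral_multichoose_visitCount_succ _ hY.measurable_eval]
          exact Finset.sum_congr rfl fun j hj =>
            hY.visitMoment_restrict hu y m (Finset.mem_range_succ_iff.1 hj)
      _ ≤ _ := sum_sum_range_succ_sub_mul_le
          (fun i : ℕ => ENNReal.ofReal (lineKernel i 0 ^ d)) _ n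
      _ ≤ _ := by
          rw [pow_succ', mul_assoc]
          gcongr

theorem IsLatticeWalk.tsum_lintegral_multichoose_visitCount_le (hY : IsLatticeWalk d ν Y) {u : ℝ}
    (hu : 0 ≤ u) (m n : ℕ) :
    ∑' y, ∫⁻ ω, (visitCount (skeleton Y u ω) y n).multichoose (m + 1) ∂ν
      ≤ (∑ j ∈ Finset.range n, ENNReal.ofReal (lineKernel j 0 ^ d)) ^ m * n := by
  have total (k : ℕ) : ∑' y, ν {ω | Y (u + k) ω = y} = 1 := by
    simp_rw [hY.measure_eq (show 0 ≤ u + k by positivity)]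
    exact tsum_heatKernel d (by positivity) 0
  simp_rw [lintegral_multichoose_visitCount_succ ν hY.measurable_eval]
  refine (ENNReal.tsum_le_tsum fun y => hY.sum_visitMoment_le hu y m n).trans_eq ?_
  rw [ENNReal.tsum_mul_left, Summable.tsum_finsetSum fun _ _ => ENNReal.summable]
  simp [total]

theorem IsLatticeWalk.measure_exists_lt_visitCount_le (hY : IsLatticeWalk d ν Y) {u : ℝ}
    (hu : 0 ≤ u) (m n : ℕ) {Λ : ℝ} (hΛ : 0 < Λ) :
    ν {ω | ∃ y, Λ < visitCount (skeleton Y u ω) y n} ≤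
      ENNReal.ofReal ((m + 1).factorial / Λ ^ (m + 1))
        * ((∑ j ∈ Finset.range n, ENNReal.ofReal (lineKernel j 0 ^ d)) ^ m * n) := by
  set c := ENNReal.ofReal ((m + 1).factorial / Λ ^ (m + 1))
  have large (c : ℕ) (h : Λ < c) :
      1 ≤ ENNReal.ofReal ((m + 1).factorial / Λ ^ (m + 1)) * (c.multichoose (m + 1) : ℝ≥0∞) := by
    rw [← ENNReal.ofReal_natCast, ← ENNReal.ofReal_mul (by positivity), ENNReal.one_le_ofReal,
      div_mul_eq_mul_div, one_le_div (by positivity)]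
    calc Λ ^ (m + 1) ≤ (c : ℝ) ^ (m + 1) := by gcongr
      _ ≤ _ := by exact_mod_cast pow_le_factorial_mul_multichoose c (m + 1)
  rw [ofPred_exists]
  calc _ ≤ ∑' y, ν {ω | Λ < visitCount (skeleton Y u ω) y n} := measure_iUnion_le _
    _ ≤ ∑' y, c * ∫⁻ ω, (visitCount (skeleton Y u ω) y n).multichoose (m + 1) ∂ν := by
        refine ENNReal.tsum_le_tsum fun y => ?_
        have meas := measurable_multichoose_visitCount hY.measurable_eval u y (m + 1) n
        rw [← lintegral_const_mul _ meas]
        refine le_trans ?_ (mul_meas_ge_le_lintegral (meas.const_mul _) 1)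
        rw [one_mul]
        exact measure_mono fun ω hω => large _ hω
    _ ≤ _ := by
        rw [ENNReal.tsum_mul_left]
        gcongr
        exact hY.tsum_lintegral_multichoose_visitCount_le hu m n

end WalkVisits

/-! ### The clock is not too slow -/

section LaplaceTransform

theorem exp_neg_mul_le_one_sub {θ x : ℝ} (h0 : 0 ≤ θ) (h1 : θ ≤ 1) :
    Real.exp (-(θ * x)) ≤ 1 - θ * (1 - Real.exp (-x)) := by
  have convex := convexOn_exp.2 (mem_univ (-x)) (mem_univ 0) h0 (sub_nonneg.2 h1) (by ring)
  simp only [smul_eq_mul, mul_zero, add_zero, Real.exp_zero, mul_one, mul_neg] at convex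
  linarith

theorem lintegral_exp_neg_mul_le {Ω : Type*} [MeasurableSpace Ω] {μ : Measure Ω}
    [IsProbabilityMeasure μ] {X : Ω → ℝ} (hX : Measurable X) (hX0 : ∀ ζ, 0 ≤ X ζ) {b θ : ℝ}
    (hb : 0 < b) (h0 : 0 ≤ θ) (h1 : θ ≤ 1) :
    ∫⁻ ζ, ENNReal.ofReal (Real.exp (-(θ * (X ζ / b)))) ∂μ
      ≤ ENNReal.ofReal (Real.exp (-(θ / 2 * (μ {ζ | b < X ζ}).toReal))) := by
  set B := {ζ | b < X ζ}
  have meas_B : MeasurableSet B := measurableSet_lt measurable_const hX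
  have pointwise (ζ : Ω) : ENNReal.ofReal (Real.exp (-(θ * (X ζ / b))))
      + B.indicator (fun _ => ENNReal.ofReal (θ / 2)) ζ ≤ 1 := by
    by_cases hζ : ζ ∈ B
    · rw [indicator_of_mem hζ, ← ENNReal.ofReal_add (Real.exp_pos _).le (by positivity),
        ENNReal.ofReal_le_one]
      have large : 1 ≤ X ζ / b := (one_le_div hb).2 (le_of_lt hζ)
      have half : Real.exp (-(X ζ / b)) ≤ 1 / 2 :=
        (Real.exp_le_exp.2 (neg_le_neg large)).trans Real.exp_neg_one_lt_half.le
      nlinarith [exp_neg_mul_le_one_sub (x := X ζ / b) h0 h1]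
    · rw [indicator_of_notMem hζ, add_zero, ENNReal.ofReal_le_one, Real.exp_le_one_iff,
        neg_nonpos]
      exact mul_nonneg h0 (div_nonneg (hX0 ζ) hb.le)
  have integrated : ∫⁻ ζ, ENNReal.ofReal (Real.exp (-(θ * (X ζ / b)))) ∂μ
      + ENNReal.ofReal (θ / 2 * (μ B).toReal) ≤ 1 := by
    have h := lintegral_mono (μ := μ) pointwise
    rw [lintegral_add_right _ (measurable_const.indicator meas_B), lintegral_const, measure_univ,
      one_mul, lintegral_indicator_const meas_B] at h
    rwa [ENNReal.ofReal_mul (by positivity), ENNReal.ofReal_toReal (measure_ne_top μ B)]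
  refine (ENNReal.le_sub_of_add_le_right ENNReal.ofReal_ne_top integrated).trans ?_
  rw [← ENNReal.ofReal_one, ← ENNReal.ofReal_sub _ (by positivity)]
  exact ENNReal.ofReal_le_ofReal (Real.one_sub_le_exp_neg _)

variable {Ω κ : Type*}

/-- The factor `exp (-A / a)` of the Laplace transform of the scenery `A` collected by the sequence
`x` before time `N`, as a function of the realization `ζ` of the scenery. -/
noncomputable def laplaceWeight (z : κ → Ω → ℝ) (x : ℕ → κ) (N : ℕ) (a : ℝ) (ζ : Ω) : ℝ≥0∞ :=
  ENNReal.ofReal (Real.exp (-((∑ k ∈ Finset.range N, z (x k) ζ) / a)))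

theorem laplaceWeight_le_one {z : κ → Ω → ℝ} (hz : ∀ y ζ, 0 ≤ z y ζ) (x : ℕ → κ) (N : ℕ) {a : ℝ}
    (ha : 0 ≤ a) (ζ : Ω) : laplaceWeight z x N a ζ ≤ 1 := by
  rw [laplaceWeight, ENNReal.ofReal_le_one, Real.exp_le_one_iff, neg_nonpos]
  exact div_nonneg (Finset.sum_nonneg fun _ _ => hz _ _) ha

theorem laplaceWeight_eq_prod [DecidableEq κ] (z : κ → Ω → ℝ) (x : ℕ → κ) (N : ℕ) (a : ℝ) (ζ : Ω) :
    laplaceWeight z x N a ζ = ∏ y ∈ (Finset.range N).image x,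
      ENNReal.ofReal (Real.exp (-(visitCount x y N * (z y ζ / a)))) := by
  rw [laplaceWeight, Finset.sum_comp (fun y => z y ζ) x,
    ← ENNReal.ofReal_prod_of_nonneg (fun _ _ => (Real.exp_pos _).le), ← Real.exp_sum,
    Finset.sum_div, ← Finset.sum_neg_distrib]
  simp only [← Nat.count_eq_card_filter_range, nsmul_eq_mul, mul_div_assoc, visitCount]

theorem sum_visitCount_eq [DecidableEq κ] (x : ℕ → κ) (N : ℕ) :
    ∑ y ∈ (Finset.range N).image x, visitCount x y N = N := by
  simp only [visitCount, Nat.count_eq_card_filter_range]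
  rw [← Finset.card_eq_sum_card_image, Finset.card_range]

theorem measurable_laplaceWeight_skeleton {β Ω' : Type*} [MeasurableSpace β] [MeasurableSpace Ω]
    [MeasurableSpace Ω'] [MeasurableSpace κ] [Countable κ] [MeasurableSingletonClass κ]
    {z : κ → Ω → ℝ} (hz : ∀ y, Measurable (z y)) {Y : ℝ → Ω' → κ}
    (hY : Measurable fun p : ℝ × Ω' => Y p.1 p.2) (N : ℕ) (a : ℝ) {u : β → ℝ} (hu : Measurable u)
    {ω : β → Ω'} (hω : Measurable ω) {ζ : β → Ω} (hζ : Measurable ζ) :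
    Measurable fun b => laplaceWeight z (skeleton Y (u b) (ω b)) N a (ζ b) := by
  have eval : Measurable fun p : Ω × κ => z p.2 p.1 := measurable_from_prod_countable_left hz
  have step (k : ℕ) : Measurable fun b => z (skeleton Y (u b) (ω b) k) (ζ b) :=
    eval.comp (hζ.prodMk (hY.comp ((hu.add_const (k : ℝ)).prodMk hω)))
  have total := Finset.measurable_fun_sum (Finset.range N) fun k _ => step k
  unfold laplaceWeight
  fun_prop

end LaplaceTransform

section Annealed

variable {Ω : Type*} [MeasurableSpace Ω] {μ : Measure Ω} {d : ℕ} {α : ℝ}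
  {z : (Fin d → ℤ) → Ω → ℝ}

theorem IsScenery.lintegral_laplaceWeight_le (hz : IsScenery d α μ z) (x : ℕ → Fin d → ℤ) (N : ℕ)
    {a Λ : ℝ} (ha : 0 < a) (hΛ : 0 < Λ) (hmax : ∀ y, (visitCount x y N : ℝ) ≤ Λ) :
    ∫⁻ ζ, laplaceWeight z x N a ζ ∂μ
      ≤ ENNReal.ofReal (Real.exp (-(N / (2 * Λ) * (μ {ζ | a / Λ < z 0 ζ}).toReal))) := by
  have := hz.prob
  set q := (μ {ζ | a / Λ < z 0 ζ}).toReal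
  have site (y : Fin d → ℤ) :
      ∫⁻ ζ, ENNReal.ofReal (Real.exp (-(visitCount x y N * (z y ζ / a)))) ∂μ
        ≤ ENNReal.ofReal (Real.exp (-(visitCount x y N * (q / (2 * Λ))))) := by
    have tail : μ {ζ | a / Λ < z y ζ} = μ {ζ | a / Λ < z 0 ζ} :=
      (hz.ident y).measure_mem_eq (s := Ioi (a / Λ)) measurableSet_Ioi
    have bound := lintegral_exp_neg_mul_le (μ := μ) (hz.meas y) (hz.nonneg y) (div_pos ha hΛ)
      (by positivity) ((div_le_one hΛ).2 (hmax y))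
    have rescale (r : ℝ) : visitCount x y N / Λ * (r / (a / Λ)) = visitCount x y N * (r / a) := by
      field_simp
    simp_rw [rescale, tail] at bound
    exact bound.trans_eq (by simp only [q]; ring_nf)
  simp_rw [laplaceWeight_eq_prod]
  rw [lintegral_prod_eq_prod_lintegral_of_indepFun _
    (fun y ζ => ENNReal.ofReal (Real.exp (-(visitCount x y N * (z y ζ / a)))))
    (hz.indep.comp (fun y r => ENNReal.ofReal (Real.exp (-(visitCount x y N * (r / a)))))
      fun y => by fun_prop)
    fun y => by have := hz.meas y; fun_prop]
  refine (Finset.prod_le_prod' fun y _ => site y).trans_eq ?_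
  rw [← ENNReal.ofReal_prod_of_nonneg (fun _ _ => (Real.exp_pos _).le), ← Real.exp_sum,
    Finset.sum_neg_distrib, ← Finset.sum_mul, ← Nat.cast_sum, sum_visitCount_eq]
  ring_nf

variable {Ω' : Type*} [MeasurableSpace Ω'] {ν : Measure Ω'} {Y : ℝ → Ω' → Fin d → ℤ}

theorem IsScenery.lintegral_lintegral_laplaceWeight_le [IsProbabilityMeasure ν]
    (hz : IsScenery d α μ z) (hY : Measurable fun p : ℝ × Ω' => Y p.1 p.2) (u : ℝ) (N : ℕ)
    {a Λ : ℝ} (ha : 0 < a) (hΛ : 0 < Λ) :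
    ∫⁻ ζ, ∫⁻ ω, laplaceWeight z (skeleton Y u ω) N a ζ ∂ν ∂μ
      ≤ ENNReal.ofReal (Real.exp (-(N / (2 * Λ) * (μ {ζ | a / Λ < z 0 ζ}).toReal)))
        + ν {ω | ∃ y, Λ < visitCount (skeleton Y u ω) y N} := by
  have := hz.prob
  rw [lintegral_lintegral_swap (measurable_laplaceWeight_skeleton hz.meas hY N a
    measurable_const measurable_snd measurable_fst).aemeasurable]
  set E := ENNReal.ofReal (Real.exp (-(N / (2 * Λ) * (μ {ζ | a / Λ < z 0 ζ}).toReal)))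
  set F := {ω | ∃ y, Λ < visitCount (skeleton Y u ω) y N}
  calc _ ≤ ∫⁻ ω, (E + F.indicator 1 ω) ∂ν := by
        refine lintegral_mono fun ω => ?_
        by_cases hω : ω ∈ F
        · rw [indicator_of_mem hω]
          refine le_trans ?_ le_add_self
          exact (lintegral_mono fun ζ => laplaceWeight_le_one hz.nonneg _ N ha.le ζ).trans
            (by simp)
        · refine le_trans ?_ le_self_add
          exact hz.lintegral_laplaceWeight_le _ N ha hΛ fun y =>
            not_lt.1 fun hy => hω ⟨y, hy⟩
    _ ≤ E + ν F := by
        rw [lintegral_add_left measurable_const, lintegral_const, measure_univ, mul_one]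
        gcongr
        exact lintegral_indicator_one_le _

end Annealed

section Markov

theorem one_le_lintegral_exp_neg_div {β : Type*} [MeasurableSpace β] {m : Measure β}
    [IsProbabilityMeasure m] {D : β → ℝ} (hD : Measurable D) (hD0 : ∀ b, 0 ≤ D b) {a : ℝ}
    (ha : 0 < a) (h : ∫⁻ b, ENNReal.ofReal (D b) ∂m ≤ ENNReal.ofReal a) :
    1 ≤ ENNReal.ofReal (Real.exp 1) * ∫⁻ b, ENNReal.ofReal (Real.exp (-(D b / a))) ∂m := by
  have pointwise (b : β) : 2 ≤ ENNReal.ofReal (Real.exp 1) * ENNReal.ofReal (Real.exp (-(D b / a)))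
      + ENNReal.ofReal a⁻¹ * ENNReal.ofReal (D b) := by
    have := hD0 b
    rw [← ENNReal.ofReal_mul (Real.exp_pos _).le, ← ENNReal.ofReal_mul (by positivity),
      ← ENNReal.ofReal_add (by positivity) (by positivity), ← Real.exp_add, inv_mul_eq_div,
      ← ENNReal.ofReal_ofNat]
    exact ENNReal.ofReal_le_ofReal (by linarith [Real.add_one_le_exp (1 + -(D b / a))])
  have integrated := lintegral_mono (μ := m) pointwise
  rw [lintegral_add_right _ (by fun_prop), lintegral_const_mul _ (by fun_prop),
    lintegral_const_mul _ (by fun_prop), lintegral_const, measure_univ, mul_one] at integrated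
  have mean : ENNReal.ofReal a⁻¹ * ∫⁻ b, ENNReal.ofReal (D b) ∂m ≤ 1 := by
    grw [h]
    rw [← ENNReal.ofReal_mul (by positivity), inv_mul_cancel₀ ha.ne', ENNReal.ofReal_one]
  have two_le := integrated.trans (add_le_add_right mean _)
  rw [← one_add_one_eq_two] at two_le
  exact (ENNReal.add_le_add_iff_right ENNReal.one_ne_top).1 two_le

theorem setLIntegral_Ioc_natCast {f : ℝ → ℝ≥0∞} (hf : Measurable f) (N : ℕ) :
    ∫⁻ u in Ioc 0 (N : ℝ), f u = ∫⁻ u in Ioc 0 (1 : ℝ), ∑ k ∈ Finset.range N, f (u + k) := by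
  rw [lintegral_finsetSum _ fun k _ => by fun_prop]
  induction N with
  | zero => simp
  | succ N ih =>
    have shift := setLIntegral_Ioc_comp_sub (fun u => f (u + N)) N 1
    simp only [sub_add_cancel] at shift
    rw [Finset.sum_range_succ, ← ih, Nat.cast_succ,
      ← Ioc_union_Ioc_eq_Ioc (Nat.cast_nonneg N) (le_add_of_nonneg_right zero_le_one),
      lintegral_union measurableSet_Ioc (Ioc_disjoint_Ioc_of_le le_rfl), shift]

variable {Ω Ω' κ : Type*} [MeasurableSpace Ω] [MeasurableSpace Ω'] [MeasurableSpace κ]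
  [Countable κ] [MeasurableSingletonClass κ] {ν : Measure Ω'} [IsFiniteMeasure ν]
  {z : κ → Ω → ℝ} {Y : ℝ → Ω' → κ}

theorem measure_additiveFunctional_le_le (hz : ∀ y, Measurable (z y)) (hz0 : ∀ y ζ, 0 ≤ z y ζ)
    (hY : Measurable fun p : ℝ × Ω' => Y p.1 p.2) (ζ : Ω) {N : ℕ} {a t : ℝ} (ha : 0 < a)
    (ht : N ≤ t) :
    ν {ω | additiveFunctional (fun y => ENNReal.ofReal (z y ζ)) Y t ω ≤ ENNReal.ofReal a}
      ≤ ENNReal.ofReal (Real.exp 1)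
        * ∫⁻ u in Ioc (0 : ℝ) 1, ∫⁻ ω, laplaceWeight z (skeleton Y u ω) N a ζ ∂ν := by
  have meas : Measurable fun p : ℝ × Ω' => laplaceWeight z (skeleton Y p.1 p.2) N a ζ :=
    measurable_laplaceWeight_skeleton hz hY N a measurable_fst measurable_snd measurable_const
  have meas_inner : Measurable
      fun ω => ∫⁻ u in Ioc (0 : ℝ) 1, laplaceWeight z (skeleton Y u ω) N a ζ :=
    Measurable.lintegral_prod_left' meas
  have : IsProbabilityMeasure (volume.restrict (Ioc (0 : ℝ) 1)) := ⟨by simp⟩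
  rw [lintegral_lintegral_swap meas.aemeasurable, ← lintegral_const_mul _ meas_inner]
  refine le_trans (measure_mono fun ω hω => ?_)
    ((one_mul _).symm.le.trans (mul_meas_ge_le_lintegral (meas_inner.const_mul _) 1))
  have meas_path : Measurable fun u => Y u ω := hY.comp measurable_prodMk_right
  have meas_step (k : ℕ) : Measurable fun u => z (skeleton Y u ω k) ζ :=
    (measurable_of_countable fun y => z y ζ).comp (meas_path.comp (measurable_id.add_const (k : ℝ)))
  refine one_le_lintegral_exp_neg_div (Finset.measurable_fun_sum _ fun k _ => meas_step k)
    (fun u => Finset.sum_nonneg fun _ _ => hz0 _ _) ha ?_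
  simp_rw [ENNReal.ofReal_sum_of_nonneg fun _ _ => hz0 _ _]
  calc _ = ∫⁻ u in Ioc (0 : ℝ) N, ENNReal.ofReal (z (Y u ω) ζ) :=
        (setLIntegral_Ioc_natCast
          ((measurable_of_countable fun y => ENNReal.ofReal (z y ζ)).comp meas_path) N).symm
    _ ≤ _ := (lintegral_mono_set (Ioc_subset_Ioc_right ht)).trans hω

end Markov

section GreenSum

theorem sum_range_inv_sqrt_succ_le (n : ℕ) :
    ∑ i ∈ Finset.range n, (√((i + 1 : ℕ) : ℝ))⁻¹ ≤ 2 * √n := by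
  induction n with
  | zero => simp
  | succ n ih =>
    have pos : 0 < √((n + 1 : ℕ) : ℝ) := Real.sqrt_pos.2 (by positivity)
    have sq_succ : √((n + 1 : ℕ) : ℝ) ^ 2 = n + 1 := by
      rw [Real.sq_sqrt (Nat.cast_nonneg _), Nat.cast_succ]
    have sq : √(n : ℝ) ^ 2 = n := Real.sq_sqrt n.cast_nonneg
    have step : (√((n + 1 : ℕ) : ℝ))⁻¹ ≤ 2 * (√((n + 1 : ℕ) : ℝ) - √n) := by
      rw [inv_eq_one_div, div_le_iff₀ pos]
      nlinarith [sq_nonneg (√((n + 1 : ℕ) : ℝ) - √n)]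
    rw [Finset.sum_range_succ]
    linarith

theorem sum_range_lineKernel_pow_le (d n : ℕ) :
    ∑ j ∈ Finset.range n, lineKernel j 0 ^ d
      ≤ 1 + ∑ i ∈ Finset.range n, (√((i + 1 : ℕ) : ℝ))⁻¹ ^ d := by
  have nonneg (j : ℕ) : 0 ≤ lineKernel j 0 := lineKernel_nonneg j.cast_nonneg 0
  calc ∑ j ∈ Finset.range n, lineKernel j 0 ^ d
      ≤ ∑ j ∈ Finset.range (n + 1), lineKernel j 0 ^ d := by
        rw [Finset.sum_range_succ]
        exact le_add_of_nonneg_right (pow_nonneg (nonneg n) d)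
    _ = 1 + ∑ i ∈ Finset.range n, lineKernel (i + 1 : ℕ) 0 ^ d := by
        rw [Finset.sum_range_succ', Nat.cast_zero, lineKernel_zero_zero, one_pow, add_comm]
    _ ≤ _ := by
        gcongr with i
        · exact nonneg _
        · exact lineKernel_zero_le (by positivity)

theorem exists_sum_range_lineKernel_pow_le {d : ℕ} (hd : 1 ≤ d) {η : ℝ} (hη : 0 < η) :
    ∃ C : ℝ, 0 < C ∧ ∀ n : ℕ, 1 ≤ n →
      ∑ j ∈ Finset.range n, lineKernel j 0 ^ d ≤ C * (n : ℝ) ^ (localTimeExponent d + η) := by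
  refine ⟨3 + 1 / η, by positivity, fun n hn => (sum_range_lineKernel_pow_le d n).trans ?_⟩
  have hn1 : (1 : ℝ) ≤ n := by exact_mod_cast hn
  have inv_pos : 0 < 1 / η := by positivity
  rcases hd.eq_or_lt with rfl | hd
  · have sqrt_le : √n ≤ (n : ℝ) ^ (1 / 2 + η) := by
      rw [Real.sqrt_eq_rpow]
      exact Real.rpow_le_rpow_of_exponent_le hn1 (by linarith)
    have one_le : 1 ≤ √n := Real.one_le_sqrt.2 hn1
    simp only [pow_one, localTimeExponent, if_true]
    nlinarith [sum_range_inv_sqrt_succ_le n]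
  · have term (i : ℕ) : (√((i + 1 : ℕ) : ℝ))⁻¹ ^ d ≤ ((i + 1 : ℕ) : ℝ)⁻¹ := by
      calc (√((i + 1 : ℕ) : ℝ))⁻¹ ^ d ≤ (√((i + 1 : ℕ) : ℝ))⁻¹ ^ 2 :=
            pow_le_pow_of_le_one (by positivity)
              (inv_le_one_of_one_le₀ (Real.one_le_sqrt.2 (by simp))) hd
        _ = _ := by rw [inv_pow, Real.sq_sqrt (by positivity)]
    have harmonic_le : ∑ i ∈ Finset.range n, ((i + 1 : ℕ) : ℝ)⁻¹ ≤ 1 + Real.log n := by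
      simpa [harmonic] using harmonic_le_one_add_log n
    have log_le := Real.log_le_rpow_div n.cast_nonneg hη
    have one_le : 1 ≤ (n : ℝ) ^ η := Real.one_le_rpow hn1 hη.le
    rw [localTimeExponent, if_neg (by omega), zero_add]
    rw [div_eq_mul_one_div] at log_le
    nlinarith [Finset.sum_le_sum fun i (_ : i ∈ Finset.range n) => term i]

end GreenSum

section SlowClock

theorem eventually_exp_neg_half_rpow_le {δ : ℝ} (hδ : 0 < δ) (K : ℝ) :
    ∀ᶠ x : ℝ in atTop, Real.exp (-(1 / 2 * x ^ δ)) ≤ x ^ (-K) := by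
  have decay := ((isLittleO_exp_neg_mul_rpow_atTop one_half_pos (-K / δ)).comp_tendsto
    (tendsto_rpow_atTop hδ)).bound one_pos
  filter_upwards [decay, eventually_gt_atTop 0] with x hx hx0
  simp only [Function.comp, one_mul, Real.norm_eq_abs, Real.abs_exp] at hx
  rwa [abs_of_nonneg (by positivity), ← Real.rpow_mul hx0.le, mul_div_cancel₀ _ hδ.ne',
    neg_mul] at hx

theorem exists_margin_of_lt_clockExponent {d : ℕ} {α σ : ℝ} (hα : 0 < α)
    (hκσ : localTimeExponent d < σ) (hσ : σ < clockExponent d α) :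
    ∃ η : ℝ, 0 < η ∧ localTimeExponent d + 2 * η < σ ∧
      0 < 1 - (localTimeExponent d + 2 * η)
        - (α + η) * (σ - (localTimeExponent d + 2 * η)) := by
  rw [clockExponent, ← sub_lt_iff_lt_add, lt_div_iff₀ hα] at hσ
  have near_zero {f : ℝ → ℝ} (hf : Continuous f) : Tendsto f (nhdsWithin 0 (Ioi 0)) (nhds (f 0)) :=
    hf.continuousAt.tendsto.mono_left nhdsWithin_le_nhds
  have room := (near_zero (f := fun η => localTimeExponent d + 2 * η)
    (by fun_prop)).eventually_lt_const (u := σ) (by simpa using hκσ)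
  have gain := (near_zero (f := fun η => 1 - (localTimeExponent d + 2 * η)
    - (α + η) * (σ - (localTimeExponent d + 2 * η))) (by fun_prop)).eventually_const_lt
    (u := 0) (by norm_num; linarith)
  exact (eventually_mem_nhdsWithin.and (room.and gain)).exists

variable {Ω Ωw : Type*} [MeasurableSpace Ω] [MeasurableSpace Ωw] {μ : Measure Ω} {d : ℕ}
  {α σ : ℝ} {z : (Fin d → ℤ) → Ω → ℝ} {ν : Measure Ωw} {Y : ℝ → Ωw → Fin d → ℤ}

theorem IsLatticeWalk.exists_measure_exists_rpow_lt_visitCount_le (hY : IsLatticeWalk d ν Y)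
    (hd : 1 ≤ d) {η : ℝ} (hη : 0 < η) (K : ℝ) :
    ∃ C : ℝ, 0 ≤ C ∧ ∀ n : ℕ, 1 ≤ n → ∀ u : ℝ, 0 ≤ u →
      ν {ω | ∃ y, (n : ℝ) ^ (localTimeExponent d + 2 * η) < visitCount (skeleton Y u ω) y n}
        ≤ ENNReal.ofReal (C * (n : ℝ) ^ (-K)) := by
  obtain ⟨C, hC, green⟩ := exists_sum_range_lineKernel_pow_le hd hη
  obtain ⟨p, hp⟩ := exists_nat_ge ((K + 1) / η)
  rw [div_le_iff₀ hη] at hp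
  have hκ := localTimeExponent_nonneg d
  generalize localTimeExponent d = κ at *
  refine ⟨(p + 1).factorial * C ^ p, by positivity, fun n hn u hu => ?_⟩
  have hn0 : (0 : ℝ) < n := by exact_mod_cast hn
  have hn1 : (1 : ℝ) ≤ n := by exact_mod_cast hn
  refine (hY.measure_exists_lt_visitCount_le hu p n (by positivity)).trans ?_
  rw [← ENNReal.ofReal_sum_of_nonneg fun j _ => pow_nonneg (lineKernel_nonneg j.cast_nonneg _) _]
  grw [green n hn]
  rw [← ENNReal.ofReal_natCast n, ← ENNReal.ofReal_pow (by positivity),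
    ← ENNReal.ofReal_mul (by positivity), ← ENNReal.ofReal_mul (by positivity)]
  refine ENNReal.ofReal_le_ofReal ?_
  calc _ = (p + 1).factorial * C ^ p
        * ((n : ℝ) ^ (-((κ + 2 * η) * (p + 1))) * (n : ℝ) ^ ((κ + η) * p) * (n : ℝ) ^ (1 : ℝ)) := by
        rw [mul_pow, ← Real.rpow_mul_natCast hn0.le, ← Real.rpow_mul_natCast hn0.le,
          Real.rpow_neg hn0.le, Real.rpow_one]
        push_cast
        ring
    _ = (p + 1).factorial * C ^ p
        * (n : ℝ) ^ (-((κ + 2 * η) * (p + 1)) + (κ + η) * p + 1) := by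
        rw [← Real.rpow_add hn0, ← Real.rpow_add hn0]
    _ ≤ _ := by
        gcongr
        nlinarith

theorem IsScenery.eventually_exp_neg_tail_le (hz : IsScenery d α μ z) (hα : 0 < α) {γ κ : ℝ}
    (hγ : α < γ) (hκ : κ < σ) (hpos : 0 < 1 - κ - γ * (σ - κ)) (K : ℝ) :
    ∀ᶠ x : ℝ in atTop,
      Real.exp (-(x / (2 * x ^ κ) * (μ {ζ | x ^ σ / x ^ κ < z 0 ζ}).toReal)) ≤ x ^ (-K) := by
  filter_upwards [(tendsto_rpow_atTop (sub_pos.2 hκ)).eventually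
    (hz.eventually_rpow_neg_le_tail hα hγ), eventually_exp_neg_half_rpow_le hpos K,
    eventually_gt_atTop 0] with x tail decay hx
  refine le_trans (Real.exp_le_exp.2 (neg_le_neg ?_)) decay
  rw [← Real.rpow_sub hx]
  calc 1 / 2 * x ^ (1 - κ - γ * (σ - κ)) = x / (2 * x ^ κ) * (x ^ (σ - κ)) ^ (-γ) := by
        rw [← Real.rpow_mul hx.le, mul_neg, Real.rpow_neg hx.le, Real.rpow_sub hx,
          Real.rpow_sub hx, Real.rpow_one, mul_comm γ]
        ring
    _ ≤ _ := by gcongr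

theorem IsScenery.exists_eventually_lintegral_laplaceWeight_le (hz : IsScenery d α μ z)
    (hY : IsLatticeWalk d ν Y) (hα : 0 < α) (hd : 1 ≤ d) (hκσ : localTimeExponent d < σ)
    (hσ : σ < clockExponent d α) (K : ℝ) :
    ∃ C : ℝ, ∀ᶠ n : ℕ in atTop, ∀ u : ℝ, 0 ≤ u →
      ∫⁻ ζ, ∫⁻ ω, laplaceWeight z (skeleton Y u ω) n ((n : ℝ) ^ σ) ζ ∂ν ∂μ
        ≤ ENNReal.ofReal (C * (n : ℝ) ^ (-K)) := by
  have := hY.isProbabilityMeasure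
  obtain ⟨η, hη, room, gain⟩ := exists_margin_of_lt_clockExponent hα hκσ hσ
  obtain ⟨C, hC, visits⟩ := hY.exists_measure_exists_rpow_lt_visitCount_le hd hη K
  refine ⟨1 + C, ?_⟩
  filter_upwards [tendsto_natCast_atTop_atTop.eventually (hz.eventually_exp_neg_tail_le hα
    (lt_add_of_pos_right α hη) room gain K), eventually_ge_atTop 1] with n tail hn u hu
  have hn0 : (0 : ℝ) < n := by exact_mod_cast hn
  refine (hz.lintegral_lintegral_laplaceWeight_le hY.measurable u n (by positivity)
    (Real.rpow_pos_of_pos hn0 (localTimeExponent d + 2 * η))).trans ?_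
  rw [add_mul, one_mul, ENNReal.ofReal_add (by positivity) (by positivity)]
  exact add_le_add (ENNReal.ofReal_le_ofReal tail) (visits n hn u hu)

theorem IsScenery.ae_eventually_measure_additiveFunctional_le_le (hz : IsScenery d α μ z)
    (hY : IsLatticeWalk d ν Y) (hα : 0 < α) (hd : 1 ≤ d) (hκσ : localTimeExponent d < σ)
    (hσ : σ < clockExponent d α) (K : ℝ) :
    ∀ᵐ ζ ∂μ, ∀ᶠ k : ℕ in atTop, ∀ t : ℝ, (2 : ℝ) ^ k ≤ t →
      ν {ω | additiveFunctional (fun y => ENNReal.ofReal (z y ζ)) Y t ω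
          ≤ ENNReal.ofReal (((2 : ℝ) ^ k) ^ σ)}
        ≤ ENNReal.ofReal (Real.exp 1 * ((2 : ℝ) ^ k) ^ (-K)) := by
  have := hz.prob
  have := hY.isProbabilityMeasure
  obtain ⟨C, annealed⟩ :=
    hz.exists_eventually_lintegral_laplaceWeight_le hY hα hd hκσ hσ (K + 1)
  have annealed_two_pow :=
    (tendsto_pow_atTop_atTop_of_one_lt (one_lt_two (α := ℕ))).eventually annealed
  simp only [Nat.cast_pow, Nat.cast_ofNat] at annealed_two_pow
  let D (k : ℕ) (ζ : Ω) (u : ℝ) : ℝ≥0∞ :=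
    ∫⁻ ω, laplaceWeight z (skeleton Y u ω) (2 ^ k) (((2 : ℝ) ^ k) ^ σ) ζ ∂ν
  have meas (k : ℕ) : Measurable fun p : Ω × ℝ => D k p.1 p.2 :=
    Measurable.lintegral_prod_right' (measurable_laplaceWeight_skeleton hz.meas hY.measurable _ _
      (measurable_snd.comp measurable_fst) measurable_snd (measurable_fst.comp measurable_fst))
  have mean : ∀ᶠ k : ℕ in atTop, ∫⁻ ζ, (∫⁻ u in Ioc (0 : ℝ) 1, D k ζ u) ∂μ
      ≤ ENNReal.ofReal C * ENNReal.ofReal (((2 : ℝ) ^ k) ^ (-(K + 1))) := by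
    filter_upwards [annealed_two_pow] with k hk
    rw [lintegral_lintegral_swap (meas k).aemeasurable, ← ENNReal.ofReal_mul' (by positivity)]
    exact (setLIntegral_mono' measurableSet_Ioc fun u hu => hk u hu.1.le).trans_eq (by simp)
  filter_upwards [ae_eventually_le_two_pow_rpow (fun k => (meas k).lintegral_prod_right')
    ENNReal.ofReal_ne_top (show -(K + 1) < -K by linarith) mean] with ζ hζ
  filter_upwards [hζ] with k hk t ht
  rw [ENNReal.ofReal_mul (Real.exp_pos 1).le]
  grw [← hk]
  exact measure_additiveFunctional_le_le hz.meas hz.nonneg hY.measurable ζ (by positivity)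
    (by simpa using ht)

end SlowClock

/-! ### The return exponent -/

theorem lineKernel_zero_le_rpow {t : ℝ} (ht : 0 < t) : lineKernel t 0 ≤ t ^ (-(1 / 2) : ℝ) := by
  rw [Real.rpow_neg ht.le, ← Real.sqrt_eq_rpow]
  exact lineKernel_zero_le ht

theorem rpow_le_lineKernel_zero {t : ℝ} (ht : 1 ≤ t) :
    10⁻¹ * t ^ (-(1 / 2) : ℝ) ≤ lineKernel t 0 := by
  rw [Real.rpow_neg (by linarith), ← Real.sqrt_eq_rpow, ← mul_inv]
  exact le_lineKernel_zero ht

theorem rpow_neg_le_two_rpow_mul {x t b : ℝ} (ht : 0 < t) (hx : t / 2 ≤ x) (hb : 0 ≤ b) :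
    x ^ (-b) ≤ 2 ^ b * t ^ (-b) := by
  calc x ^ (-b) ≤ (t / 2) ^ (-b) :=
        Real.rpow_le_rpow_of_nonpos (by positivity) hx (by linarith)
    _ = 2 ^ b * t ^ (-b) := by
        rw [Real.div_rpow ht.le zero_le_two, Real.rpow_neg zero_le_two, div_inv_eq_mul, mul_comm]

theorem lineKernel_rpow_mul_le {x t σ : ℝ} (d : ℕ) (ht : 0 < t) (hx : t / 2 ≤ x) (hσ : 0 ≤ σ) :
    lineKernel (x ^ σ) 0 * lineKernel t 0 ^ d ≤ 2 ^ (σ / 2) * t ^ (-(σ / 2 + d / 2)) := by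
  have hx0 : 0 < x := by linarith
  calc lineKernel (x ^ σ) 0 * lineKernel t 0 ^ d
      ≤ (x ^ σ) ^ (-(1 / 2) : ℝ) * (t ^ (-(1 / 2) : ℝ)) ^ d := by
        have nonneg := lineKernel_nonneg ht.le 0
        gcongr
        · exact lineKernel_zero_le_rpow (by positivity)
        · exact lineKernel_zero_le_rpow ht
    _ = x ^ (-(σ / 2)) * t ^ (-(d / 2 : ℝ)) := by
        rw [← Real.rpow_mul hx0.le, ← Real.rpow_natCast, ← Real.rpow_mul ht.le]
        congr 2 <;> ring
    _ ≤ 2 ^ (σ / 2) * t ^ (-(σ / 2)) * t ^ (-(d / 2 : ℝ)) := by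
        gcongr
        exact rpow_neg_le_two_rpow_mul ht hx (by positivity)
    _ = 2 ^ (σ / 2) * t ^ (-(σ / 2 + d / 2)) := by
        rw [mul_assoc, ← Real.rpow_add ht, ← neg_add]

theorem le_lineKernel_rpow_mul {t σ : ℝ} (d : ℕ) (ht : 1 ≤ t) (hσ : 0 ≤ σ) :
    10⁻¹ * (10⁻¹ ^ d / 2) * t ^ (-(σ / 2 + d / 2))
      ≤ lineKernel (t ^ σ) 0 * (lineKernel t 0 ^ d / 2) := by
  have ht0 : 0 < t := by linarith
  calc 10⁻¹ * (10⁻¹ ^ d / 2) * t ^ (-(σ / 2 + d / 2))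
      = 10⁻¹ * (t ^ σ) ^ (-(1 / 2) : ℝ) * ((10⁻¹ * t ^ (-(1 / 2) : ℝ)) ^ d / 2) := by
        rw [mul_pow, ← Real.rpow_mul ht0.le, ← Real.rpow_natCast (t ^ _), ← Real.rpow_mul ht0.le,
          show -(σ / 2 + (d : ℝ) / 2) = σ * (-(1 / 2)) + (-(1 / 2)) * d by ring,
          Real.rpow_add ht0]
        ring
    _ ≤ lineKernel (t ^ σ) 0 * (lineKernel t 0 ^ d / 2) := by
        gcongr
        · exact lineKernel_nonneg (by positivity) 0
        · exact rpow_le_lineKernel_zero (Real.one_le_rpow ht hσ)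
        · exact rpow_le_lineKernel_zero ht

theorem tendsto_log_div_log {f : ℝ → ℝ} {e : ℝ}
    (upper : ∀ m : ℕ, ∃ C > 0, ∃ b ≥ e - 1 / (m + 1), ∀ᶠ t in atTop, f t ≤ C * t ^ (-b))
    (lower : ∀ m : ℕ, ∃ c > 0, ∃ b ≤ e + 1 / (m + 1), ∀ᶠ t in atTop, c * t ^ (-b) ≤ f t) :
    Tendsto (fun t => Real.log (f t) / Real.log t) atTop (nhds (-e)) := by
  rw [Metric.tendsto_nhds]
  intro ε hε
  obtain ⟨m, hm⟩ := exists_nat_one_div_lt (half_pos hε)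
  obtain ⟨C, hC, b, hb, upper⟩ := upper m
  obtain ⟨c, hc, b', hb', lower⟩ := lower m
  have log_large := Real.tendsto_log_atTop.eventually_gt_atTop
  filter_upwards [upper, lower, eventually_gt_atTop 0, log_large (|Real.log C| / (ε / 2)),
    log_large (|Real.log c| / (ε / 2)), log_large 0] with t le_f f_le ht absC absc hL
  have pos : 0 < c * t ^ (-b') := by positivity
  have log_le := Real.log_le_log (pos.trans_le f_le) le_f
  have le_log := Real.log_le_log pos f_le
  rw [Real.log_mul hC.ne' (by positivity), Real.log_rpow ht] at log_le
  rw [Real.log_mul hc.ne' (by positivity), Real.log_rpow ht] at le_log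
  rw [div_lt_iff₀ (half_pos hε)] at absC absc
  generalize Real.log t = L at *
  have eb : (e - ε / 2) * L ≤ b * L := by gcongr; linarith
  have be : b' * L ≤ (e + ε / 2) * L := by gcongr; linarith
  rw [Real.dist_eq, abs_lt, sub_neg_eq_add]
  constructor
  · rw [← sub_lt_iff_lt_add, lt_div_iff₀ hL]
    linarith [neg_abs_le (Real.log c)]
  · rw [← lt_sub_iff_add_lt, div_lt_iff₀ hL]
    linarith [le_abs_self (Real.log C)]

section ReturnExponent

variable {Ω Ωw : Type*} [MeasurableSpace Ω] [MeasurableSpace Ωw] {μ : Measure Ω} {d : ℕ}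
  {α σ : ℝ} {z : (Fin d → ℤ) → Ω → ℝ} {P : (Fin (d + 1) → ℤ) → Measure Ωw}
  {S : ℝ → Ωw → Fin (d + 1) → ℤ}

theorem IsCTSRW.exists_ae_eventually_measure_layeredWalk_le (hS : IsCTSRW (d + 1) P S)
    (hz : IsScenery d α μ z) (hα : 0 < α) (hα1 : α ≤ 1) (hd : 1 ≤ d)
    (hκσ : localTimeExponent d < σ) (hσ : σ < clockExponent d α) :
    ∃ C > 0, ∀ᵐ ζ ∂μ, ∀ᶠ t : ℝ in atTop,
      (P 0 {ω | layeredWalk d z S t ζ ω = 0}).toReal ≤ C * t ^ (-(σ / 2 + d / 2)) := by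
  have hσ0 := (localTimeExponent_nonneg d).trans hκσ.le
  have hY := hS.isLatticeWalk.tailWalk
  refine ⟨2 ^ (σ / 2) + Real.exp 1 * 2 ^ (σ / 2 + d / 2 : ℝ), by positivity, ?_⟩
  filter_upwards [hz.ae_eventually_measure_additiveFunctional_le_le hY hα hd hκσ hσ (σ / 2 + d / 2),
    hY.ae_eventually_measure_additiveFunctional_eq_top hz hα hα1] with ζ slow infinite
  filter_upwards [eventually_exists_two_pow_le slow, infinite, eventually_gt_atTop 0]
    with t ⟨k, slow, hkt, htk⟩ infinite ht
  have htk : t / 2 ≤ 2 ^ k := by rw [pow_succ] at htk; linarith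
  rw [hS.measure_layeredWalk_eq_zero hz.nonneg ζ ht.le]
  refine ENNReal.toReal_le_of_le_ofReal (by positivity) ?_
  calc _ ≤ ENNReal.ofReal (lineKernel ((2 ^ k) ^ σ) 0 * lineKernel t 0 ^ d)
        + ENNReal.ofReal (Real.exp 1 * (2 ^ k) ^ (-(σ / 2 + d / 2))) :=
        (hY.setLIntegral_lineKernel_le ht.le (by positivity) infinite).trans
          (add_le_add_right (slow t hkt) _)
    _ ≤ ENNReal.ofReal (2 ^ (σ / 2) * t ^ (-(σ / 2 + d / 2)))
        + ENNReal.ofReal (Real.exp 1 * (2 ^ (σ / 2 + d / 2 : ℝ) * t ^ (-(σ / 2 + d / 2)))) := by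
        gcongr ENNReal.ofReal ?_ + ENNReal.ofReal (_ * ?_)
        · exact lineKernel_rpow_mul_le d ht htk hσ0
        · exact rpow_neg_le_two_rpow_mul ht htk (by positivity)
    _ = _ := by
        rw [← ENNReal.ofReal_add (by positivity) (by positivity), add_mul, mul_assoc (Real.exp 1)]

theorem IsCTSRW.exists_ae_eventually_rpow_le_measure_layeredWalk (hS : IsCTSRW (d + 1) P S)
    (hz : IsScenery d α μ z) (hα : 0 < α) (hα1 : α ≤ 1) (hσ : clockExponent d α < σ) :
    ∃ c > 0, ∀ᵐ ζ ∂μ, ∀ᶠ t : ℝ in atTop,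
      c * t ^ (-(σ / 2 + d / 2)) ≤ (P 0 {ω | layeredWalk d z S t ζ ω = 0}).toReal := by
  have := hS.prob 0
  have hσ0 := (localTimeExponent_nonneg d).trans
    ((localTimeExponent_lt_clockExponent hα).trans hσ).le
  refine ⟨10⁻¹ * (10⁻¹ ^ d / 2), by positivity, ?_⟩
  filter_upwards [hS.ae_eventually_le_measure_layeredWalk hz hα hα1 hσ] with ζ hζ
  filter_upwards [hζ, eventually_ge_atTop 1] with t h ht
  exact (le_lineKernel_rpow_mul d ht hσ0).trans
    ((ENNReal.ofReal_le_iff_le_toReal (measure_ne_top _ _)).1 h)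

theorem IsCTSRW.ae_tendsto_log_measure_layeredWalk_div_log (hS : IsCTSRW (d + 1) P S)
    (hz : IsScenery d α μ z) (hα : 0 < α) (hα1 : α ≤ 1) (hd : 1 ≤ d) :
    ∀ᵐ ζ ∂μ, Tendsto
      (fun t : ℝ => Real.log (P 0 {ω | layeredWalk d z S t ζ ω = 0}).toReal / Real.log t)
      atTop (nhds (-(clockExponent d α / 2 + d / 2))) := by
  set ρ := clockExponent d α
  have upper (m : ℕ) : ∃ C > 0, ∃ b ≥ ρ / 2 + d / 2 - 1 / (m + 1), ∀ᵐ ζ ∂μ, ∀ᶠ t : ℝ in atTop,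
      (P 0 {ω | layeredWalk d z S t ζ ω = 0}).toReal ≤ C * t ^ (-b) := by
    have hm : (0 : ℝ) < 1 / (m + 1) := by positivity
    obtain ⟨σ, hσ, hσρ⟩ := exists_between
      (max_lt (localTimeExponent_lt_clockExponent hα) (sub_lt_self ρ hm))
    obtain ⟨hκσ, hσ⟩ := max_lt_iff.1 hσ
    obtain ⟨C, hC, h⟩ :=
      hS.exists_ae_eventually_measure_layeredWalk_le hz hα hα1 hd hκσ hσρ
    exact ⟨C, hC, _, by linarith, h⟩
  have lower (m : ℕ) : ∃ c > 0, ∃ b ≤ ρ / 2 + d / 2 + 1 / (m + 1), ∀ᵐ ζ ∂μ, ∀ᶠ t : ℝ in atTop,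
      c * t ^ (-b) ≤ (P 0 {ω | layeredWalk d z S t ζ ω = 0}).toReal := by
    have hm : (0 : ℝ) < 1 / (m + 1) := by positivity
    obtain ⟨c, hc, h⟩ := hS.exists_ae_eventually_rpow_le_measure_layeredWalk hz hα hα1
      (lt_add_of_pos_right ρ hm)
    exact ⟨c, hc, _, by linarith, h⟩
  choose C hC b hb upper using upper
  choose c hc b' hb' lower using lower
  filter_upwards [ae_all_iff.2 upper, ae_all_iff.2 lower] with ζ hu hl
  exact tendsto_log_div_log (fun m => ⟨C m, hC m, b m, hb m, hu m⟩)
    fun m => ⟨c m, hc m, b' m, hb' m, hl m⟩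

end ReturnExponent

theorem clockExponent_one_add_div_two {α : ℝ} (hα : 0 < α) :
    clockExponent 1 α / 2 + (1 : ℕ) / 2 = (3 * α + 1) / (4 * α) := by
  rw [clockExponent, localTimeExponent, if_pos rfl]
  push_cast
  field_simp
  ring

theorem clockExponent_of_two_le {d : ℕ} (hd : 2 ≤ d) (α : ℝ) : clockExponent d α = 1 / α := by
  rw [clockExponent, localTimeExponent, if_neg (by omega), sub_zero, add_zero]

theorem stmt5_general (d : ℕ) (α : ℝ) (hα : 0 < α) (hα1 : α ≤ 1)
    {Ωz Ωw : Type*} [MeasurableSpace Ωz] [MeasurableSpace Ωw]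
    (μ : Measure Ωz) (z : (Fin d → ℤ) → Ωz → ℝ) (hz : IsScenery d α μ z)
    (P : (Fin (d + 1) → ℤ) → Measure Ωw) (S : ℝ → Ωw → (Fin (d + 1) → ℤ))
    (hS : IsCTSRW (d + 1) P S) :
    ∀ᵐ ζ ∂ μ,
      (d = 1 →
        Tendsto (fun t : ℝ =>
            Real.log ((P 0) {ω | layeredWalk d z S t ζ ω = 0}).toReal / Real.log t)
          atTop (nhds (-((3 * α + 1) / (4 * α))))) ∧
      (2 ≤ d →
        Tendsto (fun t : ℝ =>
            Real.log ((P 0) {ω | layeredWalk d z S t ζ ω = 0}).toReal / Real.log t)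
          atTop (nhds (-(1 / (2 * α)) - d / 2))) := by
  refine (ae_all_iff.2 fun hd => ?_).and (ae_all_iff.2 fun hd => ?_)
  · subst hd
    rw [← clockExponent_one_add_div_two hα]
    exact hS.ae_tendsto_log_measure_layeredWalk_div_log hz hα hα1 le_rfl
  · rw [show -(1 / (2 * α)) - (d : ℝ) / 2 = -(1 / α / 2 + d / 2) by ring,
      ← clockExponent_of_two_le hd]
    exact hS.ae_tendsto_log_measure_layeredWalk_div_log hz hα hα1 (one_le_two.trans hd)

/-- Theorem (on-diagonal heat kernel, infinite-mean case): if `𝔼[z(0)] = ∞` then ℙ-a.s.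
`P₀^ω(X_t = 0) = t^{-(3α+1)/(4α)+o(1)}` for `d = 1` and
`P₀^ω(X_t = 0) = t^{-1/(2α)-d/2+o(1)}` for `d ≥ 2`. -/
theorem stmt5 (d : ℕ) (hd : 1 ≤ d) (α : ℝ) (hα : 0 < α)
    {Ωz Ωw : Type*} [MeasurableSpace Ωz] [MeasurableSpace Ωw]
    (μ : Measure Ωz) (z : (Fin d → ℤ) → Ωz → ℝ) (hz : IsScenery d α μ z)
    (hinf : ¬ Integrable (z 0) μ)
    (P : (Fin (d + 1) → ℤ) → Measure Ωw) (S : ℝ → Ωw → (Fin (d + 1) → ℤ))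
    (hS : IsCTSRW (d + 1) P S) :
    ∀ᵐ ζ ∂ μ,
      (d = 1 →
        Tendsto (fun t : ℝ =>
            Real.log ((P 0) {ω | layeredWalk d z S t ζ ω = 0}).toReal / Real.log t)
          atTop (nhds (-((3 * α + 1) / (4 * α))))) ∧
      (2 ≤ d →
        Tendsto (fun t : ℝ =>
            Real.log ((P 0) {ω | layeredWalk d z S t ζ ω = 0}).toReal / Real.log t)
          atTop (nhds (-(1 / (2 * α)) - d / 2))) := by
  exact stmt5_general d α hα (hz.le_one_of_not_integrable hα hinf) μ z hz P S hS
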